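/- arXiv:2412.14016 — 2 statements merged into one kernel-verified Lean document; each statement's English description precedes it below -/
import Mathlib

section
/- Let p ≥ 1, 1/2 < α ≤ 1 with αp ≥ 1, let {X_{m,n} : m ≥ 1, n ≥ 1} be a double array of identically distributed random variables satisfying Condition (H_{2q}), where q = 1 if 1 ≤ p < 2 and q > (αp−1)/(2α−1) if p ≥ 2. Let L : [0,∞) → [1,∞) be an increasing slowly varying function and let L̃ be a de Bruijn conjugate of L. Then the following are equivalent: (a) for every ε > 0, ∑_{m=1}^∞ ∑_{n=1}^∞ (mn)^{αp−2} P( max_{u≤m, v≤n} |∑_{i=1}^{u} ∑_{j=1}^{v} X_{i,j}| > ε (mn)^{α} L̃((mn)^{α}) ) < ∞; and (b) E X_{1,1} = 0 and E( |X_{1,1}|^p L(|X_{1,1}|)^p log|X_{1,1}| ) < ∞. -/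
/-!
The proof works along dyadic scales. Let `τ r` be the generalised inverse of `y * L y` at
`2 ^ (α r)`. Since `Lt` is a de Bruijn conjugate, the norming constant at `mn` is comparable with
`τ r` whenever `mn` is comparable with `2 ^ r` (`norming_compare`), and the moment condition in (b)
is equivalent to convergence of `∑ (r + 1) 2 ^ (α p r) P(|X| > τ r)` (`tail_summable_of_moment`,
`moment_of_tail_summable`). The factor `r + 1`, which produces the logarithm, counts the pairs
`(A, C)` with `A + C = r`, that is, the dyadic shapes of rectangles of area `2 ^ r`; by condensation
(`summable_dyLevel`) the double series in (a) becomes a series over `r` with the same factor.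

For (b) ⟹ (a) a maximal inequality over `[0, 2 ^ A) × [0, 2 ^ C)` is needed, but Condition (H) only
controls sums of monotone functions of the variables. Positive and negative parts are treated
separately, and a sum over `[0, u) × [0, v)` is chained through dyadic rectangles, a point being
truncated at the level `τ k` attached to its dyadic distance `k` from `(u, v)`. Both the truncations
and their increments from one level to the next are nondecreasing, so the moment bound applies to
each dyadic block; the increments are nonnegative, so sums over staircase regions are bounded by
sums over the full blocks containing them (`chain_bound`). The remaining truncation bias is
`o(τ N)` (`bias_small`), and the union bound over all blocks is summable against the weights
(`sum_summable`).

For (a) ⟹ (b) the moment bound for the indicator of `(t, ∞)` shows that exceedances do not cluster,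
so `P(max |X| > t)` is at least a constant times `min (2 ^ r P(|X| > t)) 1` (`HBound.exceed_abs`).
As a single variable is an alternating sum of four partial sums, (a) gives the tail series and hence
the moment. If the mean were nonzero, the deviation bound already proved would make the partial
sums over dyadic rectangles of order `2 ^ r`, which is at least of order `τ r` because `α ≤ 1`, and
the terms of the condensed series would not tend to zero (`boxSet_ge_half`).
-/

open MeasureTheory ProbabilityTheory Finset Filter
open scoped NNReal ENNReal

noncomputable section

/-- `rlog x` is the natural logarithm of `max x 2`. -/
def rlog (x : ℝ) : ℝ := Real.log (max x 2)

/-- `itlog k x` is the `k`-fold iterate of `rlog` applied to `x`. -/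
def itlog : ℕ → ℝ → ℝ
  | 0, x => x
  | k + 1, x => rlog (itlog k x)

/-- `logNu2 ν x = (log x)(log log x) ⋯ (log ⋯ log x)²`, the product of the first `ν`
iterated logarithms of `x`, with the last (`ν`-fold iterated) factor squared. -/
def logNu2 (ν : ℕ) (x : ℝ) : ℝ := (∏ k ∈ Finset.Icc 1 ν, itlog k x) * itlog ν x

/-- The maximum of the (nonnegative) values `g i j` over `1 ≤ i ≤ M`, `1 ≤ j ≤ N`. -/
def maxNN (M N : ℕ) (g : ℕ → ℕ → ℝ) : ℝ :=
  (((Finset.Icc 1 M ×ˢ Finset.Icc 1 N).sup fun p => Real.toNNReal (g p.1 p.2) : ℝ≥0) : ℝ)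

/-- `maxDS f m n = max_{1 ≤ u ≤ m, 1 ≤ v ≤ n} |∑_{i=1}^{u} ∑_{j=1}^{v} f i j|`. -/
def maxDS (f : ℕ → ℕ → ℝ) (m n : ℕ) : ℝ :=
  maxNN m n fun u v => |∑ i ∈ Finset.Icc 1 u, ∑ j ∈ Finset.Icc 1 v, f i j|

/-- Index set of a doubly-indexed array: pairs of indices that are both at least `1`. -/
abbrev PIdx : Type := {k : ℕ × ℕ // 1 ≤ k.1 ∧ 1 ≤ k.2}

/-- Condition (H_{2q}) with a given constant `C`: for every finite subfamily and every
family of nondecreasing functions (whose relevant expectations are finite),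
`E|∑ (f_λ(X_λ) - E f_λ(X_λ))|^{2q}
   ≤ C (|I| max E|f_λ(X_λ)|^{2q} + |I|^q max (E f_λ(X_λ)²)^q)`. -/
def CondHWith {Ω : Type*} [MeasureSpace Ω] {Λ : Type*} (q C : ℝ) (X : Λ → Ω → ℝ) : Prop :=
  ∀ (I : Finset Λ) (hI : I.Nonempty) (f : Λ → ℝ → ℝ),
    (∀ l ∈ I, Monotone (f l)) →
    (∀ l ∈ I, Integrable fun ω => f l (X l ω)) →
    (∀ l ∈ I, Integrable fun ω => (f l (X l ω)) ^ 2) →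
    (∀ l ∈ I, Integrable fun ω => |f l (X l ω)| ^ (2 * q)) →
    (Integrable fun ω => |∑ l ∈ I, (f l (X l ω) - ∫ ω', f l (X l ω'))| ^ (2 * q)) →
    ∫ ω, |∑ l ∈ I, (f l (X l ω) - ∫ ω', f l (X l ω'))| ^ (2 * q) ≤
      C * ((I.card : ℝ) * I.sup' hI (fun l => ∫ ω, |f l (X l ω)| ^ (2 * q)) +
           (I.card : ℝ) ^ q * I.sup' hI fun l => (∫ ω, (f l (X l ω)) ^ 2) ^ q)

/-- Condition (H_{2q}): there is a finite constant for which `CondHWith` holds. -/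
def CondH {Ω : Type*} [MeasureSpace Ω] {Λ : Type*} (q : ℝ) (X : Λ → Ω → ℝ) : Prop :=
  ∃ C : ℝ, CondHWith q C X

/-- The family `X` is stochastically dominated by the random variable `Y`:
`sup_λ P(|X_λ| > x) ≤ P(|Y| > x)` for every real `x`. -/
def StochDom {Ω : Type*} [MeasureSpace Ω] {Λ : Type*} (X : Λ → Ω → ℝ) (Y : Ω → ℝ) : Prop :=
  ∀ x : ℝ, ∀ l : Λ, volume {ω | x < |X l ω|} ≤ volume {ω | x < |Y ω|}

/-- Uniform integrability: `sup_λ E(|Y_λ| 1(|Y_λ| > a)) → 0` as `a → ∞`. -/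
def UnifInt {Ω : Type*} [MeasureSpace Ω] {Λ : Type*} (Y : Λ → Ω → ℝ) : Prop :=
  (∀ l, Integrable (Y l)) ∧
  ∀ ε : ℝ, 0 < ε → ∃ a : ℝ, ∀ l, ∫ ω, (if a < |Y l ω| then |Y l ω| else 0) ≤ ε

/-- A slowly varying function: positive and measurable on `[0,∞)` with
`L(cx)/L(x) → 1` as `x → ∞` for every `c > 0`. -/
def SlowlyVarying (L : ℝ → ℝ) : Prop :=
  Measurable L ∧ (∀ x : ℝ, 0 ≤ x → 0 < L x) ∧
  ∀ c : ℝ, 0 < c → Tendsto (fun x => L (c * x) / L x) atTop (nhds 1)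

/-- `Lt` is a de Bruijn conjugate of `L`. -/
def DeBruijnConjugate (L Lt : ℝ → ℝ) : Prop :=
  SlowlyVarying Lt ∧
  Tendsto (fun x => L x * Lt (x * L x)) atTop (nhds 1) ∧
  Tendsto (fun x => Lt x * L (x * Lt x)) atTop (nhds 1)

/-- Truncation from above at level `b (2^s)`:
`X_{i,j} 1(X_{i,j} ≤ b_{2^s}) + b_{2^s} 1(X_{i,j} > b_{2^s})`. -/
def truncUp {Ω : Type*} (X : ℕ → ℕ → Ω → ℝ) (b : ℕ → ℝ) (s i j : ℕ) (ω : Ω) : ℝ :=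
  if X i j ω ≤ b (2 ^ s) then X i j ω else b (2 ^ s)

/-- Two-sided truncation at level `b (2^s)`:
`-b_{2^s} 1(X < -b_{2^s}) + X 1(|X| ≤ b_{2^s}) + b_{2^s} 1(X > b_{2^s})`. -/
def truncTwo {Ω : Type*} (X : ℕ → ℕ → Ω → ℝ) (b : ℕ → ℝ) (s i j : ℕ) (ω : Ω) : ℝ :=
  if X i j ω < -b (2 ^ s) then -b (2 ^ s)
  else if b (2 ^ s) < X i j ω then b (2 ^ s) else X i j ω

/-! ### Truncation levels: an asymptotic inverse of `y ↦ y * L y` -/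

/-- Generalised inverse of `G y = y * L y` at `2 ^ (α r)`: the truncation level attached to blocks
of `2 ^ r` summands. -/
def lev (L : ℝ → ℝ) (α : ℝ) (r : ℕ) : ℝ := sSup {y | 0 ≤ y ∧ y * L y ≤ (2 : ℝ) ^ (α * r)}

section levels

variable {L : ℝ → ℝ} {α : ℝ}

theorem lev_bdd (hL1 : ∀ x : ℝ, 0 ≤ x → 1 ≤ L x) (r : ℕ) :
    BddAbove {y | 0 ≤ y ∧ y * L y ≤ (2 : ℝ) ^ (α * r)} := by
  refine ⟨(2 : ℝ) ^ (α * r), ?_⟩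
  rintro y ⟨h0, h1⟩
  nlinarith [hL1 y h0]

theorem le_lev (hL1 : ∀ x : ℝ, 0 ≤ x → 1 ≤ L x) {r : ℕ} {y : ℝ} (h0 : 0 ≤ y)
    (h1 : y * L y ≤ (2 : ℝ) ^ (α * r)) : y ≤ lev L α r :=
  le_csSup (lev_bdd hL1 r) ⟨h0, h1⟩

theorem lt_of_lev_lt (hL1 : ∀ x : ℝ, 0 ≤ x → 1 ≤ L x) {r : ℕ} {y : ℝ} (h0 : 0 ≤ y)
    (h1 : lev L α r < y) : (2 : ℝ) ^ (α * r) < y * L y := by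
  by_contra h
  exact absurd (le_lev hL1 h0 (not_lt.1 h)) (not_le.2 h1)

theorem mulL_mono (hmono : Monotone L) (hL1 : ∀ x : ℝ, 0 ≤ x → 1 ≤ L x) {x y : ℝ} (h0 : 0 ≤ x)
    (h : x ≤ y) : x * L x ≤ y * L y :=
  mul_le_mul h (hmono h) (by linarith [hL1 x h0]) (h0.trans h)

theorem of_lt_lev (hmono : Monotone L) (hL1 : ∀ x : ℝ, 0 ≤ x → 1 ≤ L x) {r : ℕ} {y : ℝ}
    (h0 : 0 ≤ y) (h1 : y < lev L α r) : y * L y ≤ (2 : ℝ) ^ (α * r) := by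
  have hne : {y | 0 ≤ y ∧ y * L y ≤ (2 : ℝ) ^ (α * r)}.Nonempty :=
    ⟨0, le_rfl, by rw [zero_mul]; positivity⟩
  obtain ⟨z, hz, hyz⟩ := exists_lt_of_lt_csSup hne h1
  exact (mulL_mono hmono hL1 h0 hyz.le).trans hz.2

theorem lev_pos (hmono : Monotone L) (hL1 : ∀ x : ℝ, 0 ≤ x → 1 ≤ L x) (hα : 0 < α) (r : ℕ) :
    0 < lev L α r := by
  have h1 := hL1 1 zero_le_one
  have hpos : 0 < 1 / L 1 := by positivity
  refine hpos.trans_le (le_lev hL1 hpos.le ?_)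
  have h2 : 1 / L 1 ≤ 1 := by rw [div_le_one (by linarith)]; exact h1
  calc 1 / L 1 * L (1 / L 1) ≤ 1 / L 1 * L 1 := by gcongr; exact hmono h2
    _ = 1 := by field_simp
    _ ≤ _ := Real.one_le_rpow (by norm_num) (by positivity)

theorem lev_mono (hL1 : ∀ x : ℝ, 0 ≤ x → 1 ≤ L x) (hα : 0 < α) : Monotone (lev L α) := by
  intro r s hrs
  refine csSup_le_csSup (lev_bdd hL1 s) ⟨0, le_rfl, by rw [zero_mul]; positivity⟩ ?_
  rintro y ⟨h0, h1⟩
  refine ⟨h0, h1.trans (Real.rpow_le_rpow_of_exponent_le (by norm_num) ?_)⟩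
  gcongr

theorem lev_succ_le (hmono : Monotone L) (hL1 : ∀ x : ℝ, 0 ≤ x → 1 ≤ L x) (hα : 0 < α) (r j : ℕ) :
    lev L α (r + j) ≤ (2 : ℝ) ^ (α * j) * lev L α r := by
  refine csSup_le ⟨0, le_rfl, by rw [zero_mul]; positivity⟩ ?_
  rintro y ⟨h0, h1⟩
  have h2 : 0 < (2 : ℝ) ^ (α * j) := by positivity
  have h3 : 1 ≤ (2 : ℝ) ^ (α * j) := Real.one_le_rpow (by norm_num) (by positivity)
  have h4 : y / (2 : ℝ) ^ (α * j) ≤ lev L α r := by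
    refine le_lev hL1 (by positivity) ?_
    have h5 : L (y / (2 : ℝ) ^ (α * j)) ≤ L y := hmono (div_le_self h0 h3)
    calc y / (2 : ℝ) ^ (α * j) * L (y / (2 : ℝ) ^ (α * j)) ≤ y / (2 : ℝ) ^ (α * j) * L y := by
          gcongr
      _ = y * L y / (2 : ℝ) ^ (α * j) := by ring
      _ ≤ (2 : ℝ) ^ (α * (r + j : ℕ)) / (2 : ℝ) ^ (α * j) := by gcongr
      _ = _ := by rw [← Real.rpow_sub (by norm_num)]; congr 1; push_cast; ring
  rw [div_le_iff₀ h2] at h4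
  linarith

theorem tendsto_two_rpow (hα : 0 < α) : Tendsto (fun r : ℕ => (2 : ℝ) ^ (α * r)) atTop atTop := by
  have h1 : Tendsto (fun r : ℕ => α * (r : ℝ)) atTop atTop :=
    tendsto_natCast_atTop_atTop.const_mul_atTop hα
  have h2 := Real.tendsto_exp_atTop.comp (h1.const_mul_atTop (Real.log_pos one_lt_two))
  refine h2.congr fun r => ?_
  rw [Real.rpow_def_of_pos two_pos]
  rfl

theorem lev_tendsto (hL1 : ∀ x : ℝ, 0 ≤ x → 1 ≤ L x) (hα : 0 < α) :
    Tendsto (lev L α) atTop atTop := by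
  refine tendsto_atTop.2 fun b => ?_
  have h := tendsto_two_rpow hα
  filter_upwards [h.eventually_ge_atTop (max b 0 * L (max b 0))] with r hr
  exact (le_max_left _ _).trans (le_lev hL1 (le_max_right _ _) hr)

/-- Lower Potter-type bound for the truncation levels: they grow at least like `2 ^ (γ r)` for
every `γ < α`. -/
theorem lev_potter (hSV : SlowlyVarying L) (hmono : Monotone L)
    (hL1 : ∀ x : ℝ, 0 ≤ x → 1 ≤ L x) (hα : 0 < α) {γ : ℝ} (hγ0 : 0 ≤ γ) (hγ : γ < α) :
    ∃ C : ℝ, 0 < C ∧ ∀ i j : ℕ, lev L α i ≤ C * (2 : ℝ) ^ (-(γ * j)) * lev L α (i + j) := by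
  have h1 : ∀ᶠ y in atTop, L ((2 : ℝ) ^ γ * y) / L y ≤ (2 : ℝ) ^ (α - γ) := by
    refine (hSV.2.2 _ (by positivity)).eventually_le_const ?_
    exact Real.one_lt_rpow (by norm_num) (by linarith)
  obtain ⟨Y, hY⟩ := eventually_atTop.1 h1
  obtain ⟨r0, hr0⟩ := eventually_atTop.1 ((lev_tendsto hL1 hα).eventually_gt_atTop (max Y 0))
  have hpos := lev_pos hmono hL1 hα
  have hstep : ∀ r, r0 ≤ r → (2 : ℝ) ^ γ * lev L α r ≤ lev L α (r + 1) := by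
    intro r hr
    have h2 : ∀ y, max Y 0 ≤ y → y < lev L α r → (2 : ℝ) ^ γ * y ≤ lev L α (r + 1) := by
      intro y hy hyl
      have hy0 : 0 ≤ y := (le_max_right _ _).trans hy
      have hLy := hL1 y hy0
      refine le_lev hL1 (by positivity) ?_
      have h3 := hY y ((le_max_left _ _).trans hy)
      rw [div_le_iff₀ (by linarith)] at h3
      have h4 := of_lt_lev hmono hL1 hy0 hyl
      calc (2 : ℝ) ^ γ * y * L ((2 : ℝ) ^ γ * y)
          ≤ (2 : ℝ) ^ γ * y * ((2 : ℝ) ^ (α - γ) * L y) := by gcongr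
        _ = (2 : ℝ) ^ γ * (2 : ℝ) ^ (α - γ) * (y * L y) := by ring
        _ ≤ (2 : ℝ) ^ γ * (2 : ℝ) ^ (α - γ) * (2 : ℝ) ^ (α * r) := by gcongr
        _ = _ := by
          rw [← Real.rpow_add (by norm_num), ← Real.rpow_add (by norm_num)]
          congr 1; push_cast; ring
    have h5 : lev L α r ≤ lev L α (r + 1) / (2 : ℝ) ^ γ := by
      refine le_of_forall_lt fun y hy => ?_
      obtain ⟨z, hz1, hz2⟩ := exists_between (max_lt hy (hr0 r hr))
      have := h2 z ((le_max_right _ _).trans hz1.le) hz2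
      refine ((le_max_left _ _).trans_lt hz1).trans_le ?_
      rw [le_div_iff₀ (by positivity)]
      linarith
    rw [le_div_iff₀ (by positivity)] at h5
    linarith
  have hiter : ∀ r j : ℕ, r0 ≤ r → (2 : ℝ) ^ (γ * j) * lev L α r ≤ lev L α (r + j) := by
    intro r j hr
    induction j with
    | zero => simp
    | succ j ih =>
      have h6 := hstep (r + j) (by omega)
      calc (2 : ℝ) ^ (γ * (j + 1 : ℕ)) * lev L α r
          = (2 : ℝ) ^ γ * ((2 : ℝ) ^ (γ * j) * lev L α r) := by
            rw [← mul_assoc, ← Real.rpow_add (by norm_num)]; congr 2; push_cast; ring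
        _ ≤ (2 : ℝ) ^ γ * lev L α (r + j) := by gcongr
        _ ≤ _ := by rw [← add_assoc]; exact h6
  refine ⟨(2 : ℝ) ^ (γ * r0), by positivity, fun i j => ?_⟩
  rw [← Real.rpow_add (by norm_num)]
  by_cases hj : j ≤ r0
  · have h7 : (1 : ℝ) ≤ (2 : ℝ) ^ (γ * r0 + -(γ * j)) := by
      refine Real.one_le_rpow (by norm_num) ?_
      have : (j : ℝ) ≤ r0 := by exact_mod_cast hj
      nlinarith
    have h8 := lev_mono (α := α) hL1 hα (Nat.le_add_right i j)
    nlinarith [hpos (i + j)]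
  · have h9 := hiter (i + r0) (j - r0) (by omega)
    rw [show i + r0 + (j - r0) = i + j by omega] at h9
    have h10 := lev_mono (α := α) hL1 hα (Nat.le_add_right i r0)
    have h11 : (2 : ℝ) ^ (γ * r0 + -(γ * j)) = ((2 : ℝ) ^ (γ * (j - r0 : ℕ)))⁻¹ := by
      rw [← Real.rpow_neg (by norm_num)]; congr 1
      rw [Nat.cast_sub (by omega)]; ring
    rw [h11, ← div_eq_inv_mul, le_div_iff₀ (by positivity)]
    nlinarith [Real.rpow_pos_of_pos (show (0:ℝ) < 2 by norm_num) (γ * (j - r0 : ℕ))]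

/-- Up to the truncation level `lev L α r`, `y * L y` is at most of order `2 ^ (α r)`. The supremum
defining `lev` need not be attained, whence the passage through `y / 2`. -/
theorem mulL_lev_le (hSV : SlowlyVarying L) (hmono : Monotone L)
    (hL1 : ∀ x : ℝ, 0 ≤ x → 1 ≤ L x) (hα : 0 < α) :
    ∃ K : ℝ, 0 < K ∧ ∀ (r : ℕ) (y : ℝ), 0 ≤ y → y ≤ lev L α r → y * L y ≤ K * (2 : ℝ) ^ (α * r) := by
  have h1 : ∀ᶠ y in atTop, L (2 * y) / L y ≤ 2 :=
    (hSV.2.2 2 (by norm_num)).eventually_le_const (by norm_num)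
  obtain ⟨Y, hY⟩ := eventually_atTop.1 h1
  set Z := max Y 0
  have hZ0 : 0 ≤ Z := le_max_right _ _
  have hLZ := hL1 (2 * Z) (by positivity)
  refine ⟨2 * max 2 (L (2 * Z)), by positivity, fun r y hy0 hy => ?_⟩
  have hL2 : L y ≤ max 2 (L (2 * Z)) * L (y / 2) := by
    have h3 := hL1 (y / 2) (by positivity)
    by_cases h : Z ≤ y / 2
    · have h2 := hY (y / 2) ((le_max_left _ _).trans h)
      rw [div_le_iff₀ (by linarith), show 2 * (y / 2) = y by ring] at h2
      nlinarith [le_max_left 2 (L (2 * Z))]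
    · have h2 : L y ≤ L (2 * Z) := hmono (by linarith)
      nlinarith [le_max_right 2 (L (2 * Z))]
  have h4 : y / 2 * L (y / 2) ≤ (2 : ℝ) ^ (α * r) := by
    refine of_lt_lev hmono hL1 (by positivity) ?_
    have := lev_pos hmono hL1 hα r
    linarith
  calc y * L y ≤ y * (max 2 (L (2 * Z)) * L (y / 2)) := by gcongr
    _ = 2 * max 2 (L (2 * Z)) * (y / 2 * L (y / 2)) := by ring
    _ ≤ _ := by gcongr

/-- The norming constants built from a de Bruijn conjugate are comparable with the truncation
levels, because `Lt x * L (x * Lt x) → 1`. -/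
theorem norming_compare (hmono : Monotone L)
    (hL1 : ∀ x : ℝ, 0 ≤ x → 1 ≤ L x) (hα : 1 / 2 < α) {Lt : ℝ → ℝ}
    (hconj : DeBruijnConjugate L Lt) :
    ∃ (c C : ℝ) (r0 : ℕ), 0 < c ∧ 0 < C ∧ ∀ (r k : ℕ), r0 ≤ r → 2 ^ r ≤ k → k ≤ 2 ^ (r + 2) →
      c * lev L α (r + 2) ≤ (k : ℝ) ^ α * Lt ((k : ℝ) ^ α) ∧
      (k : ℝ) ^ α * Lt ((k : ℝ) ^ α) ≤ C * lev L α r := by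
  have hα0 : 0 < α := by linarith
  obtain ⟨hLt, -, hlim⟩ := hconj
  have h1 : ∀ᶠ x in atTop, 1 / 2 ≤ Lt x * L (x * Lt x) :=
    hlim.eventually_const_le (by norm_num)
  have h2 : ∀ᶠ x in atTop, Lt x * L (x * Lt x) ≤ 2 :=
    hlim.eventually_le_const (by norm_num)
  obtain ⟨x0, hx0⟩ := eventually_atTop.1 (h1.and h2)
  have h := tendsto_two_rpow hα0
  obtain ⟨r1, hr1⟩ := eventually_atTop.1 (h.eventually_ge_atTop x0)
  refine ⟨((2 : ℝ) ^ (α * (5 : ℕ)))⁻¹, (2 : ℝ) ^ (α * (4 : ℕ)), max r1 3, by positivity,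
    by positivity, fun r k hr hk1 hk2 => ?_⟩
  have hk1' : (2 : ℝ) ^ (α * r) ≤ (k : ℝ) ^ α := by
    rw [mul_comm, Real.rpow_mul (by norm_num), Real.rpow_natCast]
    gcongr
    exact_mod_cast hk1
  have hk2' : (k : ℝ) ^ α ≤ (2 : ℝ) ^ (α * (r + 2 : ℕ)) := by
    rw [mul_comm α, Real.rpow_mul (by norm_num), Real.rpow_natCast]
    gcongr
    exact_mod_cast hk2
  set x := (k : ℝ) ^ α with hx
  have hxpos : 0 < x := lt_of_lt_of_le (by positivity) hk1'
  have hb0 : 0 < x * Lt x := mul_pos hxpos (hLt.2.1 x hxpos.le)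
  obtain ⟨g1, g2⟩ := hx0 x ((hr1 r ((le_max_left _ _).trans hr)).trans hk1')
  have e1 : (2 : ℝ) ≤ (2 : ℝ) ^ (α * 2) := by
    calc (2 : ℝ) = (2 : ℝ) ^ (1 : ℝ) := by simp
      _ ≤ _ := Real.rpow_le_rpow_of_exponent_le (by norm_num) (by linarith)
  have hr3 : 3 ≤ r := (le_max_right _ _).trans hr
  constructor
  · have h3 : lev L α (r - 3) ≤ x * Lt x := by
      by_contra hlt
      have h4 := of_lt_lev hmono hL1 hb0.le (not_le.1 hlt)
      have h5 : x * Lt x * L (x * Lt x) ≥ x / 2 := by nlinarith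
      have h6 : (2 : ℝ) ^ (α * (r - 3 : ℕ)) * (2 : ℝ) ^ (α * 2) < (2 : ℝ) ^ (α * r) := by
        rw [← Real.rpow_add (by norm_num)]
        refine Real.rpow_lt_rpow_of_exponent_lt (by norm_num) ?_
        rw [Nat.cast_sub hr3]; push_cast; linarith
      have h7 : 0 < (2 : ℝ) ^ (α * (r - 3 : ℕ)) := by positivity
      nlinarith
    have h8 := lev_succ_le hmono hL1 hα0 (r - 3) 5
    rw [show r - 3 + 5 = r + 2 by omega] at h8
    rw [inv_mul_le_iff₀ (by positivity)]
    refine h8.trans ?_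
    gcongr
  · refine le_trans (le_lev hL1 hb0.le (r := r + 4) ?_) (lev_succ_le hmono hL1 hα0 r 4)
    calc x * Lt x * L (x * Lt x) = x * (Lt x * L (x * Lt x)) := by ring
      _ ≤ (2 : ℝ) ^ (α * (r + 2 : ℕ)) * (2 : ℝ) ^ (α * 2) := by
          gcongr
          exact g2.trans e1
      _ = _ := by rw [← Real.rpow_add (by norm_num)]; congr 1; push_cast; ring

end levels

/-! ### Moment condition and tail sums -/

/-- The properties of the truncation levels `τ r` used below: they are positive and monotone, and
they grow at most like `2 ^ (α r)` and at least like `2 ^ (γ r)` for each `γ < α`. -/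
structure IsLev (α : ℝ) (τ : ℕ → ℝ) : Prop where
  pos : ∀ r, 0 < τ r
  mono : Monotone τ
  up : ∀ r j : ℕ, τ (r + j) ≤ (2 : ℝ) ^ (α * j) * τ r
  low : ∀ γ : ℝ, 0 ≤ γ → γ < α → ∃ C : ℝ, 0 < C ∧
    ∀ i j : ℕ, τ i ≤ C * (2 : ℝ) ^ (-(γ * j)) * τ (i + j)

theorem isLev_lev {L : ℝ → ℝ} {α : ℝ} (hSV : SlowlyVarying L) (hmono : Monotone L)
    (hL1 : ∀ x : ℝ, 0 ≤ x → 1 ≤ L x) (hα : 0 < α) : IsLev α (lev L α) where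
  pos := lev_pos hmono hL1 hα
  mono := lev_mono hL1 hα
  up := lev_succ_le hmono hL1 hα
  low _ h0 h1 := lev_potter hSV hmono hL1 hα h0 h1

theorem IsLev.tendsto {α : ℝ} {τ : ℕ → ℝ} (hτ : IsLev α τ) (hα : 0 < α) :
    Tendsto τ atTop atTop := by
  obtain ⟨C, hC, h⟩ := hτ.low (α / 2) (by linarith) (by linarith)
  have h1 : Tendsto (fun r : ℕ => τ 0 / C * (2 : ℝ) ^ (α / 2 * r)) atTop atTop :=
    (tendsto_two_rpow (by linarith : 0 < α / 2)).const_mul_atTop (div_pos (hτ.pos 0) hC)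
  refine tendsto_atTop_mono (fun r => ?_) h1
  have h2 := h 0 r
  rw [zero_add, Real.rpow_neg (by norm_num)] at h2
  have h3 : 0 < (2 : ℝ) ^ (α / 2 * r) := by positivity
  rw [div_mul_eq_mul_div, div_le_iff₀ hC]
  calc τ 0 * (2 : ℝ) ^ (α / 2 * r)
      ≤ C * ((2 : ℝ) ^ (α / 2 * r))⁻¹ * τ r * (2 : ℝ) ^ (α / 2 * r) := by gcongr
    _ = τ r * C := by field_simp

/-- The layers `(τ J, τ (J + 1)]` exhaust `(τ 0, ∞)`. -/
theorem IsLev.exists_layer {α : ℝ} {τ : ℕ → ℝ} (hτ : IsLev α τ) (hα : 0 < α) {x : ℝ}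
    (hx : τ 0 < x) : ∃ J, τ J < x ∧ x ≤ τ (J + 1) := by
  have hex : ∃ r, x ≤ τ r := ((hτ.tendsto hα).eventually_ge_atTop x).exists
  classical
  have h1 := Nat.find_spec hex
  have h2 : Nat.find hex ≠ 0 := by
    intro h
    rw [h] at h1
    linarith
  obtain ⟨J, hJ⟩ := Nat.exists_eq_succ_of_ne_zero h2
  refine ⟨J, not_le.1 (Nat.find_min hex (by omega)), ?_⟩
  rw [hJ] at h1
  exact h1

theorem geom_two_le {b : ℝ} (hb : 2 ≤ b) (J : ℕ) : ∑ j ∈ range (J + 1), b ^ j ≤ 2 * b ^ J := by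
  induction J with
  | zero => simp
  | succ J ih =>
    rw [Finset.sum_range_succ]
    have : 0 < b ^ J := by positivity
    rw [pow_succ]
    nlinarith

section moments

variable {Ω : Type*} [MeasureSpace Ω] [IsProbabilityMeasure (volume : Measure Ω)]
variable {α : ℝ} {τ : ℕ → ℝ} {Y : Ω → ℝ}

/-- Layer-cake bound along the levels `τ`. -/
theorem lintegral_layer (hτ : IsLev α τ) (hα : 0 < α) (hY : Measurable Y) (h : ℝ → ℝ) (C0 : ℝ)
    (u : ℕ → ℝ) (h0 : ∀ x, 0 ≤ x → x ≤ τ 0 → h x ≤ C0)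
    (h1 : ∀ x J, τ J < x → x ≤ τ (J + 1) → h x ≤ u J) :
    ∫⁻ ω, ENNReal.ofReal (h |Y ω|) ≤
      ENNReal.ofReal C0 + ∑' J, ENNReal.ofReal (u J) * volume {ω | τ J < |Y ω|} := by
  have hm : ∀ J, MeasurableSet {ω | τ J < |Y ω|} := fun J =>
    measurableSet_lt measurable_const hY.abs
  calc ∫⁻ ω, ENNReal.ofReal (h |Y ω|)
      ≤ ∫⁻ ω, (ENNReal.ofReal C0 +
          ∑' J, ({ω | τ J < |Y ω|}.indicator (fun _ => ENNReal.ofReal (u J)) ω)) := by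
        refine lintegral_mono fun ω => ?_
        by_cases hx : |Y ω| ≤ τ 0
        · exact (ENNReal.ofReal_le_ofReal (h0 _ (abs_nonneg _) hx)).trans le_self_add
        · obtain ⟨J, hJ1, hJ2⟩ := hτ.exists_layer hα (not_le.1 hx)
          refine le_trans ?_ le_add_self
          refine le_trans ?_ (ENNReal.le_tsum J)
          rw [Set.indicator_of_mem (by exact hJ1)]
          exact ENNReal.ofReal_le_ofReal (h1 _ J hJ1 hJ2)
    _ = _ := by
        rw [lintegral_add_left measurable_const, lintegral_tsum]
        · simp only [lintegral_const, measure_univ, mul_one]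
          congr 1
          refine tsum_congr fun J => ?_
          rw [lintegral_indicator (hm J), setLIntegral_const]
        · exact fun J => (measurable_const.indicator (hm J)).aemeasurable

/-- Real-valued form of `lintegral_layer`. -/
theorem integral_layer (hτ : IsLev α τ) (hα : 0 < α) (hY : Measurable Y) (h : ℝ → ℝ) (C0 : ℝ)
    (u : ℕ → ℝ) (hC0 : 0 ≤ C0) (hu : ∀ J, 0 ≤ u J) (hm : Measurable h) (hh : ∀ x, 0 ≤ x → 0 ≤ h x)
    (h0 : ∀ x, 0 ≤ x → x ≤ τ 0 → h x ≤ C0)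
    (h1 : ∀ x J, τ J < x → x ≤ τ (J + 1) → h x ≤ u J)
    (hs : Summable fun J => u J * volume.real {ω | τ J < |Y ω|}) :
    Integrable (fun ω => h |Y ω|) ∧
      ∫ ω, h |Y ω| ≤ C0 + ∑' J, u J * volume.real {ω | τ J < |Y ω|} := by
  have h2 := lintegral_layer hτ hα hY h C0 u h0 h1
  have hnn : ∀ J, 0 ≤ u J * volume.real {ω | τ J < |Y ω|} := fun J =>
    mul_nonneg (hu J) measureReal_nonneg
  have h3 : ENNReal.ofReal C0 + ∑' J, ENNReal.ofReal (u J) * volume {ω | τ J < |Y ω|} =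
      ENNReal.ofReal (C0 + ∑' J, u J * volume.real {ω | τ J < |Y ω|}) := by
    rw [ENNReal.ofReal_add hC0 (tsum_nonneg hnn), ENNReal.ofReal_tsum_of_nonneg hnn hs]
    congr 1
    refine tsum_congr fun J => ?_
    rw [ENNReal.ofReal_mul (hu J), measureReal_def, ENNReal.ofReal_toReal (measure_ne_top _ _)]
  rw [h3] at h2
  have hmeas : AEStronglyMeasurable (fun ω => h |Y ω|) volume :=
    (hm.comp hY.abs).aestronglyMeasurable
  have hnn' : 0 ≤ᵐ[volume] fun ω => h |Y ω| := ae_of_all _ fun ω => hh _ (abs_nonneg _)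
  refine ⟨⟨hmeas, ?_⟩, ?_⟩
  · rw [hasFiniteIntegral_iff_ofReal hnn']
    exact h2.trans_lt ENNReal.ofReal_lt_top
  · rw [integral_eq_lintegral_of_nonneg_ae hnn' hmeas]
    exact ENNReal.toReal_le_of_le_ofReal (add_nonneg hC0 (tsum_nonneg hnn)) h2

theorem rlog_pos (x : ℝ) : 0 < rlog x :=
  Real.log_pos (lt_of_lt_of_le one_lt_two (le_max_right _ _))

theorem log_two_le_rlog (x : ℝ) : Real.log 2 ≤ rlog x :=
  Real.log_le_log two_pos (le_max_right _ _)

theorem measurable_rlog : Measurable rlog :=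
  Real.measurable_log.comp (measurable_id.max measurable_const)

/-- Finite moment implies summable tails. -/
theorem tail_summable_of_moment {L : ℝ → ℝ} {p : ℝ}
    (hL1 : ∀ x : ℝ, 0 ≤ x → 1 ≤ L x) (hα : 0 < α) (hp : 0 ≤ p) (hαp : 1 ≤ α * p)
    (hτ : IsLev α (lev L α)) (hY : Measurable Y)
    (momInt : Integrable fun ω => |Y ω| ^ p * L |Y ω| ^ p * rlog |Y ω|) :
    Summable fun j : ℕ => ((j : ℝ) + 1) * (2 : ℝ) ^ (α * p * j) *
      volume.real {ω | lev L α j < |Y ω|} := by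
  obtain ⟨C, hC, hlow⟩ := hτ.low (α / 2) (by linarith) (by linarith)
  set τ := lev L α with hτdef
  have hl2 := Real.log_pos one_lt_two
  -- on `τ j < x` the index `j` is at most a multiple of `log x`
  obtain ⟨C1, hC1, hidx⟩ : ∃ C1 : ℝ, 0 < C1 ∧ ∀ x j, τ j < x → (j : ℝ) + 1 ≤ C1 * rlog x := by
    have hC' : 0 < C / τ 0 := div_pos hC (hτ.pos 0)
    refine ⟨(|Real.log (C / τ 0)| / Real.log 2 + 1) / (α / 2 * Real.log 2) + 1 / Real.log 2,
      by positivity, fun x j hj => ?_⟩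
    have h1 := hlow 0 j
    rw [zero_add, Real.rpow_neg (by norm_num)] at h1
    have h2 : (2 : ℝ) ^ (α / 2 * j) ≤ C / τ 0 * max x 2 := by
      have h3 : 0 < (2 : ℝ) ^ (α / 2 * j) := by positivity
      rw [div_mul_eq_mul_div C, le_div_iff₀ (hτ.pos 0)]
      calc (2 : ℝ) ^ (α / 2 * j) * τ 0
          ≤ (2 : ℝ) ^ (α / 2 * j) * (C * ((2 : ℝ) ^ (α / 2 * j))⁻¹ * τ j) := by gcongr
        _ = C * τ j := by field_simp
        _ ≤ C * max x 2 := by gcongr; exact hj.le.trans (le_max_left _ _)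
    have h4 := Real.log_le_log (by positivity) h2
    rw [Real.log_rpow two_pos, Real.log_mul hC'.ne' (by positivity)] at h4
    change α / 2 * j * Real.log 2 ≤ Real.log (C / τ 0) + rlog x at h4
    have h5 := log_two_le_rlog x
    have h6 : (j : ℝ) ≤ (|Real.log (C / τ 0)| / Real.log 2 + 1) / (α / 2 * Real.log 2) * rlog x := by
      rw [div_mul_eq_mul_div, le_div_iff₀ (by positivity)]
      have h7 : |Real.log (C / τ 0)| ≤ |Real.log (C / τ 0)| / Real.log 2 * rlog x := by
        rw [div_mul_eq_mul_div, le_div_iff₀ hl2]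
        gcongr
      nlinarith [le_abs_self (Real.log (C / τ 0))]
    have h8 : 1 ≤ 1 / Real.log 2 * rlog x := by
      rw [div_mul_eq_mul_div, le_div_iff₀ hl2]; linarith
    linarith
  set F : ℝ → ℝ := fun x => x ^ p * L x ^ p * rlog x with hF
  have hFnn : ∀ x, 0 ≤ x → 0 ≤ F x := fun x hx => by
    have := hL1 x hx
    have := rlog_pos x
    simp only [hF]
    positivity
  set b : ℝ := (2 : ℝ) ^ (α * p) with hb
  have hb2 : 2 ≤ b := by
    calc (2 : ℝ) = (2 : ℝ) ^ (1 : ℝ) := by simp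
      _ ≤ _ := Real.rpow_le_rpow_of_exponent_le (by norm_num) hαp
  have hbj : ∀ j : ℕ, (2 : ℝ) ^ (α * p * j) = b ^ j := fun j => by
    rw [Real.rpow_mul (by norm_num), Real.rpow_natCast]
  have hpt : ∀ (n : ℕ) (x : ℝ), 0 ≤ x →
      ∑ j ∈ range n, ((j : ℝ) + 1) * b ^ j * (if τ j < x then 1 else 0) ≤ 2 * C1 * F x := by
    intro n x hx
    have hbpos : 0 < b := by linarith
    set S := (range n).filter fun j => τ j < x with hS
    have e1 : ∑ j ∈ range n, ((j : ℝ) + 1) * b ^ j * (if τ j < x then 1 else 0) =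
        ∑ j ∈ S, ((j : ℝ) + 1) * b ^ j := by
      rw [hS, Finset.sum_filter]
      refine Finset.sum_congr rfl fun j _ => ?_
      split_ifs <;> simp
    rw [e1]
    by_cases hne : S.Nonempty
    · set J := S.max' hne
      have hJ : τ J < x := (Finset.mem_filter.1 (S.max'_mem hne)).2
      have h1 : b ^ J ≤ x ^ p * L x ^ p := by
        have hLx := hL1 x hx
        rw [← Real.mul_rpow hx (by linarith), ← hbj, mul_assoc, mul_comm p, ← mul_assoc,
          Real.rpow_mul (by norm_num)]
        gcongr
        exact (lt_of_lev_lt hL1 hx hJ).le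
      have hr := rlog_pos x
      calc ∑ j ∈ S, ((j : ℝ) + 1) * b ^ j ≤ ∑ j ∈ S, C1 * rlog x * b ^ j := by
            refine Finset.sum_le_sum fun j hj => ?_
            gcongr
            exact hidx x j (Finset.mem_filter.1 hj).2
        _ ≤ ∑ j ∈ range (J + 1), C1 * rlog x * b ^ j := by
            refine Finset.sum_le_sum_of_subset_of_nonneg (fun j hj => ?_) fun j _ _ => by positivity
            exact Finset.mem_range.2 (Nat.lt_succ_of_le (S.le_max' j hj))
        _ = C1 * rlog x * ∑ j ∈ range (J + 1), b ^ j := by rw [Finset.mul_sum]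
        _ ≤ C1 * rlog x * (2 * (x ^ p * L x ^ p)) := by
            gcongr
            exact (geom_two_le hb2 J).trans (by gcongr)
        _ = _ := by simp only [hF]; ring
    · rw [Finset.not_nonempty_iff_eq_empty.1 hne, Finset.sum_empty]
      have := hFnn x hx
      positivity
  have hms : ∀ J, MeasurableSet {ω | τ J < |Y ω|} := fun J =>
    measurableSet_lt measurable_const hY.abs
  refine summable_of_sum_range_le (c := ∫ ω, 2 * C1 * F |Y ω|) (fun j => by positivity) fun n => ?_
  have e2 : ∀ j : ℕ, ((j : ℝ) + 1) * (2 : ℝ) ^ (α * p * j) * volume.real {ω | τ j < |Y ω|} =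
      ∫ ω, {ω | τ j < |Y ω|}.indicator (fun _ => ((j : ℝ) + 1) * b ^ j) ω := fun j => by
    rw [integral_indicator_const _ (hms j), smul_eq_mul, hbj]
    ring
  simp_rw [e2]
  rw [← integral_finsetSum]
  · refine integral_mono ?_ ?_ fun ω => ?_
    · exact integrable_finsetSum _ fun j _ => (integrable_const _).indicator (hms j)
    · exact momInt.const_mul _
    · refine le_trans (le_of_eq ?_) (hpt n |Y ω| (abs_nonneg _))
      refine Finset.sum_congr rfl fun j _ => ?_
      simp only [Set.indicator_apply, Set.mem_ofPred_eq]
      split_ifs <;> simp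
  · exact fun j _ => (integrable_const _).indicator (hms j)

/-- Summable tails imply a finite moment. -/
theorem moment_of_tail_summable {L : ℝ → ℝ} {p : ℝ} (hSV : SlowlyVarying L) (hmono : Monotone L)
    (hL1 : ∀ x : ℝ, 0 ≤ x → 1 ≤ L x) (hα : 0 < α) (hp : 0 ≤ p)
    (hτ : IsLev α (lev L α)) (hY : Measurable Y)
    (hs : Summable fun j : ℕ => ((j : ℝ) + 1) * (2 : ℝ) ^ (α * p * j) *
      volume.real {ω | lev L α j < |Y ω|}) :
    Integrable fun ω => |Y ω| ^ p * L |Y ω| ^ p * rlog |Y ω| := by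
  obtain ⟨K, hK, hG⟩ := mulL_lev_le hSV hmono hL1 hα
  set τ := lev L α with hτdef
  have hl2 := Real.log_pos one_lt_two
  set D : ℝ := α * Real.log 2 + Real.log (max (τ 0) 2) with hD
  have hlm : 0 < Real.log (max (τ 0) 2) :=
    Real.log_pos (lt_of_lt_of_le one_lt_two (le_max_right _ _))
  have hDpos : 0 < D := by positivity
  have hrl : ∀ x r, x ≤ τ r → rlog x ≤ ((r : ℝ) + 1) * D := by
    intro x r hx
    have h1 : max x 2 ≤ (2 : ℝ) ^ (α * r) * max (τ 0) 2 := by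
      have h2 := hτ.up 0 r
      rw [zero_add] at h2
      have h3 : (1 : ℝ) ≤ (2 : ℝ) ^ (α * r) := Real.one_le_rpow (by norm_num) (by positivity)
      refine max_le (hx.trans (h2.trans ?_)) ?_
      · gcongr; exact le_max_left _ _
      · nlinarith [le_max_right (τ 0) 2]
    have h4 := Real.log_le_log (by positivity) h1
    rw [Real.log_mul (by positivity) (by positivity), Real.log_rpow two_pos] at h4
    change rlog x ≤ _ at h4
    have h5 : (0 : ℝ) ≤ r := by positivity
    have h6 : 0 ≤ α * Real.log 2 := by positivity
    nlinarith [mul_nonneg h5 hlm.le]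
  have hF : ∀ x r, 0 ≤ x → x ≤ τ r →
      x ^ p * L x ^ p * rlog x ≤ (K * (2 : ℝ) ^ (α * r)) ^ p * (((r : ℝ) + 1) * D) := by
    intro x r h0 hx
    have hLx := hL1 x h0
    have := rlog_pos x
    rw [← Real.mul_rpow h0 (by linarith)]
    exact mul_le_mul (Real.rpow_le_rpow (by positivity) (hG r x h0 hx) hp) (hrl x r hx)
      (rlog_pos x).le (by positivity)
  refine (integral_layer hτ hα hY (fun x => x ^ p * L x ^ p * rlog x)
    ((K * (2 : ℝ) ^ (α * (0 : ℕ))) ^ p * ((((0 : ℕ) : ℝ) + 1) * D))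
    (fun J => (K * (2 : ℝ) ^ (α * (J + 1 : ℕ))) ^ p * ((((J + 1 : ℕ) : ℝ) + 1) * D))
    (by positivity) (fun J => by positivity) ?_ ?_ (fun x h0 hx => hF x 0 h0 hx)
    (fun x J h1 h2 => hF x (J + 1) ((hτ.pos J).le.trans h1.le) h2) ?_).1
  · exact ((measurable_id.pow_const _).mul (hSV.1.pow_const _)).mul measurable_rlog
  · intro x hx
    have := hL1 x hx
    have := rlog_pos x
    positivity
  · refine Summable.of_nonneg_of_le (fun J => by positivity) (fun J => ?_)
      (hs.mul_left (K ^ p * (2 : ℝ) ^ (α * p) * (2 * D)))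
    have e : (K * (2 : ℝ) ^ (α * (J + 1 : ℕ))) ^ p =
        K ^ p * (2 : ℝ) ^ (α * p) * (2 : ℝ) ^ (α * p * J) := by
      rw [Real.mul_rpow hK.le (by positivity), ← Real.rpow_mul (by norm_num), mul_assoc (K ^ p),
        ← Real.rpow_add (by norm_num)]
      congr 2; push_cast; ring
    rw [e]
    have h1 : (((J + 1 : ℕ) : ℝ) + 1) * D ≤ 2 * D * ((J : ℝ) + 1) := by
      push_cast
      nlinarith [(Nat.cast_nonneg J : (0 : ℝ) ≤ J)]
    have h2 : 0 ≤ volume.real {ω | τ J < |Y ω|} := measureReal_nonneg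
    calc K ^ p * (2 : ℝ) ^ (α * p) * (2 : ℝ) ^ (α * p * J) * ((((J + 1 : ℕ) : ℝ) + 1) * D) *
          volume.real {ω | τ J < |Y ω|}
        ≤ K ^ p * (2 : ℝ) ^ (α * p) * (2 : ℝ) ^ (α * p * J) * (2 * D * ((J : ℝ) + 1)) *
          volume.real {ω | τ J < |Y ω|} := by gcongr
      _ = _ := by ring

end moments

/-! ### Dyadic chaining in two dimensions -/

/-- The dyadic interval of length `2 ^ s` and index `i`, inside `[0, 2 ^ A)`. -/
def dyad (A s i : ℕ) : Finset ℕ := (range (2 ^ A)).filter fun x => x / 2 ^ s = i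

/-- The least scale at which `x` and `u` lie in the same dyadic interval. -/
def scale (u x : ℕ) : ℕ := sInf {l | x / 2 ^ l = u / 2 ^ l}

theorem card_dyad_le (A s i : ℕ) : (dyad A s i).card ≤ 2 ^ s := by
  have h : dyad A s i ⊆ Finset.Ico (i * 2 ^ s) (i * 2 ^ s + 2 ^ s) := by
    intro x hx
    have h1 := (Finset.mem_filter.1 hx).2
    have h2 : 0 < 2 ^ s := by positivity
    rw [Finset.mem_Ico, ← h1]
    exact ⟨Nat.div_mul_le_self x _, by
      have := Nat.lt_div_mul_add (a := x) h2
      exact this⟩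
  simpa using Finset.card_le_card h

theorem scale_spec {A u x : ℕ} (hu : u < 2 ^ A) (hx : x < u) :
    1 ≤ scale u x ∧ scale u x ≤ A ∧ ∀ l, scale u x ≤ l → x / 2 ^ l = u / 2 ^ l := by
  have hA : A ∈ {l | x / 2 ^ l = u / 2 ^ l} := by
    change x / 2 ^ A = u / 2 ^ A
    rw [Nat.div_eq_of_lt hu, Nat.div_eq_of_lt (hx.trans hu)]
  have hmem : x / 2 ^ scale u x = u / 2 ^ scale u x := Nat.sInf_mem ⟨A, hA⟩
  refine ⟨?_, Nat.sInf_le hA, fun l hl => ?_⟩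
  · by_contra h
    have h0 : scale u x = 0 := by omega
    rw [h0] at hmem
    simp at hmem
    omega
  · obtain ⟨d, rfl⟩ := Nat.exists_eq_add_of_le hl
    rw [pow_add, ← Nat.div_div_eq_div_mul, ← Nat.div_div_eq_div_mul, hmem]

/-- The points below `u` separated from `u` at scale exactly `s + 1` form a dyadic interval of
length `2 ^ s`, or there are none. -/
theorem scale_fiber {A u : ℕ} (hu : u < 2 ^ A) (s : ℕ) (hs : s < A) :
    ((range u).filter fun x => scale u x = s + 1) = ∅ ∨
      ∃ i < 2 ^ (A - s), ((range u).filter fun x => scale u x = s + 1) = dyad A s i := by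
  have key : ∀ x, x / 2 ^ (s + 1) = x / 2 ^ s / 2 := fun x => by
    rw [pow_succ, Nat.div_div_eq_div_mul]
  have hb : u / 2 ^ s < 2 ^ (A - s) := by
    rw [Nat.div_lt_iff_lt_mul (by positivity), ← pow_add, Nat.sub_add_cancel hs.le]
    exact hu
  have hfw : ∀ x, x < u → scale u x = s + 1 → u / 2 ^ s = x / 2 ^ s + 1 ∧ u / 2 ^ s % 2 = 1 := by
    intro x hx hsc
    have h1 := (scale_spec hu hx).2.2 (s + 1) hsc.le
    have h2 : x / 2 ^ s ≠ u / 2 ^ s := by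
      intro h
      have : scale u x ≤ s := Nat.sInf_le h
      omega
    have h3 : x / 2 ^ s ≤ u / 2 ^ s := Nat.div_le_div_right hx.le
    rw [key, key] at h1
    omega
  by_cases hodd : u / 2 ^ s % 2 = 1
  · right
    refine ⟨u / 2 ^ s - 1, (Nat.sub_le _ _).trans_lt hb, ?_⟩
    ext x
    simp only [Finset.mem_filter, Finset.mem_range, dyad]
    constructor
    · rintro ⟨hx, hsc⟩
      have := hfw x hx hsc
      exact ⟨hx.trans hu, by rw [this.1, Nat.add_sub_cancel]⟩
    · rintro ⟨-, hx⟩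
      have hlt : x < u := by
        by_contra h
        have : u / 2 ^ s ≤ x / 2 ^ s := Nat.div_le_div_right (not_lt.1 h)
        clear hb
        generalize u / 2 ^ s = a at *
        generalize x / 2 ^ s = b at *
        omega
      refine ⟨hlt, le_antisymm (Nat.sInf_le ?_) ?_⟩
      · change x / 2 ^ (s + 1) = u / 2 ^ (s + 1)
        rw [key, key]
        clear hb
        generalize u / 2 ^ s = a at *
        generalize x / 2 ^ s = b at *
        omega
      · by_contra h
        have := (scale_spec hu hlt).2.2 s (by omega)
        clear hb
        generalize u / 2 ^ s = a at *
        generalize x / 2 ^ s = b at *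
        omega
  · left
    refine Finset.filter_eq_empty_iff.2 fun x hx hsc => ?_
    exact hodd (hfw x (Finset.mem_range.1 hx) hsc).2

theorem telescope_from (f : ℕ → ℝ) {m N : ℕ} (h : m ≤ N) :
    f N = f m + ∑ k ∈ range N, if m ≤ k then f (k + 1) - f k else 0 := by
  induction N, h using Nat.le_induction with
  | base =>
    rw [Finset.sum_eq_zero]
    · simp
    · intro k hk
      rw [if_neg]
      have := Finset.mem_range.1 hk
      omega
  | succ n hn ih =>
    rw [Finset.sum_range_succ, if_pos hn, ← add_assoc, ← ih]
    ring

theorem sum_biUnion_le_sum {ι κ : Type*} [DecidableEq ι] [DecidableEq κ] (T : Finset ι)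
    (E : ι → Finset κ) (f : κ → ℝ) (hf : ∀ P, 0 ≤ f P) :
    ∑ P ∈ T.biUnion E, f P ≤ ∑ i ∈ T, ∑ P ∈ E i, f P := by
  induction T using Finset.induction_on with
  | empty => simp
  | insert i T hi ih =>
    rw [Finset.biUnion_insert, Finset.sum_insert hi]
    have h := Finset.sum_union_inter (s₁ := E i) (s₂ := T.biUnion E) (f := f)
    have h' : 0 ≤ ∑ P ∈ E i ∩ T.biUnion E, f P := Finset.sum_nonneg fun P _ => hf P
    linarith

/-- Deterministic chaining with scale-dependent truncation. If the centred sums over dyadic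
rectangles of the truncations `z` at the scale of the rectangle, and of the increments
`z (k + 1) - z k`, are controlled, then so are all sums over rectangles `[0, u) × [0, v)`.
Since the increments are nonnegative, their sum over the staircase region where the scale is at
most `k` is bounded by the sum over the at most `k + 1` dyadic rectangles of area `2 ^ k`
containing `(u, v)`. -/
theorem chain_bound (A C u v : ℕ) (hu : u < 2 ^ A) (hv : v < 2 ^ C) (z : ℕ → ℕ × ℕ → ℝ)
    (e : ℕ → ℝ) (lam : ℕ → ℕ → ℝ) (hlam : ∀ s t, 0 ≤ lam s t)
    (hz : ∀ k P, z k P ≤ z (k + 1) P) (he : ∀ k, e k ≤ e (k + 1))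
    (h1 : ∀ s t, s ≤ A → t ≤ C → ∀ i < 2 ^ (A - s), ∀ j < 2 ^ (C - t),
      |∑ P ∈ dyad A s i ×ˢ dyad C t j, (z (s + t + 2) P - e (s + t + 2))| ≤ lam s t)
    (h2 : ∀ s t, s ≤ A → t ≤ C → ∀ i < 2 ^ (A - s), ∀ j < 2 ^ (C - t),
      |∑ P ∈ dyad A s i ×ˢ dyad C t j,
        (z (s + t + 1) P - z (s + t) P - (e (s + t + 1) - e (s + t)))| ≤ lam s t) :
    |∑ P ∈ range u ×ˢ range v, (z (A + C) P - e (A + C))| ≤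
      2 * ∑ st ∈ range (A + 1) ×ˢ range (C + 1), lam st.1 st.2 +
        ∑ k ∈ range (A + C), ((k : ℝ) + 1) * 2 ^ k * (e (k + 1) - e k) := by
  classical
  set D := range u ×ˢ range v with hD
  set m : ℕ × ℕ → ℕ := fun P => scale u P.1 + scale v P.2 with hm
  have hDmem : ∀ P ∈ D, P.1 < u ∧ P.2 < v := fun P hP => by
    simpa [hD] using hP
  have hsplit : ∑ P ∈ D, (z (A + C) P - e (A + C)) =
      ∑ P ∈ D, (z (m P) P - e (m P)) +
        ∑ k ∈ range (A + C), ∑ P ∈ D with m P ≤ k,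
          (z (k + 1) P - z k P - (e (k + 1) - e k)) := by
    simp_rw [Finset.sum_filter]
    rw [Finset.sum_comm, ← Finset.sum_add_distrib]
    refine Finset.sum_congr rfl fun P hP => ?_
    obtain ⟨hP1, hP2⟩ := hDmem P hP
    have hmle : m P ≤ A + C :=
      add_le_add (scale_spec hu hP1).2.1 (scale_spec hv hP2).2.1
    rw [telescope_from (fun k => z k P - e k) hmle]
    congr 1
    refine Finset.sum_congr rfl fun k _ => ?_
    split_ifs
    · ring
    · rfl
  -- the sums over the pieces on which both scales are fixed
  have hfirst : |∑ P ∈ D, (z (m P) P - e (m P))| ≤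
      ∑ st ∈ range (A + 1) ×ˢ range (C + 1), lam st.1 st.2 := by
    have hmaps : ∀ P ∈ D, (scale u P.1 - 1, scale v P.2 - 1) ∈ range A ×ˢ range C := by
      intro P hP
      obtain ⟨hP1, hP2⟩ := hDmem P hP
      obtain ⟨a1, a2, -⟩ := scale_spec hu hP1
      obtain ⟨b1, b2, -⟩ := scale_spec hv hP2
      simp only [Finset.mem_product, Finset.mem_range]
      omega
    rw [← Finset.sum_fiberwise_of_maps_to hmaps]
    refine (Finset.abs_sum_le_sum_abs _ _).trans ?_
    refine le_trans (Finset.sum_le_sum (g := fun st => lam st.1 st.2) ?_)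
      (Finset.sum_le_sum_of_subset_of_nonneg ?_ fun _ _ _ => hlam _ _)
    · rintro ⟨s, t⟩ hst
      simp only [Finset.mem_product, Finset.mem_range] at hst
      have hset : (D.filter fun P => (scale u P.1 - 1, scale v P.2 - 1) = (s, t)) =
          ((range u).filter fun x => scale u x = s + 1) ×ˢ
            ((range v).filter fun x => scale v x = t + 1) := by
        ext P
        simp only [hD, Finset.mem_filter, Finset.mem_product, Finset.mem_range, Prod.mk.injEq]
        constructor
        · rintro ⟨⟨hP1, hP2⟩, g1, g2⟩
          have := (scale_spec hu hP1).1
          have := (scale_spec hv hP2).1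
          omega
        · rintro ⟨⟨hP1, g1⟩, hP2, g2⟩
          omega
      rw [hset]
      have hval : ∑ P ∈ ((range u).filter fun x => scale u x = s + 1) ×ˢ
            ((range v).filter fun x => scale v x = t + 1), (z (m P) P - e (m P)) =
          ∑ P ∈ ((range u).filter fun x => scale u x = s + 1) ×ˢ
            ((range v).filter fun x => scale v x = t + 1),
              (z (s + t + 2) P - e (s + t + 2)) := by
        refine Finset.sum_congr rfl fun P hP => ?_
        simp only [Finset.mem_product, Finset.mem_filter] at hP
        have : m P = s + t + 2 := by
          simp only [hm]
          omega
        rw [this]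
      rw [hval]
      rcases scale_fiber hu s hst.1 with h | ⟨i, hi, h⟩
      · rw [h]
        simpa using hlam s t
      rcases scale_fiber hv t hst.2 with h' | ⟨j, hj, h'⟩
      · rw [h']
        simpa using hlam s t
      rw [h, h']
      exact h1 s t hst.1.le hst.2.le i hi j hj
    · refine Finset.product_subset_product ?_ ?_ <;>
        exact Finset.range_subset_range.2 (Nat.le_succ _)
  -- the sum of the increments at level `k`
  have hsecond : ∀ k ∈ range (A + C),
      |∑ P ∈ D with m P ≤ k, (z (k + 1) P - z k P - (e (k + 1) - e k))| ≤
        ∑ st ∈ range (A + 1) ×ˢ range (C + 1) with st.1 + st.2 = k, lam st.1 st.2 +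
          ((k : ℝ) + 1) * 2 ^ k * (e (k + 1) - e k) := by
    intro k hk
    have hk' := Finset.mem_range.1 hk
    set T := (range (A + 1) ×ˢ range (C + 1)).filter fun st => st.1 + st.2 = k with hT
    set E : ℕ × ℕ → Finset (ℕ × ℕ) := fun st =>
      dyad A st.1 (u / 2 ^ st.1) ×ˢ dyad C st.2 (v / 2 ^ st.2) with hE
    have hTmem : ∀ st ∈ T, st.1 ≤ A ∧ st.2 ≤ C ∧ st.1 + st.2 = k := fun st hst => by
      simp only [hT, Finset.mem_filter, Finset.mem_product, Finset.mem_range] at hst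
      omega
    have hTcard : (T.card : ℝ) ≤ (k : ℝ) + 1 := by
      have : T ⊆ Finset.HasAntidiagonal.antidiagonal k := fun st hst => by
        rw [Finset.HasAntidiagonal.mem_antidiagonal]
        exact (hTmem st hst).2.2
      have h := Finset.card_le_card this
      rw [Finset.Nat.card_antidiagonal] at h
      exact_mod_cast h
    have hcover : D.filter (fun P => m P ≤ k) ⊆ T.biUnion E := by
      intro P hP
      obtain ⟨hPD, hmk⟩ := Finset.mem_filter.1 hP
      obtain ⟨hP1, hP2⟩ := hDmem P hPD
      obtain ⟨a1, a2, a3⟩ := scale_spec hu hP1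
      obtain ⟨b1, b2, b3⟩ := scale_spec hv hP2
      simp only [hm] at hmk
      -- enlarge the first scale as far as possible, then the second one
      set s := min A (k - scale v P.2) with hs
      have hs1 : scale u P.1 ≤ s := le_min a2 (by omega)
      have hs2 : scale v P.2 ≤ k - s := by
        have : s ≤ k - scale v P.2 := min_le_right _ _
        omega
      have hs3 : k - s ≤ C := by
        rcases min_choice A (k - scale v P.2) with h | h <;> omega
      have hs4 : s ≤ A := min_le_left _ _
      have hs5 : s ≤ k := (min_le_right _ _).trans (Nat.sub_le _ _)
      refine Finset.mem_biUnion.2 ⟨(s, k - s), ?_, ?_⟩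
      · simp only [hT, Finset.mem_filter, Finset.mem_product, Finset.mem_range]
        omega
      · simp only [hE, Finset.mem_product, dyad, Finset.mem_filter, Finset.mem_range]
        exact ⟨⟨hP1.trans hu, a3 s hs1⟩, hP2.trans hv, b3 _ hs2⟩
    have hdk : 0 ≤ e (k + 1) - e k := sub_nonneg.2 (he k)
    have hEcard : ∀ st ∈ T, ((E st).card : ℝ) ≤ 2 ^ k := by
      intro st hst
      have h : (E st).card ≤ 2 ^ k := by
        rw [hE, Finset.card_product, ← (hTmem st hst).2.2, pow_add]
        exact Nat.mul_le_mul (card_dyad_le _ _ _) (card_dyad_le _ _ _)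
      exact_mod_cast h
    have hsub : ∀ f : ℕ × ℕ → ℝ, (∀ P, 0 ≤ f P) →
        ∑ P ∈ D with m P ≤ k, f P ≤ ∑ st ∈ T, ∑ P ∈ E st, f P := by
      intro f hf
      refine (Finset.sum_le_sum_of_subset_of_nonneg hcover fun P _ _ => hf P).trans ?_
      exact sum_biUnion_le_sum T E f hf
    have hconst : ∑ st ∈ T, ∑ P ∈ E st, (e (k + 1) - e k) ≤
        ((k : ℝ) + 1) * 2 ^ k * (e (k + 1) - e k) := by
      calc ∑ st ∈ T, ∑ P ∈ E st, (e (k + 1) - e k)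
          ≤ ∑ st ∈ T, 2 ^ k * (e (k + 1) - e k) := by
            refine Finset.sum_le_sum fun st hst => ?_
            rw [Finset.sum_const, nsmul_eq_mul]
            exact mul_le_mul_of_nonneg_right (hEcard st hst) hdk
        _ = T.card * (2 ^ k * (e (k + 1) - e k)) := by rw [Finset.sum_const, nsmul_eq_mul]
        _ ≤ ((k : ℝ) + 1) * (2 ^ k * (e (k + 1) - e k)) := by gcongr
        _ = _ := by ring
    have hY : ∑ P ∈ D with m P ≤ k, (z (k + 1) P - z k P) ≤
        ∑ st ∈ T, lam st.1 st.2 + ((k : ℝ) + 1) * 2 ^ k * (e (k + 1) - e k) := by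
      refine (hsub (fun P => z (k + 1) P - z k P) fun P => sub_nonneg.2 (hz k P)).trans ?_
      have h3 : ∀ st ∈ T, ∑ P ∈ E st, (z (k + 1) P - z k P) ≤
          lam st.1 st.2 + ∑ P ∈ E st, (e (k + 1) - e k) := by
        intro st hst
        obtain ⟨g1, g2, g3⟩ := hTmem st hst
        have hb : ∀ {B w s : ℕ}, w < 2 ^ B → s ≤ B → w / 2 ^ s < 2 ^ (B - s) := by
          intro B w s hw hs
          rw [Nat.div_lt_iff_lt_mul (by positivity), ← pow_add, Nat.sub_add_cancel hs]
          exact hw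
        have h4 := h2 st.1 st.2 g1 g2 _ (hb hu g1) _ (hb hv g2)
        rw [g3] at h4
        have h5 := (le_abs_self _).trans h4
        rw [Finset.sum_sub_distrib] at h5
        linarith
      refine (Finset.sum_le_sum h3).trans ?_
      rw [Finset.sum_add_distrib]
      linarith
    have hYnn : 0 ≤ ∑ P ∈ D with m P ≤ k, (z (k + 1) P - z k P) :=
      Finset.sum_nonneg fun P _ => sub_nonneg.2 (hz k P)
    have hcnn : 0 ≤ ∑ P ∈ D with m P ≤ k, (e (k + 1) - e k) :=
      Finset.sum_nonneg fun P _ => hdk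
    have hc := (hsub (fun _ => e (k + 1) - e k) fun _ => hdk).trans hconst
    have hlnn : 0 ≤ ∑ st ∈ T, lam st.1 st.2 := Finset.sum_nonneg fun st _ => hlam _ _
    rw [Finset.sum_sub_distrib, abs_le]
    constructor <;> linarith
  have hlamsum : ∑ k ∈ range (A + C),
      ∑ st ∈ range (A + 1) ×ˢ range (C + 1) with st.1 + st.2 = k, lam st.1 st.2 ≤
        ∑ st ∈ range (A + 1) ×ˢ range (C + 1), lam st.1 st.2 :=
    Finset.sum_fiberwise_le_sum_of_sum_fiber_nonneg fun k _ =>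
      Finset.sum_nonneg fun st _ => hlam _ _
  rw [hsplit]
  refine (abs_add_le _ _).trans ?_
  have h6 := (Finset.abs_sum_le_sum_abs _ _).trans (Finset.sum_le_sum hsecond)
  rw [Finset.sum_add_distrib] at h6
  linarith

/-! ### Moment bounds from Condition (H) -/

/-- The consequence of Condition (H_{2q}) that the proof uses: a field `ξ` of copies of `Y` such
that the centred sums of one bounded nondecreasing function satisfy the Rosenthal-type bound with
constant `K`. -/
structure HBound {Ω : Type*} [MeasureSpace Ω] (q K : ℝ) (Y : Ω → ℝ) (ξ : ℕ × ℕ → Ω → ℝ) :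
    Prop where
  nonneg : 0 ≤ K
  measY : Measurable Y
  meas : ∀ k, Measurable (ξ k)
  ident : ∀ k, IdentDistrib (ξ k) Y
  bound : ∀ (f : ℝ → ℝ) (B : ℝ), Monotone f → (∀ x, |f x| ≤ B) → ∀ I : Finset (ℕ × ℕ),
    ∫ ω, |∑ k ∈ I, (f (ξ k ω) - ∫ ω', f (Y ω'))| ^ (2 * q) ≤
      K * ((I.card : ℝ) * (∫ ω, |f (Y ω)| ^ (2 * q)) +
        (I.card : ℝ) ^ q * (∫ ω, (f (Y ω)) ^ 2) ^ q)

section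

variable {Ω : Type*} [MeasureSpace Ω] [IsProbabilityMeasure (volume : Measure Ω)]
  {q K : ℝ} {Y : Ω → ℝ} {ξ : ℕ × ℕ → Ω → ℝ}

theorem integrable_of_abs_le {f : Ω → ℝ} (hf : Measurable f) (B : ℝ) (h : ∀ ω, |f ω| ≤ B) :
    Integrable f :=
  Integrable.of_bound hf.aestronglyMeasurable B (Eventually.of_forall h)

theorem hBound_of_condH (hq : 1 ≤ q) (X : ℕ → ℕ → Ω → ℝ)
    (hmeas : ∀ m n : ℕ, 1 ≤ m → 1 ≤ n → Measurable (X m n))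
    (hid : ∀ m n : ℕ, 1 ≤ m → 1 ≤ n → IdentDistrib (X m n) (X 1 1))
    (hH : CondH q fun k : PIdx => X k.1.1 k.1.2) :
    ∃ K, HBound q K (X 1 1) fun k => X (k.1 + 1) (k.2 + 1) := by
  obtain ⟨C, hC⟩ := hH
  refine ⟨|C|, abs_nonneg C, hmeas 1 1 le_rfl le_rfl, fun k => hmeas _ _ (by omega) (by omega),
    fun k => hid _ _ (by omega) (by omega), ?_⟩
  intro f B hf hB I
  have hfm : Measurable f := hf.measurable
  have hB0 : 0 ≤ B := (abs_nonneg _).trans (hB 0)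
  rcases I.eq_empty_or_nonempty with rfl | hI
  · have : (2 * q) ≠ 0 := by positivity
    have hq0 : q ≠ 0 := by positivity
    simp [Real.zero_rpow this, Real.zero_rpow hq0]
  let φ : ℕ × ℕ ↪ PIdx := ⟨fun k => ⟨(k.1 + 1, k.2 + 1), by simp, by simp⟩, fun a b h => by
    simp only [Subtype.mk.injEq, Prod.mk.injEq, add_left_inj] at h
    exact Prod.ext h.1 h.2⟩
  have hmφ : ∀ l ∈ I.map φ, Measurable (X l.1.1 l.1.2) := fun l _ => hmeas _ _ l.2.1 l.2.2
  have hidφ : ∀ l : PIdx, IdentDistrib (X l.1.1 l.1.2) (X 1 1) := fun l => hid _ _ l.2.1 l.2.2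
  have momInt : ∀ (g : ℝ → ℝ), Measurable g → ∀ l : PIdx,
      ∫ ω, g (X l.1.1 l.1.2 ω) = ∫ ω, g (X 1 1 ω) := fun g hg l =>
    ((hidφ l).comp hg).integral_eq
  have hpow : ∀ x : ℝ, |x| ≤ B → |x| ^ (2 * q) ≤ B ^ (2 * q) := fun x hx =>
    Real.rpow_le_rpow (abs_nonneg _) hx (by positivity)
  have key := hC (I.map φ) (by simpa using hI) (fun _ => f) (fun _ _ => hf)
    (fun l hl => integrable_of_abs_le (hfm.comp (hmφ l hl)) B fun ω => hB _)
    (fun l hl => integrable_of_abs_le ((hfm.comp (hmφ l hl)).pow_const 2) (B ^ 2) fun ω => by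
      rw [abs_of_nonneg (sq_nonneg _)]
      exact sq_le_sq' (abs_le.1 (hB _)).1 (abs_le.1 (hB _)).2)
    (fun l hl => integrable_of_abs_le ((hfm.comp (hmφ l hl)).abs.pow_const (2 * q)) (B ^ (2 * q))
      fun ω => by
        rw [abs_of_nonneg (by positivity)]
        exact hpow _ (hB _))
    (by
      refine integrable_of_abs_le (Measurable.pow_const (Measurable.abs
        (Finset.measurable_fun_sum _ fun l hl => (hfm.comp (hmφ l hl)).sub_const _)) (2 * q))
        (((I.map φ).card * (B + B)) ^ (2 * q)) fun ω => ?_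
      rw [abs_of_nonneg (by positivity)]
      refine Real.rpow_le_rpow (abs_nonneg _) ?_ (by positivity)
      refine (Finset.abs_sum_le_sum_abs _ _).trans ?_
      rw [← nsmul_eq_mul]
      refine Finset.sum_le_card_nsmul _ _ _ fun l hl => ?_
      refine (abs_sub _ _).trans (add_le_add (hB _) ?_)
      have := norm_integral_le_of_norm_le_const (μ := (volume : Measure Ω))
        (f := fun ω' => f (X l.1.1 l.1.2 ω')) (C := B) (Eventually.of_forall fun ω => hB _)
      simpa using this)
  simp only [Finset.card_map] at key
  have e1 : ∀ l : PIdx, ∫ ω', f (X l.1.1 l.1.2 ω') = ∫ ω', f (X 1 1 ω') := momInt f hfm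
  have e2 : ∀ l : PIdx, ∫ ω', |f (X l.1.1 l.1.2 ω')| ^ (2 * q) = ∫ ω', |f (X 1 1 ω')| ^ (2 * q) :=
    momInt (fun x => |f x| ^ (2 * q)) (hfm.abs.pow_const _)
  have e3 : ∀ l : PIdx, ∫ ω', (f (X l.1.1 l.1.2 ω')) ^ 2 = ∫ ω', (f (X 1 1 ω')) ^ 2 :=
    momInt (fun x => (f x) ^ 2) (hfm.pow_const _)
  simp only [e1, e2, e3, Finset.sup'_const, Finset.sum_map] at key
  refine key.trans (mul_le_mul_of_nonneg_right (le_abs_self C) ?_)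
  have : 0 ≤ ∫ ω', |f (X 1 1 ω')| ^ (2 * q) := integral_nonneg fun ω => by positivity
  have : 0 ≤ ∫ ω', (f (X 1 1 ω')) ^ 2 := integral_nonneg fun ω => by positivity
  positivity

omit [IsProbabilityMeasure (volume : Measure Ω)] in
/-- The class of fields is stable under `x ↦ -x`, because `x ↦ -f (-x)` is again nondecreasing. -/
theorem HBound.neg (h : HBound q K Y ξ) : HBound q K (fun ω => -Y ω) fun k ω => -ξ k ω where
  nonneg := h.nonneg
  measY := h.measY.neg
  meas k := (h.meas k).neg
  ident k := (h.ident k).comp measurable_neg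
  bound f B hf hB I := by
    have key := h.bound (fun x => -f (-x)) B
      (fun x y hxy => neg_le_neg (hf (neg_le_neg hxy))) (fun x => by simpa using hB (-x)) I
    have e : ∀ ω, |∑ k ∈ I, (-f (-ξ k ω) - ∫ ω', -f (-Y ω'))| =
        |∑ k ∈ I, (f (-ξ k ω) - ∫ ω', f (-Y ω'))| := fun ω => by
      rw [← abs_neg, ← Finset.sum_neg_distrib, integral_neg]
      congr 1
      exact Finset.sum_congr rfl fun k _ => by ring
    simpa only [e, abs_neg, neg_sq] using key

omit [IsProbabilityMeasure (volume : Measure Ω)] in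
theorem HBound.integral_eq (h : HBound q K Y ξ) {f : ℝ → ℝ} (hf : Measurable f) (k : ℕ × ℕ) :
    ∫ ω, f (ξ k ω) = ∫ ω, f (Y ω) := ((h.ident k).comp hf).integral_eq

theorem HBound.integrable_sum (h : HBound q K Y ξ) (hq : 1 ≤ q) {f : ℝ → ℝ} {B : ℝ}
    (hf : Monotone f) (hB : ∀ x, |f x| ≤ B) (I : Finset (ℕ × ℕ)) (c : ℝ) :
    Integrable fun ω => |∑ k ∈ I, (f (ξ k ω) - c)| ^ (2 * q) := by
  refine integrable_of_abs_le (Measurable.pow_const (Measurable.abs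
    (Finset.measurable_fun_sum _ fun l _ => (hf.measurable.comp (h.meas l)).sub_const _)) (2 * q))
    ((I.card * (B + |c|)) ^ (2 * q)) fun ω => ?_
  rw [abs_of_nonneg (by positivity)]
  refine Real.rpow_le_rpow (abs_nonneg _) ?_ (by positivity)
  refine (Finset.abs_sum_le_sum_abs _ _).trans ?_
  rw [← nsmul_eq_mul]
  exact Finset.sum_le_card_nsmul _ _ _ fun l _ => (abs_sub _ _).trans (by gcongr; exact hB _)

/-- Markov's inequality for the centred sum of a nondecreasing function dominated by
`x ↦ min |x| t`. -/
theorem HBound.markov (h : HBound q K Y ξ) (hq : 1 ≤ q) {f : ℝ → ℝ} {t : ℝ}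
    (hf : Monotone f) (hB : ∀ x, |f x| ≤ min |x| t) (I : Finset (ℕ × ℕ)) (n : ℕ)
    (hn : I.card ≤ n) {lam : ℝ} (hlam : 0 < lam) :
    (volume : Measure Ω).real {ω | lam < |∑ k ∈ I, (f (ξ k ω) - ∫ ω', f (Y ω'))|} ≤
      K * ((n : ℝ) * (∫ ω, (min |Y ω| t) ^ (2 * q)) +
        (n : ℝ) ^ q * (∫ ω, (min |Y ω| t) ^ 2) ^ q) / lam ^ (2 * q) := by
  have hB' : ∀ x, |f x| ≤ t := fun x => (hB x).trans (min_le_right _ _)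
  have ht : 0 ≤ t := (abs_nonneg _).trans (hB' 0)
  have hK := h.nonneg
  have hmin : Measurable fun ω => min |Y ω| t := h.measY.abs.min measurable_const
  have hle : ∀ x : ℝ, |min |x| t| ≤ t := fun x => by
    rw [abs_of_nonneg (le_min (abs_nonneg _) ht)]; exact min_le_right _ _
  rw [le_div_iff₀ (by positivity), mul_comm]
  have m := mul_meas_ge_le_integral_of_nonneg (μ := (volume : Measure Ω))
    (f := fun ω => |∑ k ∈ I, (f (ξ k ω) - ∫ ω', f (Y ω'))| ^ (2 * q))
    (Eventually.of_forall fun ω => by positivity) (h.integrable_sum hq hf hB' I _)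
    (lam ^ (2 * q))
  refine le_trans ?_ (m.trans ((h.bound f t hf hB' I).trans ?_))
  · refine mul_le_mul_of_nonneg_left (measureReal_mono ?_) (by positivity)
    intro ω hω
    exact Real.rpow_le_rpow hlam.le (le_of_lt hω) (by positivity)
  · have hn' : (I.card : ℝ) ≤ n := by exact_mod_cast hn
    have i1 : ∫ ω, |f (Y ω)| ^ (2 * q) ≤ ∫ ω, (min |Y ω| t) ^ (2 * q) := by
      refine integral_mono_of_nonneg (Eventually.of_forall fun ω => by positivity)
        (integrable_of_abs_le (hmin.pow_const _) (t ^ (2 * q)) fun ω => ?_)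
        (Eventually.of_forall fun ω => Real.rpow_le_rpow (abs_nonneg _) (hB _) (by positivity))
      have : 0 ≤ min |Y ω| t := le_min (abs_nonneg _) ht
      rw [abs_of_nonneg (by positivity)]
      exact Real.rpow_le_rpow this (min_le_right _ _) (by positivity)
    have i2 : ∫ ω, (f (Y ω)) ^ 2 ≤ ∫ ω, (min |Y ω| t) ^ 2 := by
      refine integral_mono_of_nonneg (Eventually.of_forall fun ω => by positivity)
        (integrable_of_abs_le (hmin.pow_const _) (t ^ 2) fun ω => ?_)
        (Eventually.of_forall fun ω => ?_)
      · have : 0 ≤ min |Y ω| t := le_min (abs_nonneg _) ht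
        rw [abs_of_nonneg (by positivity)]
        exact pow_le_pow_left₀ this (min_le_right _ _) 2
      · change (f (Y ω)) ^ 2 ≤ _
        rw [← sq_abs (f (Y ω))]
        exact pow_le_pow_left₀ (abs_nonneg _) (hB _) 2
    have : 0 ≤ ∫ ω, |f (Y ω)| ^ (2 * q) := integral_nonneg fun ω => by positivity
    have : 0 ≤ ∫ ω, (f (Y ω)) ^ 2 := integral_nonneg fun ω => by positivity
    gcongr

end

/-! ### Maximal deviation of the partial sums over a dyadic rectangle -/

/-- Truncation of the positive part at level `t`. -/
def posTrunc (t x : ℝ) : ℝ := min (max x 0) t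

theorem posTrunc_mono (t : ℝ) : Monotone (posTrunc t) := fun _ _ h =>
  min_le_min_right _ (max_le_max_right _ h)

theorem posTrunc_nonneg {t : ℝ} (ht : 0 ≤ t) (x : ℝ) : 0 ≤ posTrunc t x :=
  le_min (le_max_right _ _) ht

theorem posTrunc_le_min {t : ℝ} (x : ℝ) : posTrunc t x ≤ min |x| t :=
  min_le_min_right _ (max_le (le_abs_self x) (abs_nonneg x))

theorem posTrunc_mono_level {s t : ℝ} (h : s ≤ t) (x : ℝ) : posTrunc s x ≤ posTrunc t x :=
  min_le_min_left _ h

/-- The increment between two truncation levels is still nondecreasing, which is what allows the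
moment bound to be applied to the increments of the chaining argument. -/
theorem posTrunc_sub_mono {s t : ℝ} (h : s ≤ t) :
    Monotone fun x => posTrunc t x - posTrunc s x := by
  intro x y hxy
  have h' : max x 0 ≤ max y 0 := max_le_max_right _ hxy
  simp only [posTrunc]
  rcases min_cases (max x 0) s with ⟨a, _⟩ | ⟨a, _⟩ <;>
  rcases min_cases (max x 0) t with ⟨b, _⟩ | ⟨b, _⟩ <;>
  rcases min_cases (max y 0) s with ⟨c, _⟩ | ⟨c, _⟩ <;>
  rcases min_cases (max y 0) t with ⟨d, _⟩ | ⟨d, _⟩ <;>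
  rw [a, b, c, d] <;> linarith

/-- The mean excess of `|Y|` over the level `t`. -/
def excess {Ω : Type*} [MeasureSpace Ω] (Y : Ω → ℝ) (t : ℝ) : ℝ := ∫ ω, max (|Y ω| - t) 0

/-- The event that some partial sum of the centred positive parts over a rectangle inside
`[0, 2^A) × [0, 2^C)` exceeds `b` in absolute value. -/
def devSet {Ω : Type*} [MeasureSpace Ω] (Y : Ω → ℝ) (ξ : ℕ × ℕ → Ω → ℝ) (A C : ℕ) (b : ℝ) :
    Set Ω :=
  {ω | ∃ u < 2 ^ A, ∃ v < 2 ^ C,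
    b < |∑ P ∈ range u ×ˢ range v, (max (ξ P ω) 0 - ∫ ω', max (Y ω') 0)|}

section

variable {Ω : Type*} [MeasureSpace Ω] [IsProbabilityMeasure (volume : Measure Ω)]
  {q K α : ℝ} {Y : Ω → ℝ} {ξ : ℕ × ℕ → Ω → ℝ} {τ : ℕ → ℝ}

omit [IsProbabilityMeasure (volume : Measure Ω)] in
theorem excess_nonneg (t : ℝ) : 0 ≤ excess Y t := integral_nonneg fun _ => le_max_right _ _

theorem integrable_excess (hY : Integrable Y) (t : ℝ) :
    Integrable fun ω => max (|Y ω| - t) 0 :=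
  (hY.abs.sub (integrable_const t)).pos_part

theorem integral_sub_posTrunc_le (hY : Measurable Y) (hYi : Integrable Y) {t : ℝ} (ht : 0 ≤ t) :
    (∫ ω, max (Y ω) 0) - ∫ ω, posTrunc t (Y ω) ≤ excess Y t := by
  have hi : Integrable fun ω => posTrunc t (Y ω) :=
    integrable_of_abs_le ((posTrunc_mono t).measurable.comp hY) t fun ω => by
      rw [abs_of_nonneg (posTrunc_nonneg ht _)]; exact min_le_right _ _
  rw [← integral_sub hYi.pos_part hi]
  refine integral_mono (hYi.pos_part.sub hi) (integrable_excess hYi t) fun ω => ?_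
  have h1 : max (Y ω) 0 ≤ |Y ω| := max_le (le_abs_self _) (abs_nonneg _)
  simp only [posTrunc]
  rcases min_cases (max (Y ω) 0) t with ⟨a, _⟩ | ⟨a, _⟩
  · rw [a, sub_self]; exact le_max_right _ _
  · rw [a]; exact (sub_le_sub_right h1 t).trans (le_max_left _ _)

/-- The sum of the chaining thresholds `a 2^{-δ (N - s - t)}`. -/
theorem sum_lam_le {δ a G : ℝ} (ha : 0 ≤ a)
    (hG : ∀ n : ℕ, ∑ i ∈ range n, (2 : ℝ) ^ (-(δ * i)) ≤ G) (A C : ℕ) :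
    ∑ st ∈ range (A + 1) ×ˢ range (C + 1),
      a * (2 : ℝ) ^ (-(δ * (((A + C : ℕ) : ℝ) - ((st.1 + st.2 : ℕ) : ℝ)))) ≤ a * G ^ 2 := by
  have hr : ∀ n : ℕ, ∑ s ∈ range (n + 1), (2 : ℝ) ^ (-(δ * ((n : ℝ) - s))) ≤ G := fun n => by
    rw [← Finset.sum_range_reflect]
    refine le_trans (Finset.sum_le_sum fun i hi => ?_) (hG (n + 1))
    have : i ≤ n := by simpa [Nat.lt_succ_iff] using hi
    have e : ((n + 1 - 1 - i : ℕ) : ℝ) = (n : ℝ) - i := by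
      rw [Nat.add_sub_cancel, Nat.cast_sub this]
    rw [e]; apply le_of_eq; ring_nf
  have h0 : ∀ n : ℕ, 0 ≤ ∑ s ∈ range (n + 1), (2 : ℝ) ^ (-(δ * ((n : ℝ) - s))) := fun n =>
    Finset.sum_nonneg fun _ _ => by positivity
  rw [← Finset.mul_sum]
  refine mul_le_mul_of_nonneg_left ?_ ha
  have e : ∀ st : ℕ × ℕ, (2 : ℝ) ^ (-(δ * (((A + C : ℕ) : ℝ) - ((st.1 + st.2 : ℕ) : ℝ)))) =
      (2 : ℝ) ^ (-(δ * ((A : ℝ) - st.1))) * (2 : ℝ) ^ (-(δ * ((C : ℝ) - st.2))) := fun st => by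
    rw [← Real.rpow_add two_pos]; congr 1; push_cast; ring
  rw [Finset.sum_congr rfl fun st _ => e st, Finset.sum_product]
  dsimp only
  rw [← Finset.sum_mul_sum, sq]
  exact mul_le_mul (hr A) (hr C) (h0 C) ((h0 A).trans (hr A))

/-- The pathwise maximal inequality: away from the exceptional block events the deviations of all
partial sums are bounded by the chaining thresholds plus the truncation bias. -/
theorem dev_le (hYm : Measurable Y) (hYi : Integrable Y) (hτ : IsLev α τ) (A C : ℕ)
    {lam : ℕ → ℕ → ℝ} (hlam : ∀ s t, 0 ≤ lam s t) (ω : Ω)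
    (h0 : ∀ P ∈ range (2 ^ A) ×ˢ range (2 ^ C), |ξ P ω| ≤ τ (A + C))
    (h1 : ∀ s t, s ≤ A → t ≤ C → ∀ i < 2 ^ (A - s), ∀ j < 2 ^ (C - t),
      |∑ P ∈ dyad A s i ×ˢ dyad C t j, (posTrunc (τ (s + t + 2)) (ξ P ω) -
        ∫ ω', posTrunc (τ (s + t + 2)) (Y ω'))| ≤ lam s t)
    (h2 : ∀ s t, s ≤ A → t ≤ C → ∀ i < 2 ^ (A - s), ∀ j < 2 ^ (C - t),
      |∑ P ∈ dyad A s i ×ˢ dyad C t j,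
        ((fun x => posTrunc (τ (s + t + 1)) x - posTrunc (τ (s + t)) x) (ξ P ω) -
        ∫ ω', (fun x => posTrunc (τ (s + t + 1)) x - posTrunc (τ (s + t)) x) (Y ω'))| ≤ lam s t)
    {u v : ℕ} (hu : u < 2 ^ A) (hv : v < 2 ^ C) :
    |∑ P ∈ range u ×ˢ range v, (max (ξ P ω) 0 - ∫ ω', max (Y ω') 0)| ≤
      2 * ∑ st ∈ range (A + 1) ×ˢ range (C + 1), lam st.1 st.2 +
        ∑ k ∈ range (A + C + 1), ((k : ℝ) + 1) * 2 ^ k * excess Y (τ k) := by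
  have momInt : ∀ k, Integrable fun ω => posTrunc (τ k) (Y ω) := fun k =>
    integrable_of_abs_le ((posTrunc_mono (τ k)).measurable.comp hYm) (τ k) fun ω => by
      rw [abs_of_nonneg (posTrunc_nonneg (hτ.pos k).le _)]; exact min_le_right _ _
  set e : ℕ → ℝ := fun k => ∫ ω', posTrunc (τ k) (Y ω') with he
  have hmono : ∀ k, e k ≤ e (k + 1) := fun k => integral_mono (momInt k) (momInt (k + 1)) fun ω =>
    posTrunc_mono_level (hτ.mono (Nat.le_succ k)) _
  have hemax : ∀ k, e k ≤ ∫ ω', max (Y ω') 0 := fun k =>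
    integral_mono (momInt k) hYi.pos_part fun ω => min_le_left _ _
  have hex : ∀ k, (∫ ω', max (Y ω') 0) - e k ≤ excess Y (τ k) := fun k =>
    integral_sub_posTrunc_le hYm hYi (hτ.pos k).le
  have key := chain_bound A C u v hu hv (fun k P => posTrunc (τ k) (ξ P ω)) e lam hlam
    (fun k P => posTrunc_mono_level (hτ.mono (Nat.le_succ k)) _) hmono h1 (by
      intro s t hs ht i hi j hj
      have := h2 s t hs ht i hi j hj
      rw [integral_sub (momInt _) (momInt _)] at this
      exact this)
  have hsub : range u ×ˢ range v ⊆ range (2 ^ A) ×ˢ range (2 ^ C) :=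
    Finset.product_subset_product (Finset.range_mono hu.le) (Finset.range_mono hv.le)
  have hsum : ∑ P ∈ range u ×ˢ range v, (max (ξ P ω) 0 - ∫ ω', max (Y ω') 0) =
      ∑ P ∈ range u ×ˢ range v, (posTrunc (τ (A + C)) (ξ P ω) - e (A + C)) -
        ((u * v : ℕ) : ℝ) * ((∫ ω', max (Y ω') 0) - e (A + C)) := by
    have hc : ((u * v : ℕ) : ℝ) * ((∫ ω', max (Y ω') 0) - e (A + C)) =
        ∑ _P ∈ range u ×ˢ range v, ((∫ ω', max (Y ω') 0) - e (A + C)) := by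
      rw [Finset.sum_const, Finset.card_product, Finset.card_range, Finset.card_range,
        nsmul_eq_mul]
    rw [hc, ← Finset.sum_sub_distrib]
    refine Finset.sum_congr rfl fun P hP => ?_
    have : posTrunc (τ (A + C)) (ξ P ω) = max (ξ P ω) 0 :=
      min_eq_left (max_le ((le_abs_self _).trans (h0 P (hsub hP))) (hτ.pos _).le)
    rw [this]; ring
  rw [hsum]
  have huv : ((u * v : ℕ) : ℝ) ≤ ((A + C : ℕ) + 1) * 2 ^ (A + C) := by
    have h : ((u * v : ℕ) : ℝ) ≤ 2 ^ (A + C) := by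
      rw [pow_add]; exact_mod_cast Nat.mul_le_mul hu.le hv.le
    have h' : (0 : ℝ) ≤ ((A + C : ℕ) : ℝ) * 2 ^ (A + C) := by positivity
    linarith
  have hlast : |((u * v : ℕ) : ℝ) * ((∫ ω', max (Y ω') 0) - e (A + C))| ≤
      ((A + C : ℕ) + 1) * 2 ^ (A + C) * excess Y (τ (A + C)) := by
    rw [abs_of_nonneg (mul_nonneg (Nat.cast_nonneg _) (sub_nonneg.2 (hemax _)))]
    exact mul_le_mul huv (hex _) (sub_nonneg.2 (hemax _)) (by positivity)
  have hbias : ∑ k ∈ range (A + C), ((k : ℝ) + 1) * 2 ^ k * (e (k + 1) - e k) ≤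
      ∑ k ∈ range (A + C), ((k : ℝ) + 1) * 2 ^ k * excess Y (τ k) := by
    refine Finset.sum_le_sum fun k _ => mul_le_mul_of_nonneg_left ?_ (by positivity)
    linarith [hex k, hemax (k + 1)]
  rw [Finset.sum_range_succ]
  refine (abs_sub _ _).trans ?_
  linarith

/-- Moments of `|Y|` truncated at the levels `τ r`. -/
def truncMom {Ω : Type*} [MeasureSpace Ω] (Y : Ω → ℝ) (τ : ℕ → ℝ) (a : ℝ) (r : ℕ) : ℝ :=
  ∫ ω, (min |Y ω| (τ r)) ^ a

/-- Union bound over the block events of the chaining argument and over the events that some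
variable exceeds the top level. -/
theorem volume_dev_le (hH : HBound q K Y ξ) (hq : 1 ≤ q) (hYi : Integrable Y) (hτ : IsLev α τ)
    (A C : ℕ) {lam : ℕ → ℕ → ℝ} (hlam : ∀ s t, 0 < lam s t) {b : ℝ}
    (hb : 2 * ∑ st ∈ range (A + 1) ×ˢ range (C + 1), lam st.1 st.2 +
        ∑ k ∈ range (A + C + 1), ((k : ℝ) + 1) * 2 ^ k * excess Y (τ k) ≤ b) :
    (volume : Measure Ω).real (devSet Y ξ A C b) ≤
      2 ^ (A + C) * (volume : Measure Ω).real {ω | τ (A + C) < |Y ω|} +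
      ∑ st ∈ range (A + 1) ×ˢ range (C + 1), 2 ^ (A + C - (st.1 + st.2)) *
        (2 * (K * ((2 ^ (st.1 + st.2) : ℝ) * truncMom Y τ (2 * q) (st.1 + st.2 + 2) +
        (2 ^ (st.1 + st.2) : ℝ) ^ q * truncMom Y τ 2 (st.1 + st.2 + 2) ^ q) /
          lam st.1 st.2 ^ (2 * q))) := by
  classical
  have hYm := hH.measY
  let E0 : ℕ × ℕ → Set Ω := fun P => {ω | τ (A + C) < |ξ P ω|}
  let E1 : ℕ × ℕ → ℕ × ℕ → Set Ω := fun st ij => {ω | lam st.1 st.2 <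
    |∑ P ∈ dyad A st.1 ij.1 ×ˢ dyad C st.2 ij.2, (posTrunc (τ (st.1 + st.2 + 2)) (ξ P ω) -
        ∫ ω', posTrunc (τ (st.1 + st.2 + 2)) (Y ω'))|}
  let E2 : ℕ × ℕ → ℕ × ℕ → Set Ω := fun st ij => {ω | lam st.1 st.2 <
    |∑ P ∈ dyad A st.1 ij.1 ×ˢ dyad C st.2 ij.2,
      ((fun x => posTrunc (τ (st.1 + st.2 + 1)) x - posTrunc (τ (st.1 + st.2)) x) (ξ P ω) -
        ∫ ω', (fun x => posTrunc (τ (st.1 + st.2 + 1)) x - posTrunc (τ (st.1 + st.2)) x) (Y ω'))|}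
  let S := range (A + 1) ×ˢ range (C + 1)
  let B : ℕ × ℕ → Finset (ℕ × ℕ) := fun st => range (2 ^ (A - st.1)) ×ˢ range (2 ^ (C - st.2))
  have hsub : devSet Y ξ A C b ⊆ (⋃ P ∈ range (2 ^ A) ×ˢ range (2 ^ C), E0 P) ∪
      ⋃ st ∈ S, ⋃ ij ∈ B st, (E1 st ij ∪ E2 st ij) := by
    rintro ω ⟨u, hu, v, hv, huv⟩
    by_contra hω
    simp only [Set.mem_union, Set.mem_iUnion, not_or, not_exists] at hω
    obtain ⟨hω0, hω1⟩ := hω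
    refine absurd (dev_le hYm hYi hτ A C (fun s t => (hlam s t).le) ω (ξ := ξ)
      (fun P hP => not_lt.1 (hω0 P hP)) ?_ ?_ hu hv) (not_le.2 (hb.trans_lt huv))
    · intro s t hs ht i hi j hj
      exact not_lt.1 (hω1 (s, t) (by simp [S]; omega) (i, j) (by simp [B]; omega)).1
    · intro s t hs ht i hi j hj
      exact not_lt.1 (hω1 (s, t) (by simp [S]; omega) (i, j) (by simp [B]; omega)).2
  refine (measureReal_mono hsub).trans ((measureReal_union_le _ _).trans (add_le_add ?_ ?_))
  · refine (measureReal_biUnion_finset_le _ _).trans ?_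
    have : ∀ P ∈ range (2 ^ A) ×ˢ range (2 ^ C), (volume : Measure Ω).real (E0 P) =
        (volume : Measure Ω).real {ω | τ (A + C) < |Y ω|} := fun P _ => by
      have := (hH.ident P).measure_mem_eq (s := {x : ℝ | τ (A + C) < |x|})
        (measurableSet_lt measurable_const measurable_abs)
      exact congrArg ENNReal.toReal this
    rw [Finset.sum_congr rfl this, Finset.sum_const, Finset.card_product]
    simp [pow_add]
  · refine (measureReal_biUnion_finset_le _ _).trans (Finset.sum_le_sum fun st hst => ?_)
    have hs : st.1 ≤ A := by simp [S] at hst; omega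
    have ht : st.2 ≤ C := by simp [S] at hst; omega
    have hcard : ∀ ij : ℕ × ℕ, (dyad A st.1 ij.1 ×ˢ dyad C st.2 ij.2).card ≤
        2 ^ (st.1 + st.2) := fun ij => by
      rw [Finset.card_product, pow_add]
      exact Nat.mul_le_mul (card_dyad_le _ _ _) (card_dyad_le _ _ _)
    have hle : ∀ ij ∈ B st, (volume : Measure Ω).real (E1 st ij ∪ E2 st ij) ≤
        2 * (K * ((2 ^ (st.1 + st.2) : ℝ) * truncMom Y τ (2 * q) (st.1 + st.2 + 2) +
        (2 ^ (st.1 + st.2) : ℝ) ^ q * truncMom Y τ 2 (st.1 + st.2 + 2) ^ q) /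
          lam st.1 st.2 ^ (2 * q)) := by
      intro ij _
      have m1 := hH.markov hq (posTrunc_mono (τ (st.1 + st.2 + 2))) (t := τ (st.1 + st.2 + 2))
        (fun x => by
          rw [abs_of_nonneg (posTrunc_nonneg (hτ.pos _).le _)]; exact posTrunc_le_min x)
        _ _ (hcard ij) (hlam st.1 st.2)
      have m2 := hH.markov hq (posTrunc_sub_mono (hτ.mono (Nat.le_succ (st.1 + st.2))))
        (t := τ (st.1 + st.2 + 2)) (fun x => by
          rw [abs_of_nonneg (sub_nonneg.2 (posTrunc_mono_level (hτ.mono (Nat.le_succ _)) _))]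
          have h1 := posTrunc_nonneg (hτ.pos (st.1 + st.2)).le x
          have h2 : posTrunc (τ (st.1 + st.2).succ) x ≤ posTrunc (τ (st.1 + st.2 + 2)) x :=
            posTrunc_mono_level (hτ.mono (by omega)) _
          linarith [posTrunc_le_min (t := τ (st.1 + st.2 + 2)) x])
        _ _ (hcard ij) (hlam st.1 st.2)
      refine (measureReal_union_le _ _).trans ?_
      rw [two_mul]
      refine add_le_add (le_of_le_of_eq m1 ?_) (le_of_le_of_eq m2 ?_) <;>
        simp only [truncMom, Real.rpow_two] <;> push_cast <;> rfl
    refine (measureReal_biUnion_finset_le _ _).trans ((Finset.sum_le_card_nsmul _ _ _ hle).trans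
      (le_of_eq ?_))
    rw [nsmul_eq_mul, Finset.card_product, Finset.card_range, Finset.card_range, ← pow_add,
      show A - st.1 + (C - st.2) = A + C - (st.1 + st.2) by omega]
    push_cast
    rfl

end

/-! ### Truncation bias and truncated moments -/

section

variable {Ω : Type*} [MeasureSpace Ω] [IsProbabilityMeasure (volume : Measure Ω)]
  {q K α p : ℝ} {Y : Ω → ℝ} {ξ : ℕ × ℕ → Ω → ℝ} {τ : ℕ → ℝ}

/-- The mean excess over `τ k` is, after multiplication by `(k + 1) 2 ^ k`, at most `τ k` times a
tail of the convergent series. -/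
theorem excess_le (hα0 : 0 < α) (hα : α ≤ 1) (hαp : 1 ≤ α * p) (hτ : IsLev α τ)
    (hY : Measurable Y)
    (hs : Summable fun j : ℕ => ((j : ℝ) + 1) * (2 : ℝ) ^ (α * p * j) *
      volume.real {ω | τ j < |Y ω|}) (k : ℕ) :
    ((k : ℝ) + 1) * 2 ^ k * excess Y (τ k) ≤ 2 * τ k *
      ∑' j, (((j + k : ℕ) : ℝ) + 1) * (2 : ℝ) ^ (α * p * (j + k : ℕ)) *
        volume.real {ω | τ (j + k) < |Y ω|} := by
  set a : ℕ → ℝ := fun j : ℕ => ((j : ℝ) + 1) * (2 : ℝ) ^ (α * p * j) *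
      volume.real {ω | τ j < |Y ω|} with ha
  have ha0 : ∀ j, 0 ≤ a j := fun j => by positivity
  change _ ≤ 2 * τ k * ∑' j, a (j + k)
  set b : ℕ → ℝ := fun j => if k ≤ j then a j else 0 with hb
  have hbs : Summable b := Summable.of_nonneg_of_le (fun j => by
    simp only [hb]; split_ifs; exacts [ha0 j, le_rfl]) (fun j => by
    simp only [hb]; split_ifs; exacts [le_rfl, ha0 j]) hs
  have hbt : ∑' j, b j = ∑' j, a (j + k) := by
    rw [← hbs.sum_add_tsum_nat_add k, Finset.sum_eq_zero, zero_add]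
    · exact tsum_congr fun j => if_pos (Nat.le_add_left _ _)
    · intro j hj; exact if_neg (not_le.2 (Finset.mem_range.1 hj))
  set m : ℝ := ((k : ℝ) + 1) * 2 ^ k with hm
  have hm0 : 0 < m := by positivity
  let u : ℕ → ℝ := fun j => if k ≤ j then τ (j + 1) else 0
  have hu : ∀ j, 0 ≤ u j := fun j => by
    simp only [u]; split_ifs; exacts [(hτ.pos _).le, le_rfl]
  have hub : ∀ j, u j * volume.real {ω | τ j < |Y ω|} ≤ 2 * τ k / m * b j := fun j => by
    rw [div_mul_eq_mul_div, le_div_iff₀ hm0]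
    simp only [u, hb]
    split_ifs with hkj
    · obtain ⟨i, rfl⟩ := Nat.exists_eq_add_of_le hkj
      have h1 := hτ.up k (i + 1)
      have h2 : (2 : ℝ) ^ k * (2 : ℝ) ^ (α * (i + 1 : ℕ)) ≤
          2 * (2 : ℝ) ^ (α * p * (k + i : ℕ)) := by
        rw [← Real.rpow_natCast, ← Real.rpow_add two_pos]
        rw [show (2 : ℝ) * (2 : ℝ) ^ (α * p * (k + i : ℕ)) =
          (2 : ℝ) ^ (1 + α * p * (k + i : ℕ)) by rw [Real.rpow_add two_pos, Real.rpow_one]]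
        refine Real.rpow_le_rpow_of_exponent_le one_le_two ?_
        push_cast
        have : (k : ℝ) + i ≤ α * p * (k + i) := le_mul_of_one_le_left (by positivity) hαp
        nlinarith [Nat.cast_nonneg (α := ℝ) i]
      have h3 : (k : ℝ) + 1 ≤ ((k + i : ℕ) : ℝ) + 1 := by
        push_cast; linarith [Nat.cast_nonneg (α := ℝ) i]
      have hP : 0 ≤ volume.real {ω | τ (k + i) < |Y ω|} := measureReal_nonneg
      have hτk := (hτ.pos k).le
      simp only [ha]
      calc τ (k + i + 1) * volume.real {ω | τ (k + i) < |Y ω|} * m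
          ≤ (2 : ℝ) ^ (α * (i + 1 : ℕ)) * τ k * volume.real {ω | τ (k + i) < |Y ω|} * m := by
            gcongr; exact h1
        _ = ((2 : ℝ) ^ k * (2 : ℝ) ^ (α * (i + 1 : ℕ))) * ((k : ℝ) + 1) *
              (τ k * volume.real {ω | τ (k + i) < |Y ω|}) := by rw [hm]; ring
        _ ≤ (2 * (2 : ℝ) ^ (α * p * (k + i : ℕ))) * (((k + i : ℕ) : ℝ) + 1) *
              (τ k * volume.real {ω | τ (k + i) < |Y ω|}) := by gcongr
        _ = _ := by ring
    · simp
  have hus : Summable fun j => u j * volume.real {ω | τ j < |Y ω|} :=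
    Summable.of_nonneg_of_le (fun j => mul_nonneg (hu j) measureReal_nonneg) hub
      (hbs.mul_left _)
  have key := (integral_layer hτ hα0 hY (fun x => max (x - τ k) 0) 0 u le_rfl hu
    (by fun_prop) (fun _ _ => le_max_right _ _)
    (fun x _ hx => max_le (by linarith [hτ.mono (Nat.zero_le k)]) le_rfl)
    (fun x J h1 h2 => by
      simp only [u]
      split_ifs with h
      · exact max_le (by linarith [hτ.pos k]) (hτ.pos _).le
      · exact max_le (by linarith [hτ.mono (show J + 1 ≤ k by omega)]) le_rfl) hus).2
  have : excess Y (τ k) ≤ 2 * τ k / m * ∑' j, b j := by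
    rw [zero_add] at key
    refine key.trans ?_
    rw [← tsum_mul_left]
    exact hus.tsum_le_tsum hub (hbs.mul_left _)
  calc m * excess Y (τ k) ≤ m * (2 * τ k / m * ∑' j, b j) := by gcongr
    _ = _ := by rw [hbt]; field_simp

/-- The accumulated truncation bias is negligible against the level `τ N`. -/
theorem bias_small (hα0 : 0 < α) (hα : α ≤ 1) (hαp : 1 ≤ α * p) (hτ : IsLev α τ)
    (hY : Measurable Y)
    (hs : Summable fun j : ℕ => ((j : ℝ) + 1) * (2 : ℝ) ^ (α * p * j) *
      volume.real {ω | τ j < |Y ω|}) {η : ℝ} (hη : 0 < η) :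
    ∃ N0, ∀ N, N0 ≤ N →
      ∑ k ∈ range (N + 1), ((k : ℝ) + 1) * 2 ^ k * excess Y (τ k) ≤ η * τ N := by
  obtain ⟨C, hC, hlow⟩ := hτ.low (α / 2) (by linarith) (by linarith)
  set a : ℕ → ℝ := fun j : ℕ => ((j : ℝ) + 1) * (2 : ℝ) ^ (α * p * j) *
      volume.real {ω | τ j < |Y ω|} with ha
  have ha0 : ∀ j, 0 ≤ a j := fun j => by positivity
  set R : ℕ → ℝ := fun k => ∑' j, a (j + k) with hR
  have hR0 : ∀ k, 0 ≤ R k := fun k => tsum_nonneg fun j => ha0 _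
  have hRlim : Tendsto R atTop (nhds 0) := tendsto_sum_nat_add a
  have hRle : ∀ k, R k ≤ ∑' j, a j := fun k => by
    rw [← hs.sum_add_tsum_nat_add k]
    exact le_add_of_nonneg_left (Finset.sum_nonneg fun j _ => ha0 j)
  set ρ : ℝ := (2 : ℝ) ^ (-(α / 2)) with hρ
  have hρ0 : 0 < ρ := by positivity
  have hρ1 : ρ < 1 := Real.rpow_lt_one_of_one_lt_of_neg one_lt_two (by linarith)
  have hconv : Tendsto (fun N : ℕ => ∑' i, if i ≤ N then ρ ^ i * R (N - i) else 0) atTop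
      (nhds (∑' _ : ℕ, (0 : ℝ))) := by
    refine tendsto_tsum_of_dominated_convergence (bound := fun i => ρ ^ i * ∑' j, a j)
      ((summable_geometric_of_lt_one hρ0.le hρ1).mul_right _) (fun i => ?_)
      (Eventually.of_forall fun N i => ?_)
    · have h1 : Tendsto (fun N => ρ ^ i * R (N - i)) atTop (nhds (ρ ^ i * 0)) :=
        (hRlim.comp (tendsto_sub_atTop_nat i)).const_mul _
      rw [mul_zero] at h1
      refine h1.congr' ?_
      filter_upwards [eventually_ge_atTop i] with N hN
      rw [if_pos hN]
    · split_ifs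
      · rw [Real.norm_of_nonneg (mul_nonneg (by positivity) (hR0 _))]
        exact mul_le_mul_of_nonneg_left (hRle _) (by positivity)
      · rw [norm_zero]
        exact mul_nonneg (by positivity) (tsum_nonneg ha0)
  rw [tsum_zero] at hconv
  have hev := (hconv.const_mul (2 * C)).eventually (gt_mem_nhds (show 2 * C * 0 < η by simpa))
  obtain ⟨N0, hN0⟩ := eventually_atTop.1 hev
  refine ⟨N0, fun N hN => ?_⟩
  have hτN := hτ.pos N
  calc ∑ k ∈ range (N + 1), ((k : ℝ) + 1) * 2 ^ k * excess Y (τ k)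
      ≤ ∑ k ∈ range (N + 1), 2 * C * (ρ ^ (N - k) * R k) * τ N := by
        refine Finset.sum_le_sum fun k hk => (excess_le hα0 hα hαp hτ hY hs k).trans ?_
        have hkN : k ≤ N := by simpa [Nat.lt_succ_iff] using hk
        have h := hlow k (N - k)
        rw [Nat.add_sub_cancel' hkN] at h
        have e : (2 : ℝ) ^ (-(α / 2 * (N - k : ℕ))) = ρ ^ (N - k) := by
          rw [hρ, ← Real.rpow_natCast, ← Real.rpow_mul two_pos.le]; congr 1; ring
        rw [e] at h
        calc 2 * τ k * R k ≤ 2 * (C * ρ ^ (N - k) * τ N) * R k := by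
              have := hR0 k
              gcongr
          _ = _ := by ring
    _ = 2 * C * (∑ i ∈ range (N + 1), ρ ^ i * R (N - i)) * τ N := by
        rw [← Finset.sum_mul, ← Finset.mul_sum]
        congr 2
        rw [← Finset.sum_range_reflect]
        refine Finset.sum_congr rfl fun i hi => ?_
        have hi' : i ≤ N := by simpa [Nat.lt_succ_iff] using hi
        rw [Nat.add_sub_cancel, Nat.sub_sub_self hi']
    _ = 2 * C * (∑' i, if i ≤ N then ρ ^ i * R (N - i) else 0) * τ N := by
        congr 2
        rw [tsum_eq_sum (s := range (N + 1))]
        · refine Finset.sum_congr rfl fun i hi => ?_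
          rw [if_pos (by simpa [Nat.lt_succ_iff] using hi)]
        · intro i hi
          rw [if_neg (by simpa [Nat.lt_succ_iff] using hi)]
    _ ≤ η * τ N := by
        have := (hN0 N hN).le
        gcongr

/-- Tail probabilities along the levels, shifted by one and started at `1`. -/
def tailW {Ω : Type*} [MeasureSpace Ω] (Y : Ω → ℝ) (τ : ℕ → ℝ) : ℕ → ℝ
  | 0 => 1
  | j + 1 => volume.real {ω | τ j < |Y ω|}

omit [IsProbabilityMeasure (volume : Measure Ω)] in
theorem tailW_nonneg (j : ℕ) : 0 ≤ tailW Y τ j := by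
  cases j
  · exact zero_le_one
  · exact measureReal_nonneg

theorem truncMom_integrable {a : ℝ} (ha : 0 < a) (hτ : IsLev α τ) (hY : Measurable Y) (r : ℕ) :
    Integrable fun ω => (min |Y ω| (τ r)) ^ a :=
  integrable_of_abs_le ((hY.abs.min measurable_const).pow_const _) (τ r ^ a) fun ω => by
    have : 0 ≤ min |Y ω| (τ r) := le_min (abs_nonneg _) (hτ.pos r).le
    rw [abs_of_nonneg (by positivity)]
    exact Real.rpow_le_rpow this (min_le_right _ _) ha.le

omit [IsProbabilityMeasure (volume : Measure Ω)] in
theorem truncMom_nonneg {a : ℝ} (hτ : IsLev α τ) (r : ℕ) : 0 ≤ truncMom Y τ a r :=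
  integral_nonneg fun _ => Real.rpow_nonneg (le_min (abs_nonneg _) (hτ.pos r).le) _

/-- Summation by layers for the truncated moments. -/
theorem truncMom_le {a : ℝ} (ha : 0 < a) (hτ : IsLev α τ) (hY : Measurable Y) (r : ℕ) :
    truncMom Y τ a r ≤ ∑ j ∈ range (r + 1), τ j ^ a * tailW Y τ j := by
  induction r with
  | zero =>
    simp only [zero_add, Finset.sum_range_one, tailW, mul_one, truncMom]
    calc ∫ ω, (min |Y ω| (τ 0)) ^ a ≤ ∫ _ : Ω, τ 0 ^ a :=
          integral_mono (truncMom_integrable ha hτ hY 0) (integrable_const _) fun _ =>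
            Real.rpow_le_rpow (le_min (abs_nonneg _) (hτ.pos 0).le) (min_le_right _ _) ha.le
      _ = τ 0 ^ a := by simp
  | succ r ih =>
    rw [Finset.sum_range_succ]
    refine le_trans ?_ (add_le_add_left ih _)
    have hms : MeasurableSet {ω | τ r < |Y ω|} := measurableSet_lt measurable_const hY.abs
    have hi : Integrable ({ω | τ r < |Y ω|}.indicator fun _ => τ (r + 1) ^ a) :=
      (integrable_const _).indicator hms
    have e : τ (r + 1) ^ a * tailW Y τ (r + 1) =
        ∫ ω, {ω | τ r < |Y ω|}.indicator (fun _ => τ (r + 1) ^ a) ω := by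
      rw [integral_indicator_const _ hms, smul_eq_mul, mul_comm]; rfl
    rw [e, truncMom, truncMom, ← integral_add (truncMom_integrable ha hτ hY r) hi]
    refine integral_mono (truncMom_integrable ha hτ hY (r + 1))
      ((truncMom_integrable ha hτ hY r).add hi) fun ω => ?_
    have h0 : 0 ≤ min |Y ω| (τ r) := le_min (abs_nonneg _) (hτ.pos r).le
    have h1 : 0 ≤ min |Y ω| (τ (r + 1)) := le_min (abs_nonneg _) (hτ.pos _).le
    by_cases hω : τ r < |Y ω|
    · simp only [Set.indicator, Set.mem_ofPred_eq, hω, if_true]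
      exact (Real.rpow_le_rpow h1 (min_le_right _ _) ha.le).trans
        (le_add_of_nonneg_left (by positivity))
    · simp only [Set.indicator, Set.mem_ofPred_eq, hω, if_false, add_zero]
      refine Real.rpow_le_rpow h1 ?_ ha.le
      rw [min_eq_left (not_lt.1 hω)]
      exact min_le_left _ _

/-- Lower Potter-type bound for the levels, extended to indices slightly beyond `N`. -/
theorem level_le (hα : α ≤ 1) (hτ : IsLev α τ) {γ : ℝ} (h0 : 0 ≤ γ)
    (h1 : γ < α) : ∃ C : ℝ, 0 < C ∧ ∀ N j : ℕ, j ≤ N + 2 →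
      τ j ≤ C * (2 : ℝ) ^ (-(γ * ((N : ℝ) - j))) * τ N := by
  obtain ⟨C, hC, hlow⟩ := hτ.low γ h0 h1
  refine ⟨max C 4, lt_max_of_lt_left hC, fun N j hj => ?_⟩
  have hτN := (hτ.pos N).le
  rcases le_total j N with h | h
  · have := hlow j (N - j)
    rw [Nat.add_sub_cancel' h, Nat.cast_sub h] at this
    refine this.trans ?_
    gcongr
    exact le_max_left _ _
  · obtain ⟨i, rfl⟩ := Nat.exists_eq_add_of_le h
    refine (hτ.up N i).trans ?_
    refine mul_le_mul_of_nonneg_right ?_ hτN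
    have hi : (i : ℝ) ≤ 2 := by exact_mod_cast (by omega : i ≤ 2)
    have hi0 : (0 : ℝ) ≤ i := Nat.cast_nonneg i
    calc (2 : ℝ) ^ (α * i) ≤ (2 : ℝ) ^ (2 : ℝ) :=
          Real.rpow_le_rpow_of_exponent_le one_le_two (by nlinarith)
      _ = 4 * 1 := by norm_num
      _ ≤ max C 4 * (2 : ℝ) ^ (-(γ * ((N : ℝ) - (N + i : ℕ)))) := by
        gcongr
        · exact le_max_right _ _
        · refine Real.one_le_rpow one_le_two ?_
          push_cast
          nlinarith

end

/-! ### Summable bounds for the deviation probabilities -/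

/-- The bound for the deviation probability over a dyadic rectangle with `2^N` points. -/
def devBound {Ω : Type*} [MeasureSpace Ω] (Y : Ω → ℝ) (τ : ℕ → ℝ) (q γ κ : ℝ) (N : ℕ) : ℝ :=
  2 ^ N * (∑ j ∈ range (N + 3), (2 : ℝ) ^ (-(κ * ((N : ℝ) - j))) * tailW Y τ j) +
    (2 : ℝ) ^ ((q - 2 * q * γ) * N)

section

variable {Ω : Type*} [MeasureSpace Ω] [IsProbabilityMeasure (volume : Measure Ω)]
  {q K α p : ℝ} {Y : Ω → ℝ} {ξ : ℕ × ℕ → Ω → ℝ} {τ : ℕ → ℝ}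

omit [IsProbabilityMeasure (volume : Measure Ω)] in
theorem devBound_nonneg (γ κ : ℝ) (N : ℕ) : 0 ≤ devBound Y τ q γ κ N := by
  have : 0 ≤ ∑ j ∈ range (N + 3), (2 : ℝ) ^ (-(κ * ((N : ℝ) - j))) * tailW Y τ j :=
    Finset.sum_nonneg fun j _ => mul_nonneg (by positivity) (tailW_nonneg j)
  unfold devBound
  positivity

/-- The union bound with thresholds `θ 2^{-δ (N - s - t)} τ N`, `N = A + C`. The first term of the
moment bound is estimated by summation by layers. The second is of the same form if `q = 1`, and
otherwise uses that the truncated second moments are bounded. -/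
theorem volume_dev_le_devBound (hH : HBound q K Y ξ) (hq : 1 ≤ q) (hYi : Integrable Y)
    (hα : α ≤ 1) (hτ : IsLev α τ) {γ δ κ θ G : ℝ} (hγ0 : 0 ≤ γ) (hγ : γ < α) (hδ : 0 < δ)
    (hκ : κ = 2 * q * γ - 4 * q * δ) (hκ0 : 0 ≤ κ)
    (halt : q = 1 ∨ (Integrable (fun ω => Y ω ^ 2) ∧ 4 * q * δ ≤ q - 1))
    (hG : ∀ n : ℕ, ∑ i ∈ range n, (2 : ℝ) ^ (-(δ * i)) ≤ G) (hθ : 0 < θ) :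
    ∃ C0 : ℝ, 0 ≤ C0 ∧ ∀ (A C : ℕ) (b : ℝ), 2 * (θ * τ (A + C) * G ^ 2) +
        ∑ k ∈ range (A + C + 1), ((k : ℝ) + 1) * 2 ^ k * excess Y (τ k) ≤ b →
      (volume : Measure Ω).real (devSet Y ξ A C b) ≤ C0 * devBound Y τ q γ κ (A + C) := by
  obtain ⟨c, hc, hlev⟩ := level_le hα hτ hγ0 hγ
  have hK := hH.nonneg
  have hYm := hH.measY
  have hq0 : 0 < q := by linarith
  set D : ℝ := ∫ ω, Y ω ^ 2 with hD
  have hD0 : 0 ≤ D := integral_nonneg fun ω => sq_nonneg _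
  set c1 : ℝ := c ^ (2 * q) * (2 : ℝ) ^ (8 * q * δ) / θ ^ (2 * q) with hc1
  set c3 : ℝ := D ^ q * (c / τ 0) ^ (2 * q) / θ ^ (2 * q) with hc3
  have hτ0 := hτ.pos 0
  have hc1p : 0 ≤ c1 := by positivity
  have hc3p : 0 ≤ c3 := by positivity
  -- the two terms of the moment bound, relative to the threshold `θ τ_N 2^{-δ(N-r)}`
  have main : ∀ N r : ℕ, r ≤ N →
      (2 : ℝ) ^ (N - r) * (2 * (K * ((2 ^ r : ℝ) * truncMom Y τ (2 * q) (r + 2) +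
        (2 ^ r : ℝ) ^ q * truncMom Y τ 2 (r + 2) ^ q) /
          (θ * τ N * (2 : ℝ) ^ (-(δ * ((N : ℝ) - r)))) ^ (2 * q))) ≤
      2 * K * (2 * c1 + c3) * devBound Y τ q γ κ N * (2 : ℝ) ^ (-(2 * q * δ * ((N : ℝ) - r))) := by
    intro N r hr
    have hτN := hτ.pos N
    have hrN : (r : ℝ) ≤ N := by exact_mod_cast hr
    set S : ℝ := ∑ j ∈ range (N + 3), (2 : ℝ) ^ (-(κ * ((N : ℝ) - j))) * tailW Y τ j with hS
    have hS0 : 0 ≤ S := Finset.sum_nonneg fun j _ => mul_nonneg (by positivity) (tailW_nonneg j)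
    set z : ℝ := (2 : ℝ) ^ (-(2 * q * δ * ((N : ℝ) - r))) with hz
    have hz0 : 0 < z := by positivity
    have hX : (θ * τ N * (2 : ℝ) ^ (-(δ * ((N : ℝ) - r)))) ^ (2 * q) =
        θ ^ (2 * q) * τ N ^ (2 * q) * z := by
      rw [Real.mul_rpow (by positivity) (by positivity), Real.mul_rpow hθ.le hτN.le,
        ← Real.rpow_mul two_pos.le, hz]
      congr 2; ring
    rw [hX]
    have hB : devBound Y τ q γ κ N = 2 ^ N * S + (2 : ℝ) ^ ((q - 2 * q * γ) * N) := rfl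
    have hA : truncMom Y τ (2 * q) (r + 2) ≤ c1 * z * S * (θ ^ (2 * q) * τ N ^ (2 * q) * z) := by
      refine (truncMom_le (by positivity) hτ hYm (r + 2)).trans ?_
      have e : c1 * z * S * (θ ^ (2 * q) * τ N ^ (2 * q) * z) =
          ∑ j ∈ range (N + 3), c ^ (2 * q) * τ N ^ (2 * q) *
            ((2 : ℝ) ^ (8 * q * δ) * z * z * (2 : ℝ) ^ (-(κ * ((N : ℝ) - j)))) * tailW Y τ j := by
        have : ∀ j : ℕ, c ^ (2 * q) * τ N ^ (2 * q) *
            ((2 : ℝ) ^ (8 * q * δ) * z * z * (2 : ℝ) ^ (-(κ * ((N : ℝ) - j)))) * tailW Y τ j =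
            c ^ (2 * q) * τ N ^ (2 * q) * ((2 : ℝ) ^ (8 * q * δ) * z * z) *
              ((2 : ℝ) ^ (-(κ * ((N : ℝ) - j))) * tailW Y τ j) := fun j => by ring
        rw [Finset.sum_congr rfl fun j _ => this j, ← Finset.mul_sum, ← hS, hc1]
        field_simp
      rw [e]
      refine le_trans (Finset.sum_le_sum fun j hj => ?_)
        (Finset.sum_le_sum_of_subset_of_nonneg (Finset.range_mono (by omega : r + 2 + 1 ≤ N + 3))
          fun j _ _ => mul_nonneg (by positivity) (tailW_nonneg j))
      refine mul_le_mul_of_nonneg_right ?_ (tailW_nonneg j)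
      have hj' : j ≤ r + 2 := by simpa [Nat.lt_succ_iff] using hj
      have hjr : (j : ℝ) ≤ r + 2 := by exact_mod_cast hj'
      calc τ j ^ (2 * q) ≤ (c * (2 : ℝ) ^ (-(γ * ((N : ℝ) - j))) * τ N) ^ (2 * q) :=
            Real.rpow_le_rpow (hτ.pos j).le (hlev N j (by omega)) (by positivity)
        _ = c ^ (2 * q) * τ N ^ (2 * q) * (2 : ℝ) ^ (-(γ * ((N : ℝ) - j)) * (2 * q)) := by
            rw [Real.mul_rpow (by positivity) hτN.le, Real.mul_rpow hc.le (by positivity),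
              ← Real.rpow_mul two_pos.le]
            ring
        _ ≤ _ := by
            refine mul_le_mul_of_nonneg_left ?_ (by positivity)
            rw [hz, ← Real.rpow_add two_pos, ← Real.rpow_add two_pos, ← Real.rpow_add two_pos]
            refine Real.rpow_le_rpow_of_exponent_le one_le_two ?_
            rw [hκ]
            have : 0 ≤ 4 * q * δ * ((r : ℝ) + 2 - j) :=
              mul_nonneg (by positivity) (by linarith)
            linarith
    have h2N : (2 : ℝ) ^ (N - r) * 2 ^ r = 2 ^ N := by rw [← pow_add, Nat.sub_add_cancel hr]
    have hfirst : (2 : ℝ) ^ (N - r) * ((2 ^ r : ℝ) * truncMom Y τ (2 * q) (r + 2)) ≤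
        c1 * devBound Y τ q γ κ N * z * (θ ^ (2 * q) * τ N ^ (2 * q) * z) := by
      rw [← mul_assoc, h2N]
      calc (2 : ℝ) ^ N * truncMom Y τ (2 * q) (r + 2)
          ≤ 2 ^ N * (c1 * z * S * (θ ^ (2 * q) * τ N ^ (2 * q) * z)) := by gcongr
        _ = c1 * (2 ^ N * S) * z * (θ ^ (2 * q) * τ N ^ (2 * q) * z) := by ring
        _ ≤ _ := by
          rw [hB]
          gcongr
          exact le_add_of_nonneg_right (by positivity)
    have hsecond : (2 : ℝ) ^ (N - r) * ((2 ^ r : ℝ) ^ q * truncMom Y τ 2 (r + 2) ^ q) ≤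
        (c1 + c3) * devBound Y τ q γ κ N * z * (θ ^ (2 * q) * τ N ^ (2 * q) * z) := by
      have hBn := devBound_nonneg (Y := Y) (τ := τ) (q := q) γ κ N
      rcases halt with h | ⟨hY2, hδq⟩
      · have e : (2 ^ r : ℝ) ^ q * truncMom Y τ 2 (r + 2) ^ q =
            (2 ^ r : ℝ) * truncMom Y τ (2 * q) (r + 2) := by
          rw [h, Real.rpow_one, Real.rpow_one, mul_one]
        rw [e]
        refine hfirst.trans ?_
        gcongr
        linarith
      · have hV : truncMom Y τ 2 (r + 2) ≤ D := by
          refine integral_mono (truncMom_integrable two_pos hτ hYm _) hY2 fun ω => ?_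
          simp only [Real.rpow_two]
          rw [← sq_abs (Y ω)]
          exact pow_le_pow_left₀ (le_min (abs_nonneg _) (hτ.pos _).le) (min_le_left _ _) 2
        have hτc : 1 ≤ c / τ 0 * (2 : ℝ) ^ (-(γ * N)) * τ N := by
          have := hlev N 0 (by omega)
          rw [Nat.cast_zero, sub_zero] at this
          rw [div_mul_eq_mul_div, div_mul_eq_mul_div, le_div_iff₀ hτ0, one_mul]
          exact this
        have hτq : 1 ≤ (c / τ 0) ^ (2 * q) * (2 : ℝ) ^ (-(γ * N) * (2 * q)) * τ N ^ (2 * q) := by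
          have := Real.one_le_rpow hτc (show 0 ≤ 2 * q by positivity)
          rwa [Real.mul_rpow (by positivity) hτN.le, Real.mul_rpow (by positivity) (by positivity),
            ← Real.rpow_mul two_pos.le] at this
        have e2 : (2 : ℝ) ^ (N - r) * (2 ^ r : ℝ) ^ q = (2 : ℝ) ^ ((N : ℝ) - r + r * q) := by
          rw [← Real.rpow_natCast 2 r, ← Real.rpow_mul two_pos.le, ← Real.rpow_natCast,
            ← Real.rpow_add two_pos, Nat.cast_sub hr]
        calc (2 : ℝ) ^ (N - r) * ((2 ^ r : ℝ) ^ q * truncMom Y τ 2 (r + 2) ^ q)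
            = (2 : ℝ) ^ ((N : ℝ) - r + r * q) * truncMom Y τ 2 (r + 2) ^ q := by
              rw [← mul_assoc, e2]
          _ ≤ (2 : ℝ) ^ ((N : ℝ) - r + r * q) * D ^ q * 1 := by
              rw [mul_one]
              have := truncMom_nonneg (Y := Y) (a := 2) hτ (r + 2)
              gcongr
          _ ≤ (2 : ℝ) ^ ((N : ℝ) - r + r * q) * D ^ q *
              ((c / τ 0) ^ (2 * q) * (2 : ℝ) ^ (-(γ * N) * (2 * q)) * τ N ^ (2 * q)) := by
              gcongr
          _ = D ^ q * (c / τ 0) ^ (2 * q) * τ N ^ (2 * q) *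
              ((2 : ℝ) ^ ((N : ℝ) - r + r * q) * (2 : ℝ) ^ (-(γ * N) * (2 * q))) := by ring
          _ ≤ D ^ q * (c / τ 0) ^ (2 * q) * τ N ^ (2 * q) *
              ((2 : ℝ) ^ ((q - 2 * q * γ) * N) * z * z) := by
              refine mul_le_mul_of_nonneg_left ?_ (by positivity)
              rw [hz, ← Real.rpow_add two_pos, ← Real.rpow_add two_pos, ← Real.rpow_add two_pos]
              refine Real.rpow_le_rpow_of_exponent_le one_le_two ?_
              have : 0 ≤ (q - 1 - 4 * q * δ) * ((N : ℝ) - r) :=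
                mul_nonneg (by linarith) (by linarith)
              linarith
          _ = c3 * (2 : ℝ) ^ ((q - 2 * q * γ) * N) * z * (θ ^ (2 * q) * τ N ^ (2 * q) * z) := by
              rw [hc3]; field_simp
          _ ≤ _ := by
              have : (2 : ℝ) ^ ((q - 2 * q * γ) * N) ≤ devBound Y τ q γ κ N := by
                rw [hB]; exact le_add_of_nonneg_left (by positivity)
              gcongr
              linarith
    have hXp : 0 < θ ^ (2 * q) * τ N ^ (2 * q) * z := by positivity
    calc (2 : ℝ) ^ (N - r) * (2 * (K * ((2 ^ r : ℝ) * truncMom Y τ (2 * q) (r + 2) +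
          (2 ^ r : ℝ) ^ q * truncMom Y τ 2 (r + 2) ^ q) / (θ ^ (2 * q) * τ N ^ (2 * q) * z)))
        = 2 * K * ((2 : ℝ) ^ (N - r) * ((2 ^ r : ℝ) * truncMom Y τ (2 * q) (r + 2)) +
          (2 : ℝ) ^ (N - r) * ((2 ^ r : ℝ) ^ q * truncMom Y τ 2 (r + 2) ^ q)) /
            (θ ^ (2 * q) * τ N ^ (2 * q) * z) := by ring
      _ ≤ _ := by
        rw [div_le_iff₀ hXp]
        calc _ ≤ 2 * K * (c1 * devBound Y τ q γ κ N * z * (θ ^ (2 * q) * τ N ^ (2 * q) * z) +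
              (c1 + c3) * devBound Y τ q γ κ N * z * (θ ^ (2 * q) * τ N ^ (2 * q) * z)) := by
              gcongr
          _ = _ := by ring
  refine ⟨1 + 2 * K * (2 * c1 + c3) * G ^ 2, by positivity, fun A C b hb => ?_⟩
  set N := A + C with hN
  have hBn := devBound_nonneg (Y := Y) (τ := τ) (q := q) γ κ N
  have hτN := hτ.pos N
  have hG2 : ∀ n : ℕ, ∑ i ∈ range n, (2 : ℝ) ^ (-(2 * q * δ * i)) ≤ G := fun n => by
    refine le_trans (Finset.sum_le_sum fun i _ => ?_) (hG n)
    refine Real.rpow_le_rpow_of_exponent_le one_le_two (neg_le_neg ?_)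
    refine mul_le_mul_of_nonneg_right ?_ (Nat.cast_nonneg i)
    nlinarith
  have hlamsum := sum_lam_le (a := θ * τ N) (by positivity) hG A C
  refine (volume_dev_le hH hq hYi hτ A C
    (lam := fun s t => θ * τ N * (2 : ℝ) ^ (-(δ * (((A + C : ℕ) : ℝ) - ((s + t : ℕ) : ℝ)))))
    (fun s t => by positivity) (b := b) ?_).trans ?_
  · refine le_trans ?_ hb
    gcongr
  rw [add_mul, one_mul]
  refine add_le_add ?_ ?_
  · unfold devBound
    refine le_trans ?_ (le_add_of_nonneg_right (by positivity))
    refine mul_le_mul_of_nonneg_left ?_ (by positivity)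
    have h1 : (2 : ℝ) ^ (-(κ * ((N : ℝ) - (N + 1 : ℕ)))) * tailW Y τ (N + 1) ≤
        ∑ j ∈ range (N + 3), (2 : ℝ) ^ (-(κ * ((N : ℝ) - j))) * tailW Y τ j :=
      Finset.single_le_sum (f := fun j : ℕ => (2 : ℝ) ^ (-(κ * ((N : ℝ) - j))) * tailW Y τ j)
        (fun j _ => mul_nonneg (by positivity) (tailW_nonneg j)) (by simp)
    refine le_trans ?_ h1
    change volume.real {ω | τ N < |Y ω|} ≤ _ * volume.real {ω | τ N < |Y ω|}
    refine le_mul_of_one_le_left measureReal_nonneg (Real.one_le_rpow one_le_two ?_)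
    push_cast
    linarith
  · have hz := sum_lam_le (a := 2 * K * (2 * c1 + c3) * devBound Y τ q γ κ N) (by positivity)
      hG2 A C
    refine le_trans (Finset.sum_le_sum fun st hst => ?_) (hz.trans (le_of_eq (by ring)))
    have hle : st.1 + st.2 ≤ N := by
      simp only [Finset.mem_product, Finset.mem_range] at hst; omega
    exact main N (st.1 + st.2) hle

theorem summable_exp_decay {η : ℝ} (hη : 0 < η) :
    Summable fun N : ℕ => ((N : ℝ) + 1) * (2 : ℝ) ^ (-(η * N)) := by
  have hr1 : (2 : ℝ) ^ (-η) < 1 := Real.rpow_lt_one_of_one_lt_of_neg one_lt_two (by linarith)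
  have hr0 : (0 : ℝ) < (2 : ℝ) ^ (-η) := by positivity
  have hn : ‖(2 : ℝ) ^ (-η)‖ < 1 := by rwa [Real.norm_of_nonneg hr0.le]
  have h1 := summable_pow_mul_geometric_of_norm_lt_one 1 hn
  have h2 := summable_geometric_of_lt_one hr0.le hr1
  refine (h1.add h2).congr fun N => ?_
  rw [← neg_mul, Real.rpow_mul two_pos.le, Real.rpow_natCast]
  ring

omit [IsProbabilityMeasure (volume : Measure Ω)] in
/-- With the weights of the theorem, the first part of `devBound` is a discrete convolution of the
summable tail sequence with a geometric sequence. -/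
theorem devBound_summable {γ κ : ℝ} (hκ : α * p < κ) (hη : α * p - 1 + q - 2 * q * γ < 0)
    (hs : Summable fun j : ℕ => ((j : ℝ) + 1) * (2 : ℝ) ^ (α * p * j) *
      volume.real {ω | τ j < |Y ω|}) (hp : 0 ≤ α * p) :
    Summable fun N : ℕ => ((N : ℝ) + 1) * ((2 : ℝ) ^ ((α * p - 1) * N) *
      devBound Y τ q γ κ N) := by
  let f : ℕ → ℝ := fun j => ((j : ℝ) + 1) * (2 : ℝ) ^ (α * p * j) * tailW Y τ j
  let g : ℕ → ℝ := fun i => ((i : ℝ) + 1) * (2 : ℝ) ^ (-((κ - α * p) * i))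
  have hf0 : ∀ j, 0 ≤ f j := fun j => mul_nonneg (by positivity) (tailW_nonneg j)
  have hg0 : ∀ j, 0 ≤ g j := fun j => by positivity
  have hf : Summable f := by
    rw [← summable_nat_add_iff 1]
    refine Summable.of_nonneg_of_le (fun j => hf0 _) (fun j => ?_)
      (hs.mul_left (2 * (2 : ℝ) ^ (α * p)))
    change (((j + 1 : ℕ) : ℝ) + 1) * (2 : ℝ) ^ (α * p * (j + 1 : ℕ)) *
      volume.real {ω | τ j < |Y ω|} ≤ _
    rw [← mul_assoc]
    refine mul_le_mul_of_nonneg_right ?_ measureReal_nonneg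
    have e : (2 : ℝ) ^ (α * p * (j + 1 : ℕ)) = (2 : ℝ) ^ (α * p) * (2 : ℝ) ^ (α * p * j) := by
      rw [← Real.rpow_add two_pos]; congr 1; push_cast; ring
    rw [e]
    have : (((j + 1 : ℕ) : ℝ) + 1) ≤ 2 * ((j : ℝ) + 1) := by
      push_cast; linarith [Nat.cast_nonneg (α := ℝ) j]
    calc _ ≤ 2 * ((j : ℝ) + 1) * ((2 : ℝ) ^ (α * p) * (2 : ℝ) ^ (α * p * j)) := by gcongr
      _ = _ := by ring
  have hg : Summable g := summable_exp_decay (by linarith)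
  have hfg := summable_sum_mul_antidiagonal_of_summable_mul
    (hf.mul_of_nonneg hg hf0 hg0)
  have h1 := ((summable_nat_add_iff 2).2 hfg).mul_left ((2 : ℝ) ^ (2 * κ))
  have h2 := summable_exp_decay (η := -(α * p - 1 + q - 2 * q * γ)) (by linarith)
  refine Summable.of_nonneg_of_le (fun N => mul_nonneg (by positivity) (mul_nonneg (by positivity)
    (devBound_nonneg γ κ N))) (fun N => ?_) (h1.add h2)
  unfold devBound
  rw [mul_add, mul_add]
  refine add_le_add ?_ (le_of_eq ?_)
  · rw [Finset.Nat.sum_antidiagonal_eq_sum_range_succ_mk, Finset.mul_sum (a := (2 : ℝ) ^ (2 * κ))]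
    have e : (2 : ℝ) ^ ((α * p - 1) * N) * 2 ^ N = (2 : ℝ) ^ (α * p * N) := by
      rw [← Real.rpow_natCast, ← Real.rpow_add two_pos]; congr 1; ring
    rw [← mul_assoc ((2 : ℝ) ^ ((α * p - 1) * N)), e, ← mul_assoc, Finset.mul_sum]
    refine Finset.sum_le_sum fun j hj => ?_
    have hj' : j ≤ N + 2 := by simpa [Nat.lt_succ_iff] using hj
    obtain ⟨i, hi⟩ := Nat.exists_eq_add_of_le hj'
    have hi' : N + 2 - j = i := by omega
    have hir : (N : ℝ) + 2 = j + i := by exact_mod_cast hi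
    simp only [f, g, hi']
    have hexp : (2 : ℝ) ^ (α * p * N) * (2 : ℝ) ^ (-(κ * ((N : ℝ) - j))) ≤
        (2 : ℝ) ^ (2 * κ) * ((2 : ℝ) ^ (α * p * j) * (2 : ℝ) ^ (-((κ - α * p) * i))) := by
      rw [← Real.rpow_add two_pos, ← Real.rpow_add two_pos, ← Real.rpow_add two_pos]
      refine Real.rpow_le_rpow_of_exponent_le one_le_two ?_
      have : (N : ℝ) = j + i - 2 := by linarith
      rw [this]
      nlinarith
    have hcoef : (N : ℝ) + 1 ≤ ((j : ℝ) + 1) * ((i : ℝ) + 1) := by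
      have : 0 ≤ (j : ℝ) * i := by positivity
      nlinarith
    have hw := tailW_nonneg (Y := Y) (τ := τ) j
    calc ((N : ℝ) + 1) * (2 : ℝ) ^ (α * p * N) *
          ((2 : ℝ) ^ (-(κ * ((N : ℝ) - j))) * tailW Y τ j)
        = ((N : ℝ) + 1) * ((2 : ℝ) ^ (α * p * N) * (2 : ℝ) ^ (-(κ * ((N : ℝ) - j)))) *
          tailW Y τ j := by ring
      _ ≤ (((j : ℝ) + 1) * ((i : ℝ) + 1)) * ((2 : ℝ) ^ (2 * κ) *
          ((2 : ℝ) ^ (α * p * j) * (2 : ℝ) ^ (-((κ - α * p) * i)))) * tailW Y τ j := by gcongr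
      _ = _ := by ring
  · rw [← Real.rpow_add two_pos]
    congr 2
    ring

end

/-- The event that some partial sum of `ξ - m` over a rectangle inside `[0, 2^A) × [0, 2^C)`
exceeds `b` in absolute value. -/
def sumSet {Ω : Type*} (m : ℝ) (ξ : ℕ × ℕ → Ω → ℝ) (A C : ℕ) (b : ℝ) : Set Ω :=
  {ω | ∃ u < 2 ^ A, ∃ v < 2 ^ C, b < |∑ P ∈ range u ×ˢ range v, (ξ P ω - m)|}

section

variable {Ω : Type*} [MeasureSpace Ω] [IsProbabilityMeasure (volume : Measure Ω)]
  {q K α p : ℝ} {Y : Ω → ℝ} {ξ : ℕ × ℕ → Ω → ℝ} {τ : ℕ → ℝ}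

/-- Summability of the deviation probabilities for the centred positive parts. -/
theorem dev_summable (hα1 : 1 / 2 < α) (hα2 : α ≤ 1) (hαp : 1 ≤ α * p)
    (hq1 : 1 ≤ q) (hq2 : p < 2 → q = 1) (hq3 : 2 ≤ p → (α * p - 1) / (2 * α - 1) < q)
    (hH : HBound q K Y ξ) (hτ : IsLev α τ) (hYi : Integrable Y)
    (hY2 : 2 ≤ p → Integrable fun ω => Y ω ^ 2)
    (hs : Summable fun j : ℕ => ((j : ℝ) + 1) * (2 : ℝ) ^ (α * p * j) *
      volume.real {ω | τ j < |Y ω|}) {ε : ℝ} (hε : 0 < ε) :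
    ∃ (N0 : ℕ) (F : ℕ → ℝ), (∀ n, 0 ≤ F n) ∧ (Summable fun n : ℕ => ((n : ℝ) + 1) * F n) ∧
      ∀ A C : ℕ, N0 ≤ A + C → (2 : ℝ) ^ ((α * p - 1) * (A + C : ℕ)) *
        (volume : Measure Ω).real (devSet Y ξ A C (ε * τ (A + C))) ≤ F (A + C) := by
  -- the exponents `γ = α - t` and `δ = t` work for every small enough `t > 0`
  have hgap : α * p < 2 * q * α ∧ α * p - 1 < q * (2 * α - 1) ∧ (q = 1 ∨ (2 ≤ p ∧ 1 < q)) := by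
    rcases lt_or_ge p 2 with h | h
    · have := hq2 h
      subst this
      refine ⟨by nlinarith, by nlinarith, Or.inl rfl⟩
    · have h1 := hq3 h
      rw [div_lt_iff₀ (by linarith)] at h1
      have h2 : p / 2 < q := by
        refine lt_of_mul_lt_mul_right (lt_of_le_of_lt ?_ h1) (show 0 ≤ 2 * α - 1 by linarith)
        nlinarith
      exact ⟨by nlinarith, h1, Or.inr ⟨h, by linarith⟩⟩
  obtain ⟨hg1, hg2, hg3⟩ := hgap
  have hq0 : 0 < q := by linarith
  obtain ⟨t, ht0, htα, ht1, ht2, ht3⟩ : ∃ t : ℝ, 0 < t ∧ t ≤ α ∧ 6 * q * t < 2 * q * α - α * p ∧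
      2 * q * t < q * (2 * α - 1) - (α * p - 1) ∧ (q = 1 ∨ (2 ≤ p ∧ 4 * q * t ≤ q - 1)) := by
    have hev : ∀ (c d : ℝ), 0 < d → ∀ᶠ t : ℝ in nhdsWithin 0 (Set.Ioi 0), c * t < d :=
      fun c d hd => by
        have : Tendsto (fun t : ℝ => c * t) (nhdsWithin 0 (Set.Ioi 0)) (nhds (c * 0)) :=
          ((continuous_const_mul c).tendsto 0).mono_left nhdsWithin_le_nhds
        exact this.eventually (gt_mem_nhds (by simpa using hd))
    have hpos : ∀ᶠ t : ℝ in nhdsWithin 0 (Set.Ioi 0), 0 < t := self_mem_nhdsWithin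
    have hlast : ∀ᶠ t : ℝ in nhdsWithin 0 (Set.Ioi 0),
        (q = 1 ∨ (2 ≤ p ∧ 4 * q * t ≤ q - 1)) := by
      rcases hg3 with h | ⟨h, h'⟩
      · exact Eventually.of_forall fun _ => Or.inl h
      · filter_upwards [hev (4 * q) (q - 1) (by linarith)] with t ht
        exact Or.inr ⟨h, ht.le⟩
    obtain ⟨t, h1, h2, h3, h4, h5⟩ := (hpos.and ((hev 1 α (by linarith)).and
      ((hev (6 * q) (2 * q * α - α * p) (by linarith)).and
      ((hev (2 * q) (q * (2 * α - 1) - (α * p - 1)) (by linarith)).and hlast)))).exists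
    exact ⟨t, h1, by linarith, h3, h4, h5⟩
  have hsum : Summable fun i : ℕ => (2 : ℝ) ^ (-(t * i)) := by
    refine Summable.of_nonneg_of_le (fun i => by positivity) (fun i => ?_)
      (summable_exp_decay ht0)
    exact le_mul_of_one_le_left (by positivity) (by linarith [Nat.cast_nonneg (α := ℝ) i])
  set G : ℝ := ∑' i : ℕ, (2 : ℝ) ^ (-(t * i)) with hG
  have hGn : ∀ n : ℕ, ∑ i ∈ range n, (2 : ℝ) ^ (-(t * i)) ≤ G := fun n =>
    hsum.sum_le_tsum _ fun i _ => by positivity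
  set θ : ℝ := ε / (4 * (G ^ 2 + 1)) with hθ
  have hθ0 : 0 < θ := by positivity
  have hθG : 2 * (θ * G ^ 2) ≤ ε / 2 := by
    rw [hθ, div_mul_eq_mul_div, ← mul_div_assoc, div_le_iff₀ (by positivity)]
    nlinarith
  have hκ0 : α * p < 2 * q * (α - t) - 4 * q * t := by nlinarith
  obtain ⟨C0, hC0, hbd⟩ := volume_dev_le_devBound hH hq1 hYi hα2 hτ (γ := α - t) (δ := t)
    (κ := 2 * q * (α - t) - 4 * q * t) (θ := θ) (G := G) (by linarith) (by linarith) ht0 rfl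
    (by linarith) (ht3.imp_right fun h => ⟨hY2 h.1, h.2⟩) hGn hθ0
  obtain ⟨N0, hN0⟩ := bias_small (by linarith) hα2 hαp hτ hH.measY hs
    (show 0 < ε / 2 by positivity)
  refine ⟨N0, fun N => C0 * ((2 : ℝ) ^ ((α * p - 1) * N) *
    devBound Y τ q (α - t) (2 * q * (α - t) - 4 * q * t) N), fun N =>
    mul_nonneg hC0 (mul_nonneg (by positivity) (devBound_nonneg _ _ _)), ?_, fun A C hAC => ?_⟩
  · refine ((devBound_summable hκ0 (q := q) (γ := α - t) (by linarith) hs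
      (by linarith)).mul_left C0).congr fun N => by ring
  · have hτN := (hτ.pos (A + C)).le
    have := hbd A C (ε * τ (A + C)) (by
      have h1 := hN0 (A + C) hAC
      have h2 : 2 * (θ * τ (A + C) * G ^ 2) ≤ ε / 2 * τ (A + C) := by
        calc 2 * (θ * τ (A + C) * G ^ 2) = 2 * (θ * G ^ 2) * τ (A + C) := by ring
          _ ≤ _ := by gcongr
      linarith)
    calc _ ≤ (2 : ℝ) ^ ((α * p - 1) * (A + C : ℕ)) * (C0 * devBound Y τ q (α - t)
          (2 * q * (α - t) - 4 * q * t) (A + C)) := by gcongr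
      _ = _ := by ring

/-- Summability of the deviation probabilities of the centred partial sums over dyadic
rectangles. -/
theorem sum_summable (hα1 : 1 / 2 < α) (hα2 : α ≤ 1) (hαp : 1 ≤ α * p)
    (hq1 : 1 ≤ q) (hq2 : p < 2 → q = 1) (hq3 : 2 ≤ p → (α * p - 1) / (2 * α - 1) < q)
    (hH : HBound q K Y ξ) (hτ : IsLev α τ) (hYi : Integrable Y)
    (hY2 : 2 ≤ p → Integrable fun ω => Y ω ^ 2)
    (hs : Summable fun j : ℕ => ((j : ℝ) + 1) * (2 : ℝ) ^ (α * p * j) *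
      volume.real {ω | τ j < |Y ω|}) {ε : ℝ} (hε : 0 < ε) :
    ∃ (N0 : ℕ) (F : ℕ → ℝ), (∀ n, 0 ≤ F n) ∧ (Summable fun n : ℕ => ((n : ℝ) + 1) * F n) ∧
      ∀ A C : ℕ, N0 ≤ A + C → (2 : ℝ) ^ ((α * p - 1) * (A + C : ℕ)) *
        (volume : Measure Ω).real (sumSet (∫ ω, Y ω) ξ A C (ε * τ (A + C))) ≤ F (A + C) := by
  obtain ⟨N1, F1, hF1, hs1, h1⟩ := dev_summable hα1 hα2 hαp hq1 hq2 hq3 hH hτ hYi hY2 hs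
    (half_pos hε)
  obtain ⟨N2, F2, hF2, hs2, h2⟩ := dev_summable hα1 hα2 hαp hq1 hq2 hq3 hH.neg hτ hYi.neg
    (fun h => by simpa using hY2 h) (by simpa using hs) (half_pos hε)
  refine ⟨max N1 N2, fun n => F1 n + F2 n, fun n => add_nonneg (hF1 n) (hF2 n),
    (hs1.add hs2).congr fun n => by ring, fun A C hAC => ?_⟩
  refine le_trans ?_ (add_le_add (h1 A C (le_of_max_le_left hAC)) (h2 A C (le_of_max_le_right hAC)))
  rw [← mul_add]
  refine mul_le_mul_of_nonneg_left ((measureReal_mono ?_).trans (measureReal_union_le _ _))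
    (by positivity)
  rintro ω ⟨u, hu, v, hv, huv⟩
  by_contra hω
  simp only [Set.mem_union, devSet, Set.mem_ofPred_eq, not_or, not_exists, not_and,
    not_lt] at hω
  have a1 := hω.1 u hu v hv
  have a2 := hω.2 u hu v hv
  have hi : ∫ ω, Y ω = (∫ ω, max (Y ω) 0) - ∫ ω, max (-Y ω) 0 := by
    rw [← integral_sub hYi.pos_part hYi.neg_part]
    exact integral_congr_ae (Eventually.of_forall fun ω => by
      change Y ω = max (Y ω) 0 - max (-Y ω) 0
      rcases le_total 0 (Y ω) with h | h
      · rw [max_eq_left h, max_eq_right (by linarith), sub_zero]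
      · rw [max_eq_right h, max_eq_left (by linarith)]; ring)
  have hsum : ∑ P ∈ range u ×ˢ range v, (ξ P ω - ∫ ω, Y ω) =
      ∑ P ∈ range u ×ˢ range v, (max (ξ P ω) 0 - ∫ ω, max (Y ω) 0) -
        ∑ P ∈ range u ×ˢ range v, (max (-ξ P ω) 0 - ∫ ω, max (-Y ω) 0) := by
    rw [← Finset.sum_sub_distrib]
    refine Finset.sum_congr rfl fun P _ => ?_
    have : ξ P ω = max (ξ P ω) 0 - max (-ξ P ω) 0 := by
      rcases le_total 0 (ξ P ω) with h | h
      · rw [max_eq_left h, max_eq_right (by linarith), sub_zero]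
      · rw [max_eq_right h, max_eq_left (by linarith)]; ring
    rw [hi]
    linarith
  rw [hsum] at huv
  have := abs_sub (∑ P ∈ range u ×ˢ range v, (max (ξ P ω) 0 - ∫ ω, max (Y ω) 0))
    (∑ P ∈ range u ×ˢ range v, (max (-ξ P ω) 0 - ∫ ω, max (-Y ω) 0))
  linarith

end

/-! ### Lower bound for the maximum of the field -/

section

variable {Ω : Type*} [MeasureSpace Ω] [IsProbabilityMeasure (volume : Measure Ω)]
  {q K : ℝ} {Y : Ω → ℝ} {ξ : ℕ × ℕ → Ω → ℝ}

/-- If the expected number `μ` of exceedances is at most one, then `μ` is controlled by the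
probability of an exceedance: the moment bound applied to the indicator of `(t, ∞)` prevents
the exceedances from clustering. -/
theorem HBound.exceed_of_le_one (h : HBound q K Y ξ) (hq : 1 ≤ q) (t : ℝ) (I : Finset (ℕ × ℕ))
    (hμ : (I.card : ℝ) * (volume : Measure Ω).real {ω | t < Y ω} ≤ 1) :
    (I.card : ℝ) * (volume : Measure Ω).real {ω | t < Y ω} ≤
      (4 + 8 * K) * (volume : Measure Ω).real {ω | ∃ k ∈ I, t < ξ k ω} := by
  have hK := h.nonneg
  set P := (volume : Measure Ω).real {ω | t < Y ω} with hP
  have hP0 : 0 ≤ P := measureReal_nonneg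
  set μ := (I.card : ℝ) * P with hμdef
  have hμ0 : 0 ≤ μ := by positivity
  let f : ℝ → ℝ := (Set.Ioi t).indicator fun _ => 1
  have hf : Monotone f := fun x y hxy => by
    by_cases hx : t < x
    · have hy : t < y := hx.trans_le hxy
      simp [f, hx, hy]
    · simp only [f, Set.indicator, Set.mem_Ioi, hx, if_false]
      split_ifs <;> norm_num
  have hf1 : ∀ x, |f x| ≤ 1 := fun x => by
    simp only [f, Set.indicator]; split_ifs <;> norm_num
  have hmY : MeasurableSet {ω | t < Y ω} := measurableSet_lt measurable_const h.measY
  have hfY : ∀ ω, f (Y ω) = {ω | t < Y ω}.indicator (fun _ => (1 : ℝ)) ω := fun ω => rfl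
  have hI : ∫ ω, f (Y ω) = P := by
    simp only [hfY]
    rw [integral_indicator_const _ hmY, smul_eq_mul, mul_one]
  have hI2 : ∫ ω, (f (Y ω)) ^ 2 = P := by
    rw [← hI]
    refine integral_congr_ae (Eventually.of_forall fun ω => ?_)
    simp only [f, Set.indicator]; split_ifs <;> norm_num
  have hIq : ∫ ω, |f (Y ω)| ^ (2 * q) = P := by
    rw [← hI]
    refine integral_congr_ae (Eventually.of_forall fun ω => ?_)
    have : 2 * q ≠ 0 := by positivity
    simp only [f, Set.indicator]; split_ifs <;> simp [Real.zero_rpow this]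
  have key := h.bound f 1 hf hf1 I
  rw [hI, hI2, hIq, ← Real.mul_rpow (Nat.cast_nonneg _) hP0] at key
  have hμq : μ ^ q ≤ μ := by
    calc μ ^ q ≤ μ ^ (1 : ℝ) := Real.rpow_le_rpow_of_exponent_ge' hμ0 hμ zero_le_one hq
      _ = μ := Real.rpow_one μ
  have key' : ∫ ω, |∑ k ∈ I, (f (ξ k ω) - P)| ^ (2 * q) ≤ K * (2 * μ) :=
    key.trans (by gcongr; linarith)
  set U : Set Ω := {ω | ∃ k ∈ I, t < ξ k ω} with hU
  have hUm : MeasurableSet U := by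
    have : U = ⋃ k ∈ I, {ω | t < ξ k ω} := by ext ω; simp [hU]
    rw [this]
    exact Finset.measurableSet_biUnion _ fun k _ => measurableSet_lt measurable_const (h.meas k)
  set a : ℝ := 1 + 4 * K with ha
  have ha1 : 1 ≤ a := by linarith
  have hpt : ∀ ω, ∑ k ∈ I, f (ξ k ω) ≤
      (a + 1) * U.indicator (fun _ => (1 : ℝ)) ω +
        a⁻¹ * |∑ k ∈ I, (f (ξ k ω) - P)| ^ (2 * q) := by
    intro ω
    set x := |∑ k ∈ I, (f (ξ k ω) - P)| with hx
    have hx0 : 0 ≤ x := abs_nonneg _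
    by_cases hω : ω ∈ U
    · rw [Set.indicator_of_mem hω, mul_one]
      have hN : ∑ k ∈ I, f (ξ k ω) ≤ x + 1 := by
        have : ∑ k ∈ I, (f (ξ k ω) - P) = ∑ k ∈ I, f (ξ k ω) - μ := by
          rw [Finset.sum_sub_distrib, Finset.sum_const, nsmul_eq_mul]
        have h2 := le_abs_self (∑ k ∈ I, (f (ξ k ω) - P))
        rw [this] at h2
        rw [hx, this]
        linarith
      -- a value exceeding `a` is dominated by its power
      rcases le_total x a with hxa | hxa
      · have : 0 ≤ a⁻¹ * x ^ (2 * q) := by positivity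
        linarith
      · have h1 : x ^ (2 : ℝ) ≤ x ^ (2 * q) :=
          Real.rpow_le_rpow_of_exponent_le (ha1.trans hxa) (by linarith)
        rw [Real.rpow_two] at h1
        have h2 : x ≤ a⁻¹ * x ^ (2 * q) := by
          rw [inv_mul_eq_div, le_div_iff₀ (by linarith)]
          nlinarith
        linarith
    · have : ∑ k ∈ I, f (ξ k ω) = 0 := Finset.sum_eq_zero fun k hk => by
        have : ¬ t < ξ k ω := fun hlt => hω ⟨k, hk, hlt⟩
        simp [f, this]
      rw [this, Set.indicator_of_notMem hω, mul_zero, zero_add]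
      positivity
  have hfi : ∀ k ∈ I, Integrable fun ω => f (ξ k ω) := fun k _ =>
    integrable_of_abs_le (hf.measurable.comp (h.meas k)) 1 fun ω => hf1 _
  have hUi : Integrable fun ω => (a + 1) * U.indicator (fun _ => (1 : ℝ)) ω :=
    ((integrable_const (1 : ℝ)).indicator hUm).const_mul _
  have hSi := (h.integrable_sum hq hf hf1 I P).const_mul a⁻¹
  have hmain := integral_mono (integrable_finsetSum I hfi) (hUi.add hSi) hpt
  have e1 : ∫ ω, ∑ k ∈ I, f (ξ k ω) = μ := by
    rw [integral_finsetSum _ hfi, Finset.sum_congr rfl fun k _ =>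
      (h.integral_eq hf.measurable k).trans hI, Finset.sum_const, nsmul_eq_mul]
  have e2 : ∫ ω, ((fun ω => (a + 1) * U.indicator (fun _ => (1 : ℝ)) ω) +
      fun ω => a⁻¹ * |∑ k ∈ I, (f (ξ k ω) - P)| ^ (2 * q)) ω =
      (a + 1) * (volume : Measure Ω).real U +
        a⁻¹ * ∫ ω, |∑ k ∈ I, (f (ξ k ω) - P)| ^ (2 * q) := by
    rw [integral_add' hUi hSi, integral_const_mul, integral_const_mul,
      integral_indicator_const _ hUm, smul_eq_mul, mul_one]
  rw [e1, e2] at hmain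
  have h3 : a⁻¹ * ∫ ω, |∑ k ∈ I, (f (ξ k ω) - P)| ^ (2 * q) ≤ μ / 2 := by
    rw [inv_mul_eq_div, div_le_iff₀ (by linarith)]
    refine key'.trans ?_
    rw [ha]
    nlinarith
  calc μ ≤ 2 * ((a + 1) * (volume : Measure Ω).real U) := by linarith
    _ = _ := by rw [ha]; ring

/-- One-sided form of the lower bound, for an arbitrary expected number of exceedances. -/
theorem HBound.exceed (h : HBound q K Y ξ) (hq : 1 ≤ q) (t : ℝ) (I : Finset (ℕ × ℕ)) :
    min ((I.card : ℝ) * (volume : Measure Ω).real {ω | t < Y ω}) 1 ≤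
      (8 + 16 * K) * (volume : Measure Ω).real {ω | ∃ k ∈ I, t < ξ k ω} := by
  have hK := h.nonneg
  set P := (volume : Measure Ω).real {ω | t < Y ω} with hP
  have hP0 : 0 ≤ P := measureReal_nonneg
  have hQ0 : 0 ≤ (volume : Measure Ω).real {ω | ∃ k ∈ I, t < ξ k ω} := measureReal_nonneg
  rcases le_or_gt ((I.card : ℝ) * P) 1 with hμ | hμ
  · rw [min_eq_left hμ]
    refine (h.exceed_of_le_one hq t I hμ).trans (mul_le_mul_of_nonneg_right (by linarith) hQ0)
  -- otherwise pass to a subset whose expected number of exceedances lies in `[1/2, 1]`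
  · rw [min_eq_right hμ.le]
    have hPpos : 0 < P := by
      rcases hP0.lt_or_eq with h' | h'
      · exact h'
      · rw [← h', mul_zero] at hμ; linarith
    have hP1 : P ≤ 1 := measureReal_le_one
    have h1P : 1 ≤ P⁻¹ := (one_le_inv₀ hPpos).2 hP1
    have hfl : ⌊P⁻¹⌋₊ ≤ I.card := by
      have : P⁻¹ ≤ I.card := by
        rw [inv_le_iff_one_le_mul₀ hPpos]; linarith
      exact (Nat.floor_mono this).trans (Nat.floor_natCast _).le
    obtain ⟨J, hJI, hJ⟩ := Finset.exists_subset_card_eq hfl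
    have hJle : (J.card : ℝ) * P ≤ 1 := by
      rw [hJ, ← le_div_iff₀ hPpos, one_div]
      exact Nat.floor_le (by positivity)
    have hJge : 1 / 2 ≤ (J.card : ℝ) * P := by
      rw [hJ, ← div_le_iff₀ hPpos]
      have h1 : (1 : ℝ) ≤ ⌊P⁻¹⌋₊ := by exact_mod_cast Nat.le_floor (by simpa using h1P)
      have h2 := Nat.lt_floor_add_one P⁻¹
      rw [div_eq_mul_inv]
      linarith
    have := h.exceed_of_le_one hq t J hJle
    have hsub : (volume : Measure Ω).real {ω | ∃ k ∈ J, t < ξ k ω} ≤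
        (volume : Measure Ω).real {ω | ∃ k ∈ I, t < ξ k ω} :=
      measureReal_mono fun ω ⟨k, hk, hkt⟩ => ⟨k, hJI hk, hkt⟩
    have h4 : (4 + 8 * K) * (volume : Measure Ω).real {ω | ∃ k ∈ J, t < ξ k ω} ≤
        (4 + 8 * K) * (volume : Measure Ω).real {ω | ∃ k ∈ I, t < ξ k ω} := by gcongr
    linarith

/-- The probability that some `|ξ k|` exceeds `t` is comparable from below with the truncated
expected number of exceedances, as for independent variables. -/
theorem HBound.exceed_abs (h : HBound q K Y ξ) (hq : 1 ≤ q) (t : ℝ) (I : Finset (ℕ × ℕ)) :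
    min ((I.card : ℝ) * (volume : Measure Ω).real {ω | t < |Y ω|}) 1 ≤
      (16 + 32 * K) * (volume : Measure Ω).real {ω | ∃ k ∈ I, t < |ξ k ω|} := by
  have hK := h.nonneg
  have h1 := h.exceed hq t I
  have h2 := h.neg.exceed hq t I
  have hQ1 : (volume : Measure Ω).real {ω | ∃ k ∈ I, t < ξ k ω} ≤
      (volume : Measure Ω).real {ω | ∃ k ∈ I, t < |ξ k ω|} :=
    measureReal_mono fun ω ⟨k, hk, hkt⟩ => ⟨k, hk, hkt.trans_le (le_abs_self _)⟩
  have hQ2 : (volume : Measure Ω).real {ω | ∃ k ∈ I, t < -ξ k ω} ≤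
      (volume : Measure Ω).real {ω | ∃ k ∈ I, t < |ξ k ω|} :=
    measureReal_mono fun ω ⟨k, hk, hkt⟩ => ⟨k, hk, hkt.trans_le (neg_le_abs _)⟩
  have hP : (volume : Measure Ω).real {ω | t < |Y ω|} ≤
      (volume : Measure Ω).real {ω | t < Y ω} + (volume : Measure Ω).real {ω | t < -Y ω} := by
    refine (measureReal_mono fun ω (hω : t < |Y ω|) => ?_).trans (measureReal_union_le _ _)
    exact lt_abs.1 hω
  have hmin : ∀ x y : ℝ, 0 ≤ x → 0 ≤ y → min (x + y) 1 ≤ min x 1 + min y 1 := fun x y hx hy => by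
    rcases min_cases x 1 with ⟨a, _⟩ | ⟨a, _⟩ <;> rcases min_cases y 1 with ⟨b, _⟩ | ⟨b, _⟩ <;>
      rw [a, b] <;> rcases min_cases (x + y) 1 with ⟨c, _⟩ | ⟨c, _⟩ <;> rw [c] <;> linarith
  have h3 : min ((I.card : ℝ) * (volume : Measure Ω).real {ω | t < |Y ω|}) 1 ≤
      min ((I.card : ℝ) * (volume : Measure Ω).real {ω | t < Y ω}) 1 +
      min ((I.card : ℝ) * (volume : Measure Ω).real {ω | t < -Y ω}) 1 := by
    refine le_trans (min_le_min_right 1 ?_) (hmin _ _ (by positivity) (by positivity))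
    rw [← mul_add]
    gcongr
  have h4 : (8 + 16 * K) * (volume : Measure Ω).real {ω | ∃ k ∈ I, t < ξ k ω} ≤
    (8 + 16 * K) * (volume : Measure Ω).real {ω | ∃ k ∈ I, t < |ξ k ω|} := by gcongr
  have h5 : (8 + 16 * K) * (volume : Measure Ω).real {ω | ∃ k ∈ I, t < -ξ k ω} ≤
    (8 + 16 * K) * (volume : Measure Ω).real {ω | ∃ k ∈ I, t < |ξ k ω|} := by gcongr
  linarith

end

/-! ### Dyadic condensation of double series -/

/-- Cauchy condensation: the level `a` is attained by `2 ^ a` indices. -/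
theorem tsum_log (F : ℕ → ℝ≥0∞) :
    ∑' m : ℕ, F (Nat.log 2 (m + 1)) = ∑' a : ℕ, 2 ^ a * F a := by
  rw [← (Equiv.sigmaFiberEquiv fun m : ℕ => Nat.log 2 (m + 1)).tsum_eq, ENNReal.tsum_sigma']
  refine tsum_congr fun a => ?_
  have : ∀ m : {m : ℕ // Nat.log 2 (m + 1) = a},
      F (Nat.log 2 ((Equiv.sigmaFiberEquiv fun m : ℕ => Nat.log 2 (m + 1)) ⟨a, m⟩ + 1)) = F a :=
    fun m => congrArg F m.2
  rw [tsum_congr this, ENNReal.tsum_const]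
  congr 1
  have e : {m : ℕ | Nat.log 2 (m + 1) = a} = Finset.Ico (2 ^ a - 1) (2 ^ (a + 1) - 1) := by
    ext m
    have h1 : 0 < 2 ^ a := by positivity
    simp only [Set.mem_ofPred_eq, Finset.coe_Ico, Set.mem_Ico]
    rw [Nat.log_eq_iff (Or.inr ⟨by norm_num, by omega⟩)]
    omega
  have hc : Nat.card {m : ℕ // Nat.log 2 (m + 1) = a} = 2 ^ a := by
    change Nat.card {m : ℕ | Nat.log 2 (m + 1) = a} = 2 ^ a
    rw [e]
    simp only [Nat.card_eq_fintype_card, Fintype.card_coe, Finset.coe_sort_coe, Nat.card_Ico,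
      pow_succ]
    have h1 : 0 < 2 ^ a := by positivity
    omega
  have hfin : Finite {m : ℕ // Nat.log 2 (m + 1) = a} :=
    Nat.finite_of_card_ne_zero (by rw [hc]; positivity)
  rw [ENat.card_eq_coe_natCard, hc]
  simp

theorem tsum_add_index (F : ℕ → ℝ≥0∞) :
    ∑' ac : ℕ × ℕ, F (ac.1 + ac.2) = ∑' r : ℕ, ((r : ℝ≥0∞) + 1) * F r := by
  rw [← Finset.HasAntidiagonal.sigmaAntidiagonalEquivProd.tsum_eq, ENNReal.tsum_sigma']
  refine tsum_congr fun r => ?_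
  have : ∀ x : Finset.HasAntidiagonal.antidiagonal r,
      F ((Finset.HasAntidiagonal.sigmaAntidiagonalEquivProd ⟨r, x⟩).1 +
        (Finset.HasAntidiagonal.sigmaAntidiagonalEquivProd ⟨r, x⟩).2) = F r := fun x =>
    congrArg F (Finset.HasAntidiagonal.mem_antidiagonal.1 x.2)
  rw [tsum_congr this, ENNReal.tsum_const, ENat.card_eq_coe_natCard, Nat.card_eq_fintype_card,
    Fintype.card_coe, Finset.Nat.card_antidiagonal]
  simp

/-- The dyadic level of the rectangle with sides `k.1 + 1` and `k.2 + 1`. -/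
def dyLevel (k : ℕ × ℕ) : ℕ := Nat.log 2 (k.1 + 1) + Nat.log 2 (k.2 + 1)

/-- Cauchy condensation for double series of functions of the dyadic level. -/
theorem summable_dyLevel {F : ℕ → ℝ} (hF : ∀ r, 0 ≤ F r) :
    (Summable fun k : ℕ × ℕ => F (dyLevel k) / 2 ^ dyLevel k) ↔
      Summable fun r : ℕ => ((r : ℝ) + 1) * F r := by
  have hs : ∀ {ι : Type} {f : ι → ℝ}, (∀ i, 0 ≤ f i) →
      (Summable f ↔ ∑' i, ENNReal.ofReal (f i) ≠ ⊤) := fun {ι f} hf => by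
    constructor
    · intro h
      rw [← ENNReal.ofReal_tsum_of_nonneg hf h]
      exact ENNReal.ofReal_ne_top
    · intro h
      refine (ENNReal.summable_toReal h).congr fun i => ENNReal.toReal_ofReal (hf i)
  rw [hs fun k => div_nonneg (hF _) (by positivity),
    hs fun r => mul_nonneg (by positivity) (hF r)]
  have e : ∑' k : ℕ × ℕ, ENNReal.ofReal (F (dyLevel k) / 2 ^ dyLevel k) =
      ∑' r : ℕ, ENNReal.ofReal (((r : ℝ) + 1) * F r) := by
    let H : ℕ → ℝ≥0∞ := fun r => ENNReal.ofReal (F r / 2 ^ r)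
    have h2 : ∀ a c : ℕ, (2 : ℝ≥0∞) ^ a * (2 ^ c * H (a + c)) = ENNReal.ofReal (F (a + c)) := by
      intro a c
      have : (2 : ℝ≥0∞) = ENNReal.ofReal 2 := by simp
      rw [this, ← mul_assoc, ← pow_add, ← ENNReal.ofReal_pow two_pos.le,
        ← ENNReal.ofReal_mul (by positivity)]
      congr 1
      field_simp
    calc ∑' k : ℕ × ℕ, ENNReal.ofReal (F (dyLevel k) / 2 ^ dyLevel k)
        = ∑' (m : ℕ) (n : ℕ), H (Nat.log 2 (m + 1) + Nat.log 2 (n + 1)) :=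
          ENNReal.tsum_prod' (f := fun k : ℕ × ℕ =>
            H (Nat.log 2 (k.1 + 1) + Nat.log 2 (k.2 + 1)))
      _ = ∑' (m : ℕ) (c : ℕ), 2 ^ c * H (Nat.log 2 (m + 1) + c) :=
          tsum_congr fun m => tsum_log fun c => H (Nat.log 2 (m + 1) + c)
      _ = ∑' (a : ℕ), 2 ^ a * ∑' c : ℕ, 2 ^ c * H (a + c) :=
          tsum_log fun a => ∑' c : ℕ, 2 ^ c * H (a + c)
      _ = ∑' (a : ℕ) (c : ℕ), ENNReal.ofReal (F (a + c)) :=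
          tsum_congr fun a => by
            rw [← ENNReal.tsum_mul_left]
            exact tsum_congr fun c => h2 a c
      _ = ∑' ac : ℕ × ℕ, ENNReal.ofReal (F (ac.1 + ac.2)) :=
          (ENNReal.tsum_prod' (f := fun ac : ℕ × ℕ => ENNReal.ofReal (F (ac.1 + ac.2)))).symm
      _ = ∑' r : ℕ, ((r : ℝ≥0∞) + 1) * ENNReal.ofReal (F r) :=
          tsum_add_index fun r => ENNReal.ofReal (F r)
      _ = _ := tsum_congr fun r => by
          rw [ENNReal.ofReal_mul (by positivity), ENNReal.ofReal_add (by positivity) zero_le_one]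
          simp
  rw [e]

/-! ### Partial sums over rectangles -/

theorem sum_Icc_eq_range (f : ℕ → ℕ → ℝ) (u v : ℕ) :
    ∑ i ∈ Icc 1 u, ∑ j ∈ Icc 1 v, f i j = ∑ P ∈ range u ×ˢ range v, f (P.1 + 1) (P.2 + 1) := by
  have h : ∀ (g : ℕ → ℝ) (n : ℕ), ∑ i ∈ Icc 1 n, g i = ∑ i ∈ range n, g (i + 1) := fun g n => by
    rw [Finset.range_eq_Ico, Finset.sum_Ico_add' g 0 n 1]
    rfl
  rw [Finset.sum_product, h]
  exact Finset.sum_congr rfl fun i _ => h _ v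

/-- The empty sums with `u = 0` or `v = 0` are harmless since `b` is nonnegative. -/
theorem lt_maxDS_iff {f : ℕ → ℕ → ℝ} {m n : ℕ} {b : ℝ} (hb : 0 ≤ b) :
    b < maxDS f m n ↔ ∃ u ≤ m, ∃ v ≤ n,
      b < |∑ P ∈ range u ×ˢ range v, f (P.1 + 1) (P.2 + 1)| := by
  lift b to ℝ≥0 using hb
  rw [maxDS, maxNN, NNReal.coe_lt_coe, Finset.lt_sup_iff]
  simp only [Real.lt_toNNReal_iff_coe_lt, sum_Icc_eq_range, Finset.mem_product, Finset.mem_Icc]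
  constructor
  · rintro ⟨⟨u, v⟩, ⟨⟨-, hu⟩, -, hv⟩, h⟩
    exact ⟨u, hu, v, hv, h⟩
  · rintro ⟨u, hu, v, hv, h⟩
    have hne : ∀ u v : ℕ, u = 0 ∨ v = 0 →
        ¬ (b : ℝ) < |∑ P ∈ range u ×ˢ range v, f (P.1 + 1) (P.2 + 1)| := by
      rintro u v (rfl | rfl) <;> simp
    have hu0 : u ≠ 0 := fun h0 => hne u v (Or.inl h0) h
    have hv0 : v ≠ 0 := fun h0 => hne u v (Or.inr h0) h
    exact ⟨(u, v), ⟨⟨by omega, hu⟩, by omega, hv⟩, h⟩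

/-- The event that some partial sum over a rectangle with sides at most `2 ^ A` and `2 ^ C`
exceeds `b` in absolute value. -/
def boxSet {Ω : Type*} (ξ : ℕ × ℕ → Ω → ℝ) (A C : ℕ) (b : ℝ) : Set Ω :=
  {ω | ∃ u ≤ 2 ^ A, ∃ v ≤ 2 ^ C, b < |∑ P ∈ range u ×ˢ range v, ξ P ω|}

/-- A single variable is an alternating sum of four partial sums. -/
theorem exceed_subset_boxSet {Ω : Type*} (ξ : ℕ × ℕ → Ω → ℝ) (A C : ℕ) (b : ℝ) :
    {ω | ∃ k ∈ range (2 ^ A) ×ˢ range (2 ^ C), 4 * b < |ξ k ω|} ⊆ boxSet ξ A C b := by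
  rintro ω ⟨⟨i, j⟩, hk, h⟩
  by_contra hn
  simp only [boxSet, Set.mem_ofPred_eq, not_exists, not_and, not_lt] at hn
  simp only [Finset.mem_product, Finset.mem_range] at hk
  obtain ⟨hi, hj⟩ := hk
  let S : ℕ → ℕ → ℝ := fun u v => ∑ P ∈ range u ×ˢ range v, ξ P ω
  have e : ξ (i, j) ω = S (i + 1) (j + 1) - S i (j + 1) - (S (i + 1) j - S i j) := by
    simp only [S, Finset.sum_product]
    rw [Finset.sum_range_succ, Finset.sum_range_succ _ i, Finset.sum_range_succ _ j]
    ring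
  have h1 := abs_le.1 (hn (i + 1) (by omega) (j + 1) (by omega))
  have h2 := abs_le.1 (hn i (by omega) (j + 1) (by omega))
  have h3 := abs_le.1 (hn (i + 1) (by omega) j (by omega))
  have h4 := abs_le.1 (hn i (by omega) j (by omega))
  have h5 : |ξ (i, j) ω| ≤ 4 * b := by
    rw [e, abs_le]
    simp only [S]
    constructor <;> linarith [h1.1, h1.2, h2.1, h2.2, h3.1, h3.2, h4.1, h4.2]
  linarith

/-! ### Weighted double series and dyadic levels -/

theorem le_area (k : ℕ × ℕ) : 2 ^ dyLevel k ≤ (k.1 + 1) * (k.2 + 1) := by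
  rw [dyLevel, pow_add]
  exact Nat.mul_le_mul (Nat.pow_log_le_self 2 (by omega)) (Nat.pow_log_le_self 2 (by omega))

theorem area_le (k : ℕ × ℕ) : (k.1 + 1) * (k.2 + 1) ≤ 2 ^ (dyLevel k + 2) := by
  have e : dyLevel k + 2 = (Nat.log 2 (k.1 + 1) + 1) + (Nat.log 2 (k.2 + 1) + 1) := by
    rw [dyLevel]; ring
  rw [e, pow_add]
  exact Nat.mul_le_mul (Nat.lt_pow_succ_log_self one_lt_two _).le
    (Nat.lt_pow_succ_log_self one_lt_two _).le

/-- The weight `(mn)^{s-2}` is comparable with its value at the dyadic corner. -/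
theorem weight_bounds (s : ℝ) (k : ℕ × ℕ) :
    (4 : ℝ) ^ (-|s - 2|) * ((2 : ℝ) ^ ((s - 1) * dyLevel k) / 2 ^ dyLevel k) ≤
        (((k.1 + 1) * (k.2 + 1) : ℕ) : ℝ) ^ (s - 2) ∧
      (((k.1 + 1) * (k.2 + 1) : ℕ) : ℝ) ^ (s - 2) ≤
        (4 : ℝ) ^ |s - 2| * ((2 : ℝ) ^ ((s - 1) * dyLevel k) / 2 ^ dyLevel k) := by
  set r := dyLevel k
  have h1 : (2 : ℝ) ^ r ≤ (((k.1 + 1) * (k.2 + 1) : ℕ) : ℝ) := by exact_mod_cast le_area k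
  have h2 : (((k.1 + 1) * (k.2 + 1) : ℕ) : ℝ) ≤ (2 : ℝ) ^ r * 4 := by
    have := area_le k
    rw [pow_add] at this
    exact_mod_cast this
  set x := (((k.1 + 1) * (k.2 + 1) : ℕ) : ℝ)
  have hr : (0 : ℝ) < 2 ^ r := by positivity
  have e : (2 : ℝ) ^ ((s - 1) * r) / 2 ^ r = ((2 : ℝ) ^ r) ^ (s - 2) := by
    rw [← Real.rpow_natCast, ← Real.rpow_sub two_pos, ← Real.rpow_mul two_pos.le]
    congr 1
    ring
  have ex : x = x / 2 ^ r * 2 ^ r := by field_simp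
  have ht1 : 1 ≤ x / 2 ^ r := by rwa [one_le_div hr]
  have ht4 : x / 2 ^ r ≤ 4 := by rwa [div_le_iff₀' hr]
  have hx : x ^ (s - 2) = (x / 2 ^ r) ^ (s - 2) * ((2 : ℝ) ^ r) ^ (s - 2) := by
    rw [← Real.mul_rpow (by positivity) hr.le, ← ex]
  rw [e, hx]
  set t := x / 2 ^ r
  have ht0 : 0 < t := by linarith
  have hup : ∀ w : ℝ, t ^ w ≤ (4 : ℝ) ^ |w| := fun w =>
    (Real.rpow_le_rpow_of_exponent_le ht1 (le_abs_self w)).trans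
      (Real.rpow_le_rpow ht0.le ht4 (abs_nonneg w))
  constructor
  · refine mul_le_mul_of_nonneg_right ?_ (by positivity)
    have := hup (-(s - 2))
    rw [abs_neg, Real.rpow_neg ht0.le] at this
    rw [Real.rpow_neg (by norm_num)]
    exact inv_le_of_inv_le₀ (by positivity) this
  · exact mul_le_mul_of_nonneg_right (hup _) (by positivity)

/-- Convergence of the weighted double series from bounds at high dyadic levels. -/
theorem summable_of_le_level {s : ℝ} {P : ℕ × ℕ → ℝ} (hP0 : ∀ k, 0 ≤ P k) (hP1 : ∀ k, P k ≤ 1)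
    {F : ℕ → ℝ} (hF : ∀ r, 0 ≤ F r) (hs : Summable fun r : ℕ => ((r : ℝ) + 1) * F r) (N : ℕ)
    (h : ∀ k, N ≤ dyLevel k → (2 : ℝ) ^ ((s - 1) * dyLevel k) * P k ≤ F (dyLevel k)) :
    Summable fun k : ℕ × ℕ => (((k.1 + 1) * (k.2 + 1) : ℕ) : ℝ) ^ (s - 2) * P k := by
  let G : ℕ → ℝ := fun r => if N ≤ r then F r else (2 : ℝ) ^ ((s - 1) * r)
  have hG : ∀ r, 0 ≤ G r := fun r => by
    simp only [G]; split_ifs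
    exacts [hF r, by positivity]
  have hGs : Summable fun r : ℕ => ((r : ℝ) + 1) * G r := by
    rw [← summable_nat_add_iff N] at hs ⊢
    refine hs.congr fun r => ?_
    simp [G]
  have hk : ∀ k, (2 : ℝ) ^ ((s - 1) * dyLevel k) * P k ≤ G (dyLevel k) := fun k => by
    simp only [G]
    split_ifs with hN
    · exact h k hN
    · exact mul_le_of_le_one_right (by positivity) (hP1 k)
  refine Summable.of_nonneg_of_le (fun k => mul_nonneg (by positivity) (hP0 k)) (fun k => ?_)
    (((summable_dyLevel hG).2 hGs).mul_left ((4 : ℝ) ^ |s - 2|))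
  refine (mul_le_mul_of_nonneg_right (weight_bounds s k).2 (hP0 k)).trans ?_
  rw [mul_assoc, div_mul_eq_mul_div]
  gcongr
  exact hk k

/-- Converse condensation: lower bounds depending on the dyadic level only are summable with
weight `r + 1`, the number of pairs of exponents with sum `r`. -/
theorem summable_level_of_summable {s : ℝ} {P : ℕ × ℕ → ℝ} (hP0 : ∀ k, 0 ≤ P k)
    (hs : Summable fun k : ℕ × ℕ => (((k.1 + 1) * (k.2 + 1) : ℕ) : ℝ) ^ (s - 2) * P k)
    {F : ℕ → ℝ} (hF : ∀ r, 0 ≤ F r) (N : ℕ)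
    (h : ∀ k, N ≤ dyLevel k → F (dyLevel k) ≤ (2 : ℝ) ^ ((s - 1) * dyLevel k) * P k) :
    Summable fun r : ℕ => ((r : ℝ) + 1) * F r := by
  let G : ℕ → ℝ := fun r => if N ≤ r then F r else 0
  have hG : ∀ r, 0 ≤ G r := fun r => by
    simp only [G]; split_ifs
    exacts [hF r, le_rfl]
  have hGs : Summable fun r : ℕ => ((r : ℝ) + 1) * G r := by
    refine (summable_dyLevel hG).1 (Summable.of_nonneg_of_le
      (fun k => div_nonneg (hG _) (by positivity)) (fun k => ?_) (hs.mul_left ((4 : ℝ) ^ |s - 2|)))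
    have hk : G (dyLevel k) ≤ (2 : ℝ) ^ ((s - 1) * dyLevel k) * P k := by
      simp only [G]
      split_ifs with hN
      · exact h k hN
      · exact mul_nonneg (by positivity) (hP0 k)
    calc G (dyLevel k) / 2 ^ dyLevel k
        ≤ (2 : ℝ) ^ ((s - 1) * dyLevel k) * P k / 2 ^ dyLevel k := by gcongr
      _ = (4 : ℝ) ^ |s - 2| * ((4 : ℝ) ^ (-|s - 2|) *
          ((2 : ℝ) ^ ((s - 1) * dyLevel k) / 2 ^ dyLevel k) * P k) := by
        rw [Real.rpow_neg (by norm_num)]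
        field_simp
      _ ≤ _ := mul_le_mul_of_nonneg_left
          (mul_le_mul_of_nonneg_right (weight_bounds s k).1 (hP0 k)) (by positivity)
  rw [← summable_nat_add_iff N] at hGs ⊢
  refine hGs.congr fun r => ?_
  simp [G]

/-! ### From truncated expected exceedances to tails -/

section

variable {Ω : Type*} [MeasureSpace Ω] [IsProbabilityMeasure (volume : Measure Ω)]
  {q K α p : ℝ} {Y : Ω → ℝ} {ξ : ℕ × ℕ → Ω → ℝ} {τ : ℕ → ℝ}

/-- Neither the truncation at `1` nor the factor `κ` affects the convergence of the tail series. -/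
theorem tail_summable_of_min (hα : 0 < α) (hαp : 1 ≤ α * p) (hτ : IsLev α τ) {κ : ℝ} (hκ : 0 < κ)
    (hs : Summable fun r : ℕ => ((r : ℝ) + 1) * ((2 : ℝ) ^ ((α * p - 1) * r) *
      min ((2 : ℝ) ^ r * (volume : Measure Ω).real {ω | κ * τ r < |Y ω|}) 1)) :
    Summable fun j : ℕ => ((j : ℝ) + 1) * (2 : ℝ) ^ (α * p * j) *
      (volume : Measure Ω).real {ω | τ j < |Y ω|} := by
  have hw : ∀ r : ℕ, 1 ≤ (2 : ℝ) ^ ((α * p - 1) * r) := fun r =>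
    Real.one_le_rpow one_le_two (mul_nonneg (by linarith) (Nat.cast_nonneg r))
  -- the truncation at `1` is eventually inactive, since the terms tend to zero
  have hs1 : Summable fun r : ℕ => ((r : ℝ) + 1) * (2 : ℝ) ^ (α * p * r) *
      (volume : Measure Ω).real {ω | κ * τ r < |Y ω|} := by
    refine (summable_congr_atTop ?_).1 hs
    filter_upwards [hs.tendsto_atTop_zero.eventually_lt_const one_pos] with r hr
    set P := (volume : Measure Ω).real {ω | κ * τ r < |Y ω|} with hP
    have hP0 : 0 ≤ P := measureReal_nonneg
    have hm0 : 0 ≤ min ((2 : ℝ) ^ r * P) 1 := le_min (by positivity) zero_le_one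
    have h1 : min ((2 : ℝ) ^ r * P) 1 < 1 := by
      refine lt_of_le_of_lt ?_ hr
      calc min ((2 : ℝ) ^ r * P) 1 ≤ (2 : ℝ) ^ ((α * p - 1) * r) * min ((2 : ℝ) ^ r * P) 1 :=
            le_mul_of_one_le_left hm0 (hw r)
        _ ≤ _ := le_mul_of_one_le_left (by positivity) (by linarith [Nat.cast_nonneg (α := ℝ) r])
    have h2 : min ((2 : ℝ) ^ r * P) 1 = (2 : ℝ) ^ r * P :=
      min_eq_left ((min_lt_iff.1 h1).resolve_right (lt_irrefl _)).le
    rw [h2]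
    have : (2 : ℝ) ^ (α * p * r) = (2 : ℝ) ^ ((α * p - 1) * r) * 2 ^ r := by
      rw [← Real.rpow_natCast, ← Real.rpow_add two_pos]
      congr 1
      ring
    rw [this]
    ring
  obtain ⟨C, hC, hlow⟩ := hτ.low (α / 2) (by linarith) (by linarith)
  obtain ⟨h, hh⟩ := ((tendsto_two_rpow (by linarith : 0 < α / 2)).eventually_ge_atTop (κ * C)).exists
  have hshift : ∀ r, κ * τ r ≤ τ (r + h) := fun r => by
    have h1 := hlow r h
    have h2 : 0 < (2 : ℝ) ^ (α / 2 * h) := by positivity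
    have hp := hτ.pos (r + h)
    rw [Real.rpow_neg two_pos.le] at h1
    calc κ * τ r ≤ κ * (C * ((2 : ℝ) ^ (α / 2 * h))⁻¹ * τ (r + h)) := by gcongr
      _ = (κ * C) * ((2 : ℝ) ^ (α / 2 * h))⁻¹ * τ (r + h) := by ring
      _ ≤ (2 : ℝ) ^ (α / 2 * h) * ((2 : ℝ) ^ (α / 2 * h))⁻¹ * τ (r + h) := by gcongr
      _ = τ (r + h) := by field_simp
  rw [← summable_nat_add_iff h]
  refine Summable.of_nonneg_of_le (fun r => by positivity) (fun r => ?_)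
    (hs1.mul_left (((h : ℝ) + 1) * (2 : ℝ) ^ (α * p * h)))
  have hle : (volume : Measure Ω).real {ω | τ (r + h) < |Y ω|} ≤
      (volume : Measure Ω).real {ω | κ * τ r < |Y ω|} :=
    measureReal_mono fun ω (hω : τ (r + h) < |Y ω|) => (hshift r).trans_lt hω
  have e : (2 : ℝ) ^ (α * p * ((r + h : ℕ) : ℝ)) =
      (2 : ℝ) ^ (α * p * h) * (2 : ℝ) ^ (α * p * r) := by
    rw [← Real.rpow_add two_pos]
    congr 1
    push_cast
    ring
  have hn : (((r + h : ℕ) : ℝ) + 1) ≤ ((h : ℝ) + 1) * ((r : ℝ) + 1) := by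
    push_cast
    nlinarith [mul_nonneg (Nat.cast_nonneg (α := ℝ) r) (Nat.cast_nonneg (α := ℝ) h)]
  rw [e]
  calc (((r + h : ℕ) : ℝ) + 1) * ((2 : ℝ) ^ (α * p * h) * (2 : ℝ) ^ (α * p * r)) *
        (volume : Measure Ω).real {ω | τ (r + h) < |Y ω|}
      ≤ (((h : ℝ) + 1) * ((r : ℝ) + 1)) * ((2 : ℝ) ^ (α * p * h) * (2 : ℝ) ^ (α * p * r)) *
        (volume : Measure Ω).real {ω | κ * τ r < |Y ω|} := by gcongr
    _ = _ := by ring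

/-- A nonzero mean makes the partial sums over full dyadic rectangles of order `2 ^ (A + C)`,
which is at least of the order of the norming constants because `α ≤ 1`. -/
theorem boxSet_ge_half (hα1 : 1 / 2 < α) (hα2 : α ≤ 1) (hαp : 1 ≤ α * p)
    (hq1 : 1 ≤ q) (hq2 : p < 2 → q = 1) (hq3 : 2 ≤ p → (α * p - 1) / (2 * α - 1) < q)
    (hH : HBound q K Y ξ) (hτ : IsLev α τ) (hYi : Integrable Y)
    (hY2 : 2 ≤ p → Integrable fun ω => Y ω ^ 2)
    (hs : Summable fun j : ℕ => ((j : ℝ) + 1) * (2 : ℝ) ^ (α * p * j) *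
      volume.real {ω | τ j < |Y ω|}) (hm : ∫ ω, Y ω ≠ 0) :
    ∃ (N : ℕ) (δ : ℝ), 0 < δ ∧ ∀ A C : ℕ, N ≤ A + C →
      1 / 2 ≤ (volume : Measure Ω).real (boxSet ξ A C (δ * τ (A + C))) := by
  set m := ∫ ω, Y ω with hmdef
  have hm0 : 0 < |m| := abs_pos.2 hm
  have hτ0 := hτ.pos 0
  set δ := |m| / (16 * τ 0) with hδ
  have hδ0 : 0 < δ := by positivity
  obtain ⟨N0, F, hF, hFs, h⟩ := sum_summable hα1 hα2 hαp hq1 hq2 hq3 hH hτ hYi hY2 hs hδ0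
  have hF0 : ∀ᶠ n in atTop, F n ≤ 1 / 2 := by
    filter_upwards [hFs.tendsto_atTop_zero.eventually_le_const (by norm_num : (0 : ℝ) < 1 / 2)]
      with n hn
    exact (le_mul_of_one_le_left (hF n) (by linarith [Nat.cast_nonneg (α := ℝ) n])).trans hn
  obtain ⟨N1, hN1⟩ := eventually_atTop.1 hF0
  refine ⟨max N0 N1, δ, hδ0, fun A C hAC => ?_⟩
  have hN0 : N0 ≤ (A + 1) + (C + 1) := by have := le_max_left N0 N1; omega
  have hN1' : N1 ≤ (A + 1) + (C + 1) := by have := le_max_right N0 N1; omega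
  have h1 := (h (A + 1) (C + 1) hN0).trans (hN1 _ hN1')
  set b := δ * τ (A + 1 + (C + 1)) with hb
  set Q := (volume : Measure Ω).real (sumSet m ξ (A + 1) (C + 1) b) with hQ
  have hQ0 : 0 ≤ Q := measureReal_nonneg
  have hQ2 : Q ≤ 1 / 2 := by
    refine (le_mul_of_one_le_left hQ0 ?_).trans h1
    exact Real.one_le_rpow one_le_two (mul_nonneg (by linarith) (Nat.cast_nonneg _))
  have hlev : ∀ n : ℕ, τ n ≤ 2 ^ n * τ 0 := fun n => by
    have h2 := hτ.up 0 n
    rw [zero_add] at h2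
    refine h2.trans (mul_le_mul_of_nonneg_right ?_ hτ0.le)
    rw [← Real.rpow_natCast]
    exact Real.rpow_le_rpow_of_exponent_le one_le_two
      (mul_le_of_le_one_left (Nat.cast_nonneg _) hα2)
  have hδτ : δ * τ 0 = |m| / 16 := by rw [hδ]; field_simp
  have hb1 : b ≤ 2 ^ (A + C) * |m| / 4 := by
    calc b ≤ δ * (2 ^ (A + 1 + (C + 1)) * τ 0) := by rw [hb]; gcongr; exact hlev _
      _ = 2 ^ (A + 1 + (C + 1)) * (δ * τ 0) := by ring
      _ = _ := by rw [hδτ]; ring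
  have hb2 : δ * τ (A + C) ≤ 2 ^ (A + C) * |m| / 16 := by
    calc δ * τ (A + C) ≤ δ * (2 ^ (A + C) * τ 0) := by gcongr; exact hlev _
      _ = 2 ^ (A + C) * (δ * τ 0) := by ring
      _ = _ := by rw [hδτ]; ring
  have hcover : (Set.univ : Set Ω) ⊆
      sumSet m ξ (A + 1) (C + 1) b ∪ boxSet ξ A C (δ * τ (A + C)) := by
    intro ω _
    by_cases hω : ω ∈ sumSet m ξ (A + 1) (C + 1) b
    · exact Or.inl hω
    · refine Or.inr ⟨2 ^ A, le_rfl, 2 ^ C, le_rfl, ?_⟩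
      simp only [sumSet, Set.mem_ofPred_eq, not_exists, not_and, not_lt] at hω
      have h3 := hω (2 ^ A) (Nat.pow_lt_pow_succ one_lt_two) (2 ^ C)
        (Nat.pow_lt_pow_succ one_lt_two)
      rw [Finset.sum_sub_distrib, Finset.sum_const, Finset.card_product, Finset.card_range,
        Finset.card_range, nsmul_eq_mul, ← pow_add] at h3
      set S := ∑ P ∈ range (2 ^ A) ×ˢ range (2 ^ C), ξ P ω
      have h4 : |((2 ^ (A + C) : ℕ) : ℝ) * m| = 2 ^ (A + C) * |m| := by
        rw [abs_mul, Nat.abs_cast]; push_cast; rfl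
      have h5 := abs_sub_abs_le_abs_sub (((2 ^ (A + C) : ℕ) : ℝ) * m) S
      rw [abs_sub_comm, h4] at h5
      have h6 : 0 < (2 : ℝ) ^ (A + C) * |m| := by positivity
      linarith
  have h7 := (measureReal_mono (μ := (volume : Measure Ω)) hcover).trans
    (measureReal_union_le _ _)
  rw [probReal_univ] at h7
  linarith

end

/-! ### The two implications -/

section

variable {Ω : Type*} [MeasureSpace Ω] [IsProbabilityMeasure (volume : Measure Ω)]
  {p : ℝ} {L : ℝ → ℝ} {Y : Ω → ℝ}

theorem integrable_rpow_of_moment (hp : 0 ≤ p) (hL1 : ∀ x : ℝ, 0 ≤ x → 1 ≤ L x)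
    (hY : Measurable Y)
    (momInt : Integrable fun ω => |Y ω| ^ p * L |Y ω| ^ p * rlog |Y ω|) {a : ℝ} (ha0 : 0 ≤ a)
    (ha : a ≤ p) : Integrable fun ω => |Y ω| ^ a := by
  have hl2 := Real.log_pos one_lt_two
  refine ((integrable_const (1 : ℝ)).add (momInt.const_mul (Real.log 2)⁻¹)).mono'
    (hY.abs.pow_const a).aestronglyMeasurable (Eventually.of_forall fun ω => ?_)
  set y := |Y ω|
  have hy : 0 ≤ y := abs_nonneg _
  rw [Real.norm_of_nonneg (by positivity)]
  have hrl := log_two_le_rlog y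
  have h1 : y ^ p ≤ (Real.log 2)⁻¹ * (y ^ p * L y ^ p * rlog y) := by
    have hLp : 1 ≤ L y ^ p := Real.one_le_rpow (hL1 y hy) hp
    rw [inv_mul_eq_div, le_div_iff₀ hl2]
    have : y ^ p ≤ y ^ p * L y ^ p := le_mul_of_one_le_right (by positivity) hLp
    gcongr
  have h2 : y ^ a ≤ 1 + y ^ p := by
    have hyp : 0 ≤ y ^ p := by positivity
    rcases le_total y 1 with hy1 | hy1
    · have := Real.rpow_le_one hy hy1 ha0
      linarith
    · have := Real.rpow_le_rpow_of_exponent_le hy1 ha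
      linarith
  exact h2.trans (add_le_add le_rfl h1)

end

/-- Baum–Katz–Hsu–Robbins–Erdős-type theorem for dependent random fields with
regularly varying norming constants. -/
theorem baum_katz_regularly_varying
    {Ω : Type*} [MeasureSpace Ω] [IsProbabilityMeasure (volume : Measure Ω)]
    (p α q : ℝ) (hp : 1 ≤ p) (hα1 : 1 / 2 < α) (hα2 : α ≤ 1) (hαp : 1 ≤ α * p)
    (hq1 : 1 ≤ q) (hq2 : p < 2 → q = 1) (hq3 : 2 ≤ p → (α * p - 1) / (2 * α - 1) < q)
    (X : ℕ → ℕ → Ω → ℝ)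
    (hmeas : ∀ m n : ℕ, 1 ≤ m → 1 ≤ n → Measurable (X m n))
    (hid : ∀ m n : ℕ, 1 ≤ m → 1 ≤ n → IdentDistrib (X m n) (X 1 1))
    (hH : CondH q fun k : PIdx => X k.1.1 k.1.2)
    (L Lt : ℝ → ℝ) (hSV : SlowlyVarying L) (hLmono : Monotone L)
    (hL1 : ∀ x : ℝ, 0 ≤ x → 1 ≤ L x)
    (hconj : DeBruijnConjugate L Lt) :
    (∀ ε : ℝ, 0 < ε →
      Summable fun k : ℕ × ℕ =>
        (((k.1 + 1) * (k.2 + 1) : ℕ) : ℝ) ^ (α * p - 2) *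
          (volume {ω | ε * ((((k.1 + 1) * (k.2 + 1) : ℕ) : ℝ) ^ α *
              Lt ((((k.1 + 1) * (k.2 + 1) : ℕ) : ℝ) ^ α)) <
            maxDS (fun i j => X i j ω) (k.1 + 1) (k.2 + 1)}).toReal) ↔
    ((∫ ω, X 1 1 ω) = 0 ∧
      Integrable fun ω => |X 1 1 ω| ^ p * L |X 1 1 ω| ^ p * rlog |X 1 1 ω|) := by
  have hα0 : 0 < α := by linarith
  have hp0 : 0 ≤ p := by linarith
  obtain ⟨K, hB⟩ := hBound_of_condH hq1 X hmeas hid hH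
  set Y := X 1 1 with hYdef
  set ξ : ℕ × ℕ → Ω → ℝ := fun k => X (k.1 + 1) (k.2 + 1) with hξ
  have hY : Measurable Y := hB.measY
  have hτ := isLev_lev hSV hLmono hL1 hα0
  obtain ⟨c, C, r0, hc, hC, hcmp⟩ := norming_compare hLmono hL1 hα1 hconj
  set τ := lev L α with hτdef
  let b : ℕ → ℝ := fun n => (n : ℝ) ^ α * Lt ((n : ℝ) ^ α)
  have hb0 : ∀ n, 0 ≤ b n := fun n =>
    mul_nonneg (by positivity) (hconj.1.2.1 _ (by positivity)).le
  let E : ℝ → ℕ × ℕ → Set Ω := fun ε k =>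
    {ω | ε * b ((k.1 + 1) * (k.2 + 1)) < maxDS (fun i j => X i j ω) (k.1 + 1) (k.2 + 1)}
  have hE : ∀ {ε : ℝ}, 0 < ε → ∀ (k : ℕ × ℕ) (ω : Ω), ω ∈ E ε k ↔ ∃ u ≤ k.1 + 1, ∃ v ≤ k.2 + 1,
      ε * b ((k.1 + 1) * (k.2 + 1)) < |∑ P ∈ range u ×ˢ range v, ξ P ω| := fun hε k ω =>
    lt_maxDS_iff (mul_nonneg hε.le (hb0 _))
  have hmom : (Integrable fun ω => |Y ω| ^ p * L |Y ω| ^ p * rlog |Y ω|) →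
      Integrable Y ∧ (2 ≤ p → Integrable fun ω => Y ω ^ 2) := fun momInt => by
    refine ⟨?_, fun h2 => ?_⟩
    · have := integrable_rpow_of_moment hp0 hL1 hY momInt zero_le_one hp
      simp only [Real.rpow_one] at this
      exact (integrable_norm_iff hY.aestronglyMeasurable).1 this
    · have := integrable_rpow_of_moment hp0 hL1 hY momInt zero_le_two h2
      simpa only [Real.rpow_two, sq_abs] using this
  constructor
  · intro ha
    -- it suffices to bound the probability of a large partial sum at dyadic corners from below
    have lower : ∀ {ε : ℝ}, 0 < ε → ∀ {F : ℕ → ℝ}, (∀ r, 0 ≤ F r) → ∀ N : ℕ,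
        (∀ A B : ℕ, N ≤ A + B → F (A + B) ≤ (2 : ℝ) ^ ((α * p - 1) * (A + B : ℕ)) *
          (volume : Measure Ω).real (boxSet ξ A B (ε * (C * τ (A + B))))) →
        Summable fun r : ℕ => ((r : ℝ) + 1) * F r := by
      intro ε hε F hF N hN
      refine summable_level_of_summable (fun k => ENNReal.toReal_nonneg) (ha ε hε) hF (max N r0)
        fun k hk => (hN _ _ ((le_max_left _ _).trans hk)).trans ?_
      refine mul_le_mul_of_nonneg_left (measureReal_mono ?_) (by positivity)
      rintro ω ⟨u, hu, v, hv, h⟩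
      refine (hE hε k ω).2 ⟨u, hu.trans (Nat.pow_log_le_self 2 (by omega)),
        v, hv.trans (Nat.pow_log_le_self 2 (by omega)), lt_of_le_of_lt ?_ h⟩
      exact mul_le_mul_of_nonneg_left (hcmp (dyLevel k) _ ((le_max_right _ _).trans hk)
        (le_area k) (area_le k)).2 hε.le
    have hK1 : 0 < 16 + 32 * K := by linarith [hB.nonneg]
    have hmin : Summable fun r : ℕ => ((r : ℝ) + 1) * ((2 : ℝ) ^ ((α * p - 1) * r) *
        min ((2 : ℝ) ^ r * (volume : Measure Ω).real {ω | 4 * C * τ r < |Y ω|}) 1) := by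
      have := lower one_pos (F := fun r => (16 + 32 * K)⁻¹ * ((2 : ℝ) ^ ((α * p - 1) * r) *
        min ((2 : ℝ) ^ r * (volume : Measure Ω).real {ω | 4 * C * τ r < |Y ω|}) 1))
        (fun r => by positivity) 0 fun A B _ => by
          have h1 := hB.exceed_abs hq1 (4 * (1 * (C * τ (A + B))))
            (range (2 ^ A) ×ˢ range (2 ^ B))
          have h2 := measureReal_mono (μ := (volume : Measure Ω))
            (exceed_subset_boxSet ξ A B (1 * (C * τ (A + B))))
          rw [Finset.card_product, Finset.card_range, Finset.card_range, ← pow_add] at h1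
          have e : 4 * (1 * (C * τ (A + B))) = 4 * C * τ (A + B) := by ring
          have h3 := h1.trans (mul_le_mul_of_nonneg_left h2 hK1.le)
          rw [e] at h3
          push_cast at h3
          rw [mul_left_comm]
          refine mul_le_mul_of_nonneg_left ?_ (by positivity)
          rw [inv_mul_le_iff₀ hK1]
          exact h3
      refine (this.mul_left (16 + 32 * K)).congr fun r => ?_
      field_simp
    have hs := tail_summable_of_min hα0 hαp hτ (by positivity : 0 < 4 * C) hmin
    have momInt := moment_of_tail_summable hSV hLmono hL1 hα0 hp0 hτ hY hs
    refine ⟨?_, momInt⟩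
    by_contra hm
    obtain ⟨N, δ, hδ, hN⟩ := boxSet_ge_half hα1 hα2 hαp hq1 hq2 hq3 hB hτ (hmom momInt).1
      (hmom momInt).2 hs hm
    have hsum := lower (div_pos hδ hC) (F := fun _ => 1 / 2) (fun _ => by norm_num) N
      fun A B hAB => by
        have e : δ / C * (C * τ (A + B)) = δ * τ (A + B) := by field_simp
        rw [e]
        refine (hN A B hAB).trans (le_mul_of_one_le_left measureReal_nonneg ?_)
        exact Real.one_le_rpow one_le_two (mul_nonneg (by linarith) (Nat.cast_nonneg _))
    obtain ⟨r, hr⟩ := (hsum.tendsto_atTop_zero.eventually_lt_const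
      (by norm_num : (0 : ℝ) < 1 / 2)).exists
    linarith [Nat.cast_nonneg (α := ℝ) r]
  · rintro ⟨hm, momInt⟩ ε hε
    have hs := tail_summable_of_moment hL1 hα0 hp0 hαp hτ hY momInt
    obtain ⟨N0, F, hF, hFs, h⟩ := sum_summable hα1 hα2 hαp hq1 hq2 hq3 hB hτ (hmom momInt).1
      (hmom momInt).2 hs (mul_pos hε hc)
    have hFs2 : Summable fun r : ℕ => ((r : ℝ) + 1) * F (r + 2) := by
      refine Summable.of_nonneg_of_le (fun r => mul_nonneg (by positivity) (hF _)) (fun r => ?_)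
        ((summable_nat_add_iff 2).2 hFs)
      refine mul_le_mul_of_nonneg_right ?_ (hF _)
      push_cast
      linarith
    refine summable_of_le_level (fun k => ENNReal.toReal_nonneg)
      (fun k => measureReal_le_one (μ := (volume : Measure Ω)) (s := E ε k))
      (fun r => hF (r + 2)) hFs2 (max N0 r0) fun k hk => ?_
    set A := Nat.log 2 (k.1 + 1) with hA
    set B := Nat.log 2 (k.2 + 1) with hBdef
    have hr : dyLevel k + 2 = (A + 1) + (B + 1) := by rw [dyLevel]; ring
    have h1 := h (A + 1) (B + 1) (by rw [← hr]; have := (le_max_left N0 r0).trans hk; omega)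
    rw [hm, ← hr] at h1
    refine le_trans ?_ h1
    refine mul_le_mul ?_ (measureReal_mono (μ := (volume : Measure Ω)) (s₁ := E ε k) ?_)
      ENNReal.toReal_nonneg (by positivity)
    · refine Real.rpow_le_rpow_of_exponent_le one_le_two
        (mul_le_mul_of_nonneg_left ?_ (by linarith))
      push_cast
      linarith
    · intro ω hω
      obtain ⟨u, hu, v, hv, hlt⟩ := (hE hε k ω).1 hω
      refine ⟨u, hu.trans_lt (Nat.lt_pow_succ_log_self one_lt_two _),
        v, hv.trans_lt (Nat.lt_pow_succ_log_self one_lt_two _), ?_⟩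
      simp only [sub_zero]
      refine lt_of_le_of_lt ?_ hlt
      rw [mul_assoc]
      exact mul_le_mul_of_nonneg_left (hcmp (dyLevel k) _ ((le_max_right _ _).trans hk)
        (le_area k) (area_le k)).1 hε.le
end
end

section
/- Let {X_{m,n} : m ≥ 1, n ≥ 1} be a double array of identically distributed random variables satisfying Condition (H_2), and let {b_{m,n} : m ≥ 1, n ≥ 1} be a double array of positive constants. If max_{1≤i≤m, 1≤j≤n} |X_{i,j}| / b_{m,n} → 0 in probability as max(m, n) → ∞, then for every ε > 0 there exist a finite constant C and a positive integer n₀ such that m n · P(|X_{1,1}| > b_{m,n} ε) ≤ C · P( max_{1≤i≤m, 1≤j≤n} |X_{i,j}| > b_{m,n} ε ) whenever max(m, n) ≥ n₀; consequently, m n · P(|X_{1,1}| > b_{m,n} ε) → 0 as max(m, n) → ∞. -/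
/-!
Fix `t = b m n * ε` and let `S` count the indices `(i, j)` with `i ≤ m`, `j ≤ n` for which
`X i j > t`, so that `E S = N p` with `N = m n` and `p = P(X 1 1 > t)`. The indicator of `(t, ∞)` is
nondecreasing, so Condition (H₂), with a constant that may be taken `C ≥ 1`, gives
`E (S - N p)² ≤ 2 C N p`. As `S` vanishes off the event `M = {max |X i j| > t}`, one has
`N p = E[S 1_M] = E[(S - N p) 1_M] + N p P(M)`,
and a weighted arithmetic-geometric mean inequality bounds the first term by `N p / 4 + 2 C P(M)`.
Once `P(M) ≤ 1/2`, which holds for large `max m n`, this yields `N p ≤ 8 C P(M)`. The lower tail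
`X i j < -t` is handled by the same computation with the nondecreasing function
`-1_{(-∞, -t)}`. Summing the two tails gives the bound, and the limit follows from it.
-/

open MeasureTheory ProbabilityTheory Finset Filter
open scoped NNReal ENNReal

noncomputable section

/-- One-sided tail bound: if `±1_s` is nondecreasing and the events `{X l ∈ s}`, each of probability
`p`, all lie in an event `M` of probability at most `1/2`, then Condition (H₂) bounds `|I| p` by a
multiple of `P(M)`. The sign `σ` allows `s` to be an upper or a lower half-line. -/
lemma card_mul_le_of_condHWith {Ω Λ : Type*} [MeasureSpace Ω]
    [IsProbabilityMeasure (volume : Measure Ω)] {C : ℝ} {X : Λ → Ω → ℝ}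
    (hX : CondHWith 1 C X) {I : Finset Λ} (hI : I.Nonempty)
    (hXm : ∀ l ∈ I, Measurable (X l)) {s : Set ℝ} (hs : MeasurableSet s) {σ : ℝ}
    (hσ : σ ^ 2 = 1) (hmono : Monotone fun x => σ * s.indicator (fun _ => (1 : ℝ)) x) {p : ℝ}
    (hp : ∀ l ∈ I, (volume : Measure Ω).real (X l ⁻¹' s) = p) {M : Set Ω} (hMm : MeasurableSet M)
    (hM : ∀ l ∈ I, X l ⁻¹' s ⊆ M) (hπ : (volume : Measure Ω).real M ≤ 1 / 2) :
    (I.card : ℝ) * p ≤ 8 * max C 1 * (volume : Measure Ω).real M := by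
  set K := max C 1 with hK
  have hK1 : 1 ≤ K := le_max_right _ _
  have hK0 : 0 < K := by linarith
  have hp0 : 0 ≤ p := by
    obtain ⟨l, hl⟩ := hI
    rw [← hp l hl]; positivity
  set g : ℝ → ℝ := s.indicator (fun _ => (1 : ℝ)) with hg
  have hg2 : ∀ x, g x ^ 2 = g x := by
    intro x
    by_cases hx : x ∈ s <;> simp [hg, hx]
  have hg01 : ∀ x, ‖g x‖ ≤ 1 := by
    intro x
    by_cases hx : x ∈ s <;> simp [hg, hx]
  have hgm : Measurable g := measurable_const.indicator hs
  have hgi : ∀ l ∈ I, Integrable fun ω => g (X l ω) := fun l hl =>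
    Integrable.of_bound (hgm.comp (hXm l hl)).aestronglyMeasurable 1
      (Eventually.of_forall fun ω => hg01 _)
  have hge : ∀ l ∈ I, ∫ ω, g (X l ω) = p := by
    intro l hl
    rw [← hp l hl, ← integral_indicator_one (hXm l hl hs)]
    rfl
  have hfe : ∀ l ∈ I, ∫ ω, σ * g (X l ω) = σ * p := by
    intro l hl
    rw [integral_const_mul, hge l hl]
  have hf2 : ∀ x, (σ * g x) ^ 2 = g x := by
    intro x
    rw [mul_pow, hσ, one_mul, hg2]
  have hrp : ∀ x : ℝ, |x| ^ (2 * (1 : ℝ)) = x ^ 2 := by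
    intro x
    rw [mul_one, Real.rpow_two, sq_abs]
  set S : Ω → ℝ := fun ω => ∑ l ∈ I, g (X l ω) with hS
  have hSm : Measurable S := Finset.measurable_fun_sum _ fun l hl => hgm.comp (hXm l hl)
  have hSi : Integrable S := integrable_finsetSum _ hgi
  have hSe : ∫ ω, S ω = I.card * p := by
    rw [hS, integral_finsetSum _ hgi, Finset.sum_congr rfl hge, Finset.sum_const, nsmul_eq_mul]
  have hSb : ∀ ω, ‖S ω‖ ≤ I.card := by
    intro ω
    refine (norm_sum_le _ _).trans ((Finset.sum_le_sum fun l _ => hg01 _).trans ?_)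
    simp
  have hci : Integrable fun ω => (S ω - I.card * p) ^ 2 := by
    refine Integrable.of_bound (by fun_prop) ((I.card + I.card * p) ^ 2)
      (Eventually.of_forall fun ω => ?_)
    rw [norm_pow]
    gcongr
    refine (norm_sub_le _ _).trans ?_
    gcongr
    · exact hSb ω
    · rw [Real.norm_of_nonneg (by positivity)]
  have hsum : ∀ ω, |∑ l ∈ I, (σ * g (X l ω) - ∫ ω', σ * g (X l ω'))| ^ (2 * (1 : ℝ))
      = (S ω - I.card * p) ^ 2 := by
    intro ω
    rw [hrp, Finset.sum_sub_distrib, Finset.sum_congr rfl hfe, ← Finset.mul_sum, Finset.sum_const,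
      nsmul_eq_mul]
    linear_combination (S ω - I.card * p) ^ 2 * hσ
  have hvar : ∫ ω, (S ω - I.card * p) ^ 2 ≤ 2 * K * (I.card * p) := by
    have h := hX I hI (fun _ x => σ * g x) (fun _ _ => hmono)
      (fun l hl => (hgi l hl).const_mul σ)
      (fun l hl => by simpa only [hf2] using hgi l hl)
      (fun l hl => by simpa only [hrp, hf2] using hgi l hl)
      (by simpa only [hsum] using hci)
    simp only [hsum] at h
    simp only [hrp, hf2, Real.rpow_one] at h
    rw [Finset.sup'_congr hI rfl hge, Finset.sup'_const] at h
    have : C * (I.card * p + I.card * p) ≤ K * (I.card * p + I.card * p) := by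
      gcongr
      exact le_max_left _ _
    linarith
  -- On `M` use `a ≤ a² / (8 K) + 2 K`; the weight makes the first term integrate to `|I| p / 4`,
  -- which, like `|I| p P(M) ≤ |I| p / 2`, is then absorbed into the left-hand side.
  have hpt : ∀ ω, S ω ≤ (S ω - I.card * p) ^ 2 / (8 * K)
      + (2 * K + I.card * p) * M.indicator (fun _ => (1 : ℝ)) ω := by
    intro ω
    by_cases hω : ω ∈ M
    · have h : (S ω - I.card * p) ≤ (S ω - I.card * p) ^ 2 / (8 * K) + 2 * K := by
        rw [← sub_le_iff_le_add, le_div_iff₀ (by positivity)]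
        nlinarith [sq_nonneg (S ω - I.card * p - 4 * K)]
      simp only [Set.indicator_of_mem hω]
      linarith
    · have h : S ω = 0 := Finset.sum_eq_zero fun l hl =>
        Set.indicator_of_notMem (s := s) (fun hx => hω (hM l hl hx)) _
      rw [Set.indicator_of_notMem hω, mul_zero, add_zero]
      have : 0 ≤ (S ω - I.card * p) ^ 2 / (8 * K) := by positivity
      linarith
  have hMi : Integrable (M.indicator (fun _ => (1 : ℝ))) (volume : Measure Ω) :=
    (integrable_const 1).indicator hMm
  have hMe : ∫ ω, M.indicator (fun _ => (1 : ℝ)) ω = (volume : Measure Ω).real M :=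
    integral_indicator_one hMm
  have hint := integral_mono hSi ((hci.div_const (8 * K)).add (hMi.const_mul (2 * K + I.card * p)))
    hpt
  simp only [Pi.add_apply] at hint
  rw [integral_add (hci.div_const _) (hMi.const_mul _), integral_div, integral_const_mul, hMe, hSe]
    at hint
  have h1 : (∫ ω, (S ω - I.card * p) ^ 2) / (8 * K) ≤ I.card * p / 4 := by
    rw [div_le_iff₀ (by positivity)]
    linarith
  have h2 : (I.card * p) * (volume : Measure Ω).real M ≤ (I.card * p) * (1 / 2) := by gcongr
  linarith

lemma lt_maxNN_iff {M N : ℕ} {g : ℕ → ℕ → ℝ} {t : ℝ} (ht : 0 ≤ t) :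
    t < maxNN M N g ↔ ∃ i ∈ Finset.Icc 1 M, ∃ j ∈ Finset.Icc 1 N, t < g i j := by
  lift t to ℝ≥0 using ht
  rw [maxNN, NNReal.coe_lt_coe, Finset.lt_sup_iff]
  simp only [Real.lt_toNNReal_iff_coe_lt, Prod.exists, Finset.mem_product]
  tauto

/-- Lemma of Borel–Cantelli type: for identically distributed random fields
satisfying Condition (H₂), convergence in probability of the normalized maximum
`max_{i≤m,j≤n}|X_{i,j}|/b_{m,n}` to `0` yields, for every `ε > 0`, the bound
`mn P(|X_{1,1}| > b_{m,n} ε) ≤ C P(max_{i≤m,j≤n}|X_{i,j}| > b_{m,n} ε)` for all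
large `max(m,n)`, and consequently `mn P(|X_{1,1}| > b_{m,n} ε) → 0`. -/
theorem tail_bound_from_max_convergence
    {Ω : Type*} [MeasureSpace Ω] [IsProbabilityMeasure (volume : Measure Ω)]
    (X : ℕ → ℕ → Ω → ℝ)
    (hmeas : ∀ m n : ℕ, 1 ≤ m → 1 ≤ n → Measurable (X m n))
    (hid : ∀ m n : ℕ, 1 ≤ m → 1 ≤ n → IdentDistrib (X m n) (X 1 1))
    (hH : CondH 1 fun k : PIdx => X k.1.1 k.1.2)
    (b : ℕ → ℕ → ℝ) (hb : ∀ m n : ℕ, 1 ≤ m → 1 ≤ n → 0 < b m n)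
    (hconv : ∀ ε : ℝ, 0 < ε → ∀ δ : ℝ, 0 < δ → ∃ N : ℕ, ∀ m n : ℕ,
      1 ≤ m → 1 ≤ n → N ≤ max m n →
        (volume {ω | ε < maxNN m n (fun i j => |X i j ω|) / b m n}).toReal ≤ δ) :
    ∀ ε : ℝ, 0 < ε →
      (∃ C : ℝ, ∃ n₀ : ℕ, ∀ m n : ℕ, 1 ≤ m → 1 ≤ n → n₀ ≤ max m n →
        ((m * n : ℕ) : ℝ) * (volume {ω | b m n * ε < |X 1 1 ω|}).toReal ≤
          C * (volume {ω | b m n * ε < maxNN m n (fun i j => |X i j ω|)}).toReal) ∧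
      (∀ δ : ℝ, 0 < δ → ∃ N : ℕ, ∀ m n : ℕ, 1 ≤ m → 1 ≤ n → N ≤ max m n →
        ((m * n : ℕ) : ℝ) * (volume {ω | b m n * ε < |X 1 1 ω|}).toReal ≤ δ) := by
  intro ε hε
  obtain ⟨C, hC⟩ := hH
  have hev : ∀ m n : ℕ, 1 ≤ m → 1 ≤ n →
      {ω | ε < maxNN m n (fun i j => |X i j ω|) / b m n}
        = {ω | b m n * ε < maxNN m n (fun i j => |X i j ω|)} := by
    intro m n hm hn
    ext ω
    rw [Set.mem_ofPred_eq, Set.mem_ofPred_eq, lt_div_iff₀ (hb m n hm hn), mul_comm]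
  have main : ∃ C : ℝ, ∃ n₀ : ℕ, ∀ m n : ℕ, 1 ≤ m → 1 ≤ n → n₀ ≤ max m n →
      ((m * n : ℕ) : ℝ) * (volume {ω | b m n * ε < |X 1 1 ω|}).toReal ≤
        C * (volume {ω | b m n * ε < maxNN m n (fun i j => |X i j ω|)}).toReal := by
    obtain ⟨n₀, hn₀⟩ := hconv ε hε (1 / 2) (by norm_num)
    refine ⟨16 * max C 1, n₀, fun m n hm hn hmn => ?_⟩
    have hπ := hn₀ m n hm hn hmn
    rw [hev m n hm hn] at hπ
    have ht : 0 < b m n * ε := mul_pos (hb m n hm hn) hε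
    set t := b m n * ε
    set M : Set Ω := {ω | t < maxNN m n (fun i j => |X i j ω|)} with hMdef
    have hM : M = ⋃ i ∈ Finset.Icc 1 m, ⋃ j ∈ Finset.Icc 1 n, {ω | t < |X i j ω|} := by
      ext ω
      simp only [hMdef, Set.mem_ofPred_eq, lt_maxNN_iff ht.le, Set.mem_iUnion, exists_prop]
    have hMm : MeasurableSet M := by
      rw [hM]
      refine Finset.measurableSet_biUnion _ fun i hi => Finset.measurableSet_biUnion _ fun j hj => ?_
      exact measurableSet_lt measurable_const
        (hmeas i j (Finset.mem_Icc.1 hi).1 (Finset.mem_Icc.1 hj).1).abs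
    let I : Finset PIdx :=
      (Finset.Icc 1 m ×ˢ Finset.Icc 1 n).subtype fun k => 1 ≤ k.1 ∧ 1 ≤ k.2
    have hmem : ∀ l : PIdx, l ∈ I ↔ l.1.1 ∈ Finset.Icc 1 m ∧ l.1.2 ∈ Finset.Icc 1 n := by
      intro l
      rw [Finset.mem_subtype, Finset.mem_product]
    have hcard : I.card = m * n := by
      rw [Finset.card_subtype, Finset.filter_true_of_mem, Finset.card_product]
      · simp
      · intro k hk
        rw [Finset.mem_product, Finset.mem_Icc, Finset.mem_Icc] at hk
        exact ⟨hk.1.1, hk.2.1⟩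
    have hI : I.Nonempty := by
      rw [← Finset.card_pos, hcard]
      positivity
    have hXM : ∀ l ∈ I, ∀ ω, t < |X l.1.1 l.1.2 ω| → ω ∈ M := fun l hl ω hω =>
      (lt_maxNN_iff ht.le).2 ⟨_, ((hmem l).1 hl).1, _, ((hmem l).1 hl).2, hω⟩
    have hXm : ∀ l ∈ I, Measurable (X l.1.1 l.1.2) := fun l _ => hmeas _ _ l.2.1 l.2.2
    have hpeq : ∀ s : Set ℝ, MeasurableSet s → ∀ l ∈ I,
        (volume : Measure Ω).real (X l.1.1 l.1.2 ⁻¹' s) = (volume : Measure Ω).real (X 1 1 ⁻¹' s) :=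
      fun s hs l _ => congrArg ENNReal.toReal ((hid _ _ l.2.1 l.2.2).measure_mem_eq hs)
    have hup := card_mul_le_of_condHWith (σ := 1) hC hI hXm (measurableSet_Ioi (a := t))
      (by norm_num)
      (by
        intro x y hxy
        simp only [one_mul, Set.indicator_apply, Set.mem_Ioi]
        split_ifs <;> linarith)
      (hpeq _ measurableSet_Ioi) hMm
      (fun l hl ω hω => hXM l hl ω (lt_of_lt_of_le hω (le_abs_self _))) hπ
    have hdown := card_mul_le_of_condHWith (σ := -1) hC hI hXm (measurableSet_Iio (a := -t))
      (by norm_num)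
      (by
        intro x y hxy
        simp only [Set.indicator_apply, Set.mem_Iio]
        split_ifs <;> linarith)
      (hpeq _ measurableSet_Iio) hMm
      (fun l hl ω hω => hXM l hl ω (lt_abs.2 (Or.inr (lt_neg.1 hω)))) hπ
    have hle : (volume : Measure Ω).real {ω | t < |X 1 1 ω|} ≤
        (volume : Measure Ω).real (X 1 1 ⁻¹' Set.Ioi t)
          + (volume : Measure Ω).real (X 1 1 ⁻¹' Set.Iio (-t)) := by
      refine (measureReal_mono fun ω hω => ?_).trans (measureReal_union_le _ _)
      rcases lt_abs.1 (show t < |X 1 1 ω| from hω) with h | h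
      · exact Or.inl h
      · exact Or.inr (lt_neg.1 h)
    rw [hcard] at hup hdown
    have h := mul_le_mul_of_nonneg_left hle (Nat.cast_nonneg (α := ℝ) (m * n))
    simp only [Measure.real] at h hup hdown
    linarith
  refine ⟨main, fun δ hδ => ?_⟩
  obtain ⟨C', n₀, h⟩ := main
  obtain ⟨N, hN⟩ := hconv ε hε (δ / (|C'| + 1)) (by positivity)
  refine ⟨max n₀ N, fun m n hm hn hmn => ?_⟩
  have h1 := h m n hm hn ((le_max_left _ _).trans hmn)
  have h2 := hN m n hm hn ((le_max_right _ _).trans hmn)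
  rw [hev m n hm hn, le_div_iff₀ (by positivity)] at h2
  refine h1.trans (le_trans ?_ h2)
  rw [mul_comm]
  gcongr
  linarith [le_abs_self C']
end
end
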